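/- Let K be a fixed quadratic number field with ring of integers 𝒪, and let f_K(n) = #{nonzero ideals 𝔞 ⊆ 𝒪 : N𝔞 = n}, where N𝔞 = #(𝒪/𝔞) is the ideal norm. Then, as x → ∞, max_{n ≤ x} log f_K(f_K(n)) = (√(log x)/log₂ x)·( c/√2 + O(log₃ x / log₂ x) ), where c = (8·∑_{l=1}^∞ (log(1 + 1/l))²)^{1/2} and the implied constant may depend on K. -/

import Mathlib

open Filter

/-- `fK K n` is the number of nonzero ideals of the ring of integers of `K` of absolute
norm `n`. -/
noncomputable def fK (K : Type*) [Field K] [NumberField K] (n : ℕ) : ℕ :=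
  Nat.card {I : Ideal (NumberField.RingOfIntegers K) // Ideal.absNorm I = n ∧ I ≠ ⊥}

/-- The constant `c = (8·∑_{l=1}^∞ (log(1 + 1/l))²)^{1/2}`. -/
noncomputable def cBEFS : ℝ :=
  Real.sqrt (8 * ∑' l : ℕ, (Real.log (1 + 1 / ((l : ℝ) + 1))) ^ 2)

section alg
variable {K : Type*} [Field K] [NumberField K]
local notation "OK" => NumberField.RingOfIntegers K

lemma fK_one : fK K 1 = 1 := by
  unfold fK
  rw [Nat.card_eq_one_iff_unique]
  refine ⟨⟨fun a b => ?_⟩, ⟨⟨⊤, by simp⟩⟩⟩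
  have ha := Ideal.absNorm_eq_one_iff.1 a.2.1
  have hb := Ideal.absNorm_eq_one_iff.1 b.2.1
  exact Subtype.ext (ha.trans hb.symm)

lemma fK_sup_top {a b : ℕ} (h : a.Coprime b) {I J : Ideal OK} (hI : (a : OK) ∈ I)
    (hJ : (b : OK) ∈ J) : I ⊔ J = ⊤ := by
  rw [Ideal.eq_top_iff_one]
  obtain ⟨u, v, huv⟩ := Nat.isCoprime_iff_coprime.2 h
  have : (1 : OK) = (u : OK) * a + (v : OK) * b := by exact_mod_cast huv.symm
  rw [this]
  exact Ideal.add_mem _ (Ideal.mul_mem_left _ _ (Ideal.mem_sup_left hI))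
    (Ideal.mul_mem_left _ _ (Ideal.mem_sup_right hJ))

lemma fK_split {a b : ℕ} (h : a.Coprime b) {I : Ideal OK} (hI : Ideal.absNorm I = a * b) :
    (I ⊔ Ideal.span {(a : OK)}) * (I ⊔ Ideal.span {(b : OK)}) = I := by
  have htop : Ideal.span {(a : OK)} ⊔ Ideal.span {(b : OK)} = ⊤ :=
    fK_sup_top h (Ideal.mem_span_singleton_self _) (Ideal.mem_span_singleton_self _)
  have hab : Ideal.span {(a : OK)} * Ideal.span {(b : OK)} ≤ I := by
    rw [Ideal.span_singleton_mul_span_singleton, Ideal.span_singleton_le_iff_mem]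
    have := Ideal.absNorm_mem I
    rw [hI] at this
    exact_mod_cast this
  apply le_antisymm
  · rw [Ideal.sup_mul, Ideal.mul_sup]
    refine sup_le (sup_le Ideal.mul_le_left Ideal.mul_le_left) ?_
    rw [Ideal.mul_sup]
    exact sup_le Ideal.mul_le_right hab
  · calc I = I * (Ideal.span {(a : OK)} ⊔ Ideal.span {(b : OK)}) := by
          rw [htop, Ideal.mul_top]
      _ ≤ _ := by
        rw [Ideal.mul_sup]
        refine sup_le ?_ ?_
        · rw [mul_comm]
          exact Ideal.mul_mono le_sup_right le_sup_left
        · exact Ideal.mul_mono le_sup_left le_sup_right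

lemma fK_norm_sup {a b : ℕ} (h : a.Coprime b) {I : Ideal OK}
    (hI : Ideal.absNorm I = a * b) :
    Ideal.absNorm (I ⊔ Ideal.span {(a : OK)}) = a ∧
    Ideal.absNorm (I ⊔ Ideal.span {(b : OK)}) = b := by
  have key : ∀ c : ℕ, ∃ k, Ideal.absNorm (I ⊔ Ideal.span {(c : OK)}) ∣ c ^ k := by
    intro c
    refine ⟨Module.finrank ℤ OK, ?_⟩
    have := Ideal.absNorm_dvd_absNorm_of_le (le_sup_right : Ideal.span {(c : OK)} ≤ I ⊔ Ideal.span {(c : OK)})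
    rw [Ideal.absNorm_span_singleton] at this
    have h2 : Algebra.norm ℤ (c : OK) = (c : ℤ) ^ Module.finrank ℤ OK := by
      have := Algebra.norm_algebraMap_of_basis (Module.Free.chooseBasis ℤ OK) (c : ℤ)
      rw [Module.finrank_eq_card_chooseBasisIndex]
      simpa using this
    rw [h2] at this
    simpa [Int.natAbs_pow] using this
  have hprod : Ideal.absNorm (I ⊔ Ideal.span {(a : OK)}) *
      Ideal.absNorm (I ⊔ Ideal.span {(b : OK)}) = a * b := by
    rw [← map_mul, fK_split h hI, hI]
  obtain ⟨k, hk⟩ := key a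
  obtain ⟨l, hl⟩ := key b
  set x := Ideal.absNorm (I ⊔ Ideal.span {(a : OK)})
  set y := Ideal.absNorm (I ⊔ Ideal.span {(b : OK)})
  have hxb : x.Coprime b := Nat.Coprime.coprime_dvd_left hk (Nat.Coprime.pow_left k h)
  have hya : y.Coprime a := Nat.Coprime.coprime_dvd_left hl (Nat.Coprime.pow_left l h.symm)
  have hxa : x ∣ a := hxb.dvd_of_dvd_mul_right (hprod ▸ Dvd.intro _ rfl)
  have hyb : y ∣ b := hya.dvd_of_dvd_mul_left (hprod ▸ Dvd.intro_left _ rfl)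
  have h1 : a ∣ x := (hya.symm).dvd_of_dvd_mul_right (hprod.symm ▸ Dvd.intro _ rfl)
  have h2 : b ∣ y := (hxb.symm).dvd_of_dvd_mul_left (hprod.symm ▸ Dvd.intro_left _ rfl)
  exact ⟨Nat.dvd_antisymm hxa h1, Nat.dvd_antisymm hyb h2⟩

lemma fK_prod_sup {a b : ℕ} (h : a.Coprime b) {I J : Ideal OK}
    (hI : Ideal.absNorm I = a) (hJ : Ideal.absNorm J = b) :
    I * J ⊔ Ideal.span {(a : OK)} = I := by
  have haI : Ideal.span {(a : OK)} ≤ I := hI ▸ Ideal.span_singleton_absNorm_le I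
  have hbJ : (b : OK) ∈ J := hJ ▸ Ideal.absNorm_mem J
  apply le_antisymm
  · exact sup_le Ideal.mul_le_left haI
  · calc I = I * (Ideal.span {(a : OK)} ⊔ J) := by
          rw [fK_sup_top h (Ideal.mem_span_singleton_self _) hbJ, Ideal.mul_top]
      _ ≤ _ := by
        rw [Ideal.mul_sup]
        exact sup_le (le_sup_of_le_right Ideal.mul_le_right) le_sup_left

lemma fK_mul {a b : ℕ} (ha : a ≠ 0) (hb : b ≠ 0) (h : a.Coprime b) :
    fK K (a * b) = fK K a * fK K b := by
  unfold fK
  rw [← Nat.card_prod]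
  symm
  apply Nat.card_congr
  refine ⟨fun x => ⟨x.1.1 * x.2.1, ?_, ?_⟩, fun I => (⟨I.1 ⊔ Ideal.span {(a : OK)}, ?_, ?_⟩,
    ⟨I.1 ⊔ Ideal.span {(b : OK)}, ?_, ?_⟩), ?_, ?_⟩
  · rw [map_mul, x.1.2.1, x.2.2.1]
  · exact mul_ne_zero x.1.2.2 x.2.2.2
  · exact (fK_norm_sup h I.2.1).1
  · intro h0; have := (fK_norm_sup h I.2.1).1; rw [h0, Ideal.absNorm_bot] at this; exact ha this.symm
  · exact (fK_norm_sup h I.2.1).2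
  · intro h0; have := (fK_norm_sup h I.2.1).2; rw [h0, Ideal.absNorm_bot] at this; exact hb this.symm
  · rintro ⟨⟨I, hI, hI'⟩, ⟨J, hJ, hJ'⟩⟩
    simp only [Prod.mk.injEq, Subtype.mk.injEq]
    exact ⟨fK_prod_sup h hI hJ, by rw [mul_comm]; exact fK_prod_sup h.symm hJ hI⟩
  · rintro ⟨I, hI, hI'⟩
    simp only [Subtype.mk.injEq]
    exact fK_split h hI

end alg

section alg
variable {K : Type*} [Field K] [NumberField K]
local notation "OK" => NumberField.RingOfIntegers K

lemma norm_span_p (hK : Module.finrank ℚ K = 2) (p : ℕ) :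
    Ideal.absNorm (Ideal.span {(p : OK)}) = p ^ 2 := by
  rw [Ideal.absNorm_span_singleton]
  have h2 : Algebra.norm ℤ (p : OK) = (p : ℤ) ^ 2 := by
    have := Algebra.norm_algebraMap_of_basis (Module.Free.chooseBasis ℤ OK) (p : ℤ)
    rw [← Module.finrank_eq_card_chooseBasisIndex, NumberField.RingOfIntegers.rank, hK] at this
    simpa using this
  rw [h2]; simp [Int.natAbs_pow]

lemma exists_prime_factor {p : ℕ} (hp : p.Prime) {I : Ideal OK} {k : ℕ}
    (hI : Ideal.absNorm I = p ^ (k + 1)) :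
    ∃ P J : Ideal OK, P.IsPrime ∧ (p : OK) ∈ P ∧ I = P * J ∧ ∃ j ≤ k, Ideal.absNorm J = p ^ j := by
  have hne : I ≠ ⊤ := by
    intro h; rw [h, Ideal.absNorm_top] at hI
    exact absurd hI.symm (Nat.one_lt_pow (by omega) hp.one_lt).ne'
  obtain ⟨P, hP, hIP⟩ := Ideal.exists_le_maximal I hne
  obtain ⟨J, hJ⟩ := Ideal.dvd_iff_le.2 hIP
  have hpP : (p : OK) ∈ P := by
    have h1 := hIP (Ideal.absNorm_mem I)
    rw [hI] at h1
    push_cast at h1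
    exact hP.isPrime.mem_of_pow_mem _ h1
  refine ⟨P, J, hP.isPrime, hpP, hJ, ?_⟩
  have hN : Ideal.absNorm P * Ideal.absNorm J = p ^ (k + 1) := by rw [← map_mul, ← hJ, hI]
  obtain ⟨j, hj, hj'⟩ := (Nat.dvd_prime_pow hp).1 (Dvd.intro_left _ hN)
  refine ⟨j, ?_, hj'⟩
  by_contra hlt
  have : j = k + 1 := by omega
  subst this
  rw [hj'] at hN
  have : Ideal.absNorm P = 1 := by
    have hpos : 0 < p ^ (k + 1) := pow_pos hp.pos _
    nlinarith
  exact hP.ne_top (Ideal.absNorm_eq_one_iff.1 this)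

lemma two_primes (hK : Module.finrank ℚ K = 2) {p : ℕ} (hp : p.Prime) {P Q : Ideal OK}
    (hP : P.IsPrime) (hQ : Q.IsPrime) (hpP : (p : OK) ∈ P) (hpQ : (p : OK) ∈ Q) (hne : P ≠ Q) :
    Ideal.absNorm P = p ∧ Ideal.absNorm Q = p ∧ Ideal.span {(p : OK)} = P * Q := by
  have hp0 : (p : OK) ≠ 0 := by exact_mod_cast hp.ne_zero
  have hmax : ∀ {R : Ideal OK}, R.IsPrime → (p : OK) ∈ R → R.IsMaximal := by
    intro R hR hpR
    exact hR.isMaximal (fun h => hp0 (by rw [h] at hpR; simpa using hpR))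
  have hPm := hmax hP hpP
  have hQm := hmax hQ hpQ
  have hle : Ideal.span {(p : OK)} ≤ P * Q := by
    have hc : IsCoprime P Q := by
      rw [Ideal.isCoprime_iff_sup_eq]; exact hPm.coprime_of_ne hQm hne
    rw [Ideal.mul_eq_inf_of_isCoprime hc]
    rw [Ideal.span_singleton_le_iff_mem]; exact ⟨hpP, hpQ⟩
  have hdvd := Ideal.absNorm_dvd_absNorm_of_le hle
  rw [norm_span_p hK, map_mul] at hdvd
  have hP1 : Ideal.absNorm P ≠ 1 := fun h => hPm.ne_top (Ideal.absNorm_eq_one_iff.1 h)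
  have hQ1 : Ideal.absNorm Q ≠ 1 := fun h => hQm.ne_top (Ideal.absNorm_eq_one_iff.1 h)
  obtain ⟨a, ha, ha'⟩ := (Nat.dvd_prime_pow hp).1 ((Dvd.intro _ rfl).trans hdvd)
  obtain ⟨b, hb, hb'⟩ := (Nat.dvd_prime_pow hp).1 ((Dvd.intro_left _ rfl).trans hdvd)
  rw [ha', hb', ← pow_add] at hdvd
  have hab := (Nat.pow_dvd_pow_iff_le_right hp.one_lt).1 hdvd
  have ha0 : a ≠ 0 := by rintro rfl; exact hP1 (by simpa using ha')
  have hb0 : b ≠ 0 := by rintro rfl; exact hQ1 (by simpa using hb')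
  have ha1 : a = 1 := by omega
  have hb1 : b = 1 := by omega
  subst ha1 hb1
  refine ⟨by simpa using ha', by simpa using hb', ?_⟩
  obtain ⟨J, hJ⟩ := Ideal.dvd_iff_le.2 hle
  have := congrArg Ideal.absNorm hJ
  rw [norm_span_p hK, map_mul, map_mul, ha', hb'] at this
  have hJ1 : Ideal.absNorm J = 1 := by
    have hpos : 0 < p ^ 2 := pow_pos hp.pos _
    nlinarith
  rw [Ideal.absNorm_eq_one_iff] at hJ1
  rw [hJ, hJ1, Ideal.mul_top]

/-- the prime `p` splits -/
def Spl (K : Type*) [Field K] [NumberField K] (p : ℕ) : Prop :=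
  ∃ P Q : Ideal (NumberField.RingOfIntegers K), P ≠ Q ∧ Ideal.absNorm P = p ∧ Ideal.absNorm Q = p

lemma nonsplit_pow (hK : Module.finrank ℚ K = 2) {p : ℕ} (hp : p.Prime) (h : ¬ Spl K p) :
    ∃ P : Ideal OK, P.IsPrime ∧ (p : OK) ∈ P ∧
      ∀ k, ∀ I : Ideal OK, Ideal.absNorm I = p ^ k → ∃ j, I = P ^ j := by
  have h2 := norm_span_p hK p
  obtain ⟨P, _, hP, hpP, _, _⟩ := exists_prime_factor (k := 1) hp h2
  refine ⟨P, hP, hpP, ?_⟩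
  have huniq : ∀ Q : Ideal OK, Q.IsPrime → (p : OK) ∈ Q → Q = P := by
    intro Q hQ hpQ
    by_contra hne
    obtain ⟨h1, h2, _⟩ := two_primes hK hp hQ hP hpQ hpP hne
    exact h ⟨Q, P, hne, h1, h2⟩
  intro k
  induction k using Nat.strong_induction_on with
  | _ k ih =>
    intro I hI
    rcases k with _ | k
    · refine ⟨0, ?_⟩
      rw [pow_zero] at hI
      rw [Ideal.absNorm_eq_one_iff.1 hI]; simp
    · obtain ⟨Q, J, hQ, hpQ, hIJ, j, hjk, hj⟩ := exists_prime_factor hp hI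
      obtain ⟨i, hi⟩ := ih j (by omega) J hj
      refine ⟨i + 1, ?_⟩
      rw [hIJ, huniq Q hQ hpQ, hi, pow_succ']

lemma fK_nonsplit (hK : Module.finrank ℚ K = 2) {p : ℕ} (hp : p.Prime) (h : ¬ Spl K p) (k : ℕ) :
    fK K (p ^ k) ≤ 1 := by
  obtain ⟨P, hP, hpP, hall⟩ := nonsplit_pow hK hp h
  unfold fK
  have hN : 1 < Ideal.absNorm P := by
    have h1 : Ideal.absNorm P ≠ 1 := fun h => hP.ne_top (Ideal.absNorm_eq_one_iff.1 h)
    have h0 : Ideal.absNorm P ≠ 0 := by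
      rw [Ne, Ideal.absNorm_eq_zero_iff]
      rintro rfl
      exact hp.ne_zero (by exact_mod_cast (by simpa using hpP : (p : OK) = 0))
    omega
  have : Subsingleton {I : Ideal OK // Ideal.absNorm I = p ^ k ∧ I ≠ ⊥} := by
    constructor
    rintro ⟨I, hI, _⟩ ⟨J, hJ, _⟩
    obtain ⟨i, rfl⟩ := hall k I hI
    obtain ⟨j, rfl⟩ := hall k J hJ
    have : Ideal.absNorm P ^ i = Ideal.absNorm P ^ j := by rw [← map_pow, ← map_pow, hI, hJ]
    have := Nat.pow_right_injective hN this
    subst this; rfl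
  exact Finite.card_le_one_iff_subsingleton.2 this

lemma fK_split_pow (hK : Module.finrank ℚ K = 2) {p : ℕ} (hp : p.Prime) (h : Spl K p) (k : ℕ) :
    fK K (p ^ k) = k + 1 := by
  obtain ⟨P, Q, hne, hNP, hNQ⟩ := h
  have hprime : ∀ {R : Ideal OK}, Ideal.absNorm R = p → R.IsPrime ∧ (p : OK) ∈ R := fun {R} hR =>
    ⟨Ideal.isPrime_of_irreducible_absNorm (hR ▸ hp.prime.irreducible), hR ▸ Ideal.absNorm_mem R⟩
  obtain ⟨hP, hpP⟩ := hprime hNP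
  obtain ⟨hQ, hpQ⟩ := hprime hNQ
  obtain ⟨-, -, hPQ⟩ := two_primes hK hp hP hQ hpP hpQ hne
  have hp0 : (p : OK) ≠ 0 := by exact_mod_cast hp.ne_zero
  have hmax : ∀ {R : Ideal OK}, R.IsPrime → (p : OK) ∈ R → R.IsMaximal := by
    intro R hR hpR
    exact hR.isMaximal (fun h => hp0 (by rw [h] at hpR; simpa using hpR))
  have huniq : ∀ R : Ideal OK, R.IsPrime → (p : OK) ∈ R → R = P ∨ R = Q := by
    intro R hR hpR
    have : P * Q ≤ R := by rw [← hPQ, Ideal.span_singleton_le_iff_mem]; exact hpR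
    rcases hR.mul_le.1 this with h | h
    · left; exact ((hmax hP hpP).eq_of_le hR.ne_top h).symm
    · right; exact ((hmax hQ hpQ).eq_of_le hR.ne_top h).symm
  have hall : ∀ k, ∀ I : Ideal OK, Ideal.absNorm I = p ^ k → ∃ i j, i + j = k ∧ I = P ^ i * Q ^ j := by
    intro k
    induction k with
    | zero =>
      intro I hI
      refine ⟨0, 0, rfl, ?_⟩
      rw [pow_zero] at hI
      rw [Ideal.absNorm_eq_one_iff.1 hI]; simp
    | succ k ih =>
      intro I hI
      obtain ⟨R, J, hR, hpR, hIJ, j, hjk, hj⟩ := exists_prime_factor hp hI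
      have hNR : Ideal.absNorm R = p := by rcases huniq R hR hpR with rfl | rfl <;> assumption
      have : j = k := by
        rw [hIJ, map_mul, hNR, hj, ← pow_succ'] at hI
        have := Nat.pow_right_injective hp.two_le hI
        omega
      subst this
      obtain ⟨a, b, hab, hJ⟩ := ih J hj
      rcases huniq R hR hpR with rfl | rfl
      · exact ⟨a + 1, b, by omega, by rw [hIJ, hJ]; ring⟩
      · exact ⟨a, b + 1, by omega, by rw [hIJ, hJ]; ring⟩
  have hP0 : P ≠ 0 := by rintro rfl; exact hp0 (by simpa using hpP)
  have hQ0 : Q ≠ 0 := by rintro rfl; exact hp0 (by simpa using hpQ)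
  have hinj : ∀ i j, i < j → j ≤ k → P ^ i * Q ^ (k - i) ≠ P ^ j * Q ^ (k - j) := by
    intro i j hij hjk heq
    have h1 : P ^ j = P ^ i * P ^ (j - i) := by rw [← pow_add]; congr 1; omega
    rw [h1, mul_assoc] at heq
    have h2 := mul_left_cancel₀ (pow_ne_zero _ hP0) heq
    have h3 : Q ^ (k - i) ≤ P := by
      rw [h2]
      exact Ideal.mul_le_left.trans (Ideal.pow_le_self (by omega))
    have h4 : Q ≤ P := (hP.pow_le_iff (by omega)).1 h3
    exact hne ((hmax hQ hpQ).eq_of_le hP.ne_top h4).symm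
  unfold fK
  have : Nat.card (Fin (k + 1)) = k + 1 := by simp
  rw [← this]
  symm
  apply Nat.card_congr
  refine Equiv.ofBijective (fun i : Fin (k + 1) => ⟨P ^ (i : ℕ) * Q ^ (k - i), ?_, ?_⟩) ⟨?_, ?_⟩
  · rw [map_mul, map_pow, map_pow, hNP, hNQ, ← pow_add]; congr 1; omega
  · exact mul_ne_zero (pow_ne_zero _ hP0) (pow_ne_zero _ hQ0)
  · intro i j hij
    simp only [Subtype.mk.injEq] at hij
    rcases lt_trichotomy (i : ℕ) j with h | h | h
    · exact absurd hij (hinj _ _ h (by omega))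
    · exact Fin.ext h
    · exact absurd hij.symm (hinj _ _ h (by omega))
  · rintro ⟨I, hI, _⟩
    obtain ⟨i, j, hij, rfl⟩ := hall k I hI
    refine ⟨⟨i, by omega⟩, ?_⟩
    simp only [Subtype.mk.injEq]
    congr 2; omega

end alg

section alg
variable {K : Type*} [Field K] [NumberField K]
local notation "OK" => NumberField.RingOfIntegers K

lemma exists_sqrt (hK : Module.finrank ℚ K = 2) :
    ∃ (α : OK) (d : ℤ), α ^ 2 = (d : OK) ∧ ∀ r : ℚ, (algebraMap ℚ K r) ≠ (α : K) := by
  have : ∃ β : K, β ∉ (⊥ : Subalgebra ℚ K) := by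
    by_contra! h
    have h1 : (⊥ : Subalgebra ℚ K) = ⊤ := by
      rw [eq_top_iff]; intro x _; exact h x
    have h2 := Subalgebra.bot_eq_top_iff_finrank_eq_one.1 h1
    omega
  obtain ⟨β, hβ⟩ := this
  have hdep : ¬ LinearIndependent ℚ ![(1 : K), β, β ^ 2] := by
    intro h
    have := h.fintype_card_le_finrank
    simp [hK] at this
  rw [Fintype.not_linearIndependent_iff] at hdep
  obtain ⟨g, hg, hg0⟩ := hdep
  rw [Fin.sum_univ_three] at hg
  replace hg : (algebraMap ℚ K (g 0)) * 1 + algebraMap ℚ K (g 1) * β + algebraMap ℚ K (g 2) * β ^ 2 = 0 := by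
    simpa only [Algebra.smul_def] using! hg
  have h2 : g 2 ≠ 0 := by
    intro h2
    rw [h2] at hg
    simp at hg
    by_cases h1 : g 1 = 0
    · rw [h1] at hg
      simp at hg
      obtain ⟨i, hi⟩ := hg0
      fin_cases i <;> simp_all
    · apply hβ
      rw [Algebra.mem_bot]
      refine ⟨- g 0 / g 1, ?_⟩
      have h1' : (g 1 : K) ≠ 0 := by exact_mod_cast h1
      simp
      field_simp
      linear_combination -hg
  set a := g 2
  set b := g 1
  set c := g 0
  -- γ = 2aβ + b, γ² = b² - 4ac
  set r : ℚ := b ^ 2 - 4 * a * c with hr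
  set γ : K := 2 * (a : K) * β + b with hγ
  have hγ2 : γ ^ 2 = (r : K) := by
    simp only [eq_ratCast] at hg
    rw [hγ, hr]; push_cast
    linear_combination 4 * (a : K) * hg
  have hγQ : ∀ q : ℚ, (q : K) ≠ γ := by
    intro q hq
    apply hβ
    rw [Algebra.mem_bot]
    refine ⟨(q - b) / (2 * a), ?_⟩
    have h2' : (a : K) ≠ 0 := by exact_mod_cast h2
    simp
    rw [hq, hγ]
    field_simp
    ring
  have hden : (r.den : K) ≠ 0 := by exact_mod_cast r.den_nz
  have hα2 : ((r.den : K) * γ) ^ 2 = ((r.den * r.num : ℤ) : K) := by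
    rw [mul_pow, hγ2]
    have : (r : K) = r.num / r.den := by exact_mod_cast (congrArg (Rat.cast : ℚ → K) (Rat.num_div_den r)).symm
    rw [this]; push_cast; field_simp
  have hint : IsIntegral ℤ ((r.den : K) * γ) := by
    apply IsIntegral.of_pow (n := 2) (by norm_num)
    rw [hα2]
    exact isIntegral_algebraMap (R := ℤ) (A := K) (x := r.den * r.num)
  refine ⟨⟨(r.den : K) * γ, hint⟩, r.den * r.num, ?_, ?_⟩
  · apply NumberField.RingOfIntegers.ext
    simpa using! hα2
  · intro q hq
    apply hγQ (q / r.den)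
    push_cast
    rw [div_eq_iff hden, mul_comm]
    simpa using! hq

lemma trace_sqrt {α : OK} {d : ℤ} (h : α ^ 2 = (d : OK))
    (hα : ∀ r : ℚ, (algebraMap ℚ K r) ≠ (α : K)) : Algebra.trace ℚ K (α : K) = 0 := by
  have h2 : (α : K) ^ 2 = ((d : ℚ) : K) := by
    have := congrArg (algebraMap OK K) h
    simpa using this
  have hirr : Irreducible (Polynomial.X ^ 2 - Polynomial.C (d : ℚ)) := by
    apply X_pow_sub_C_irreducible_of_prime Nat.prime_two
    intro b hb
    have : (α : K) ^ 2 = (b : K) ^ 2 := by rw [h2, ← hb]; push_cast; ring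
    rcases sq_eq_sq_iff_eq_or_eq_neg.1 this with h | h
    · exact hα b (by simp [h])
    · exact hα (-b) (by simp [h])
  have hmin : minpoly ℚ (α : K) = Polynomial.X ^ 2 - Polynomial.C (d : ℚ) := by
    symm
    apply minpoly.eq_of_irreducible_of_monic hirr
    · simp [h2]
    · exact Polynomial.monic_X_pow_sub_C _ (by norm_num)
  rw [trace_eq_finrank_mul_minpoly_nextCoeff, hmin]
  have : (Polynomial.X ^ 2 - Polynomial.C (d : ℚ)).nextCoeff = 0 := by
    rw [Polynomial.nextCoeff, Polynomial.natDegree_X_pow_sub_C, if_neg two_ne_zero]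
    rw [Polynomial.coeff_sub, Polynomial.coeff_X_pow, Polynomial.coeff_C]
    norm_num
  rw [this]; simp

lemma not_dvd_sub {α : OK} {d : ℤ} (h : α ^ 2 = (d : OK)) (hK : Module.finrank ℚ K = 2)
    (hα : ∀ r : ℚ, (algebraMap ℚ K r) ≠ (α : K)) {p : ℕ} {a : ℤ} (hpa : ¬ (p : ℤ) ∣ 2 * a) :
    ¬ (p : OK) ∣ α - (a : OK) := by
  rintro ⟨β, hβ⟩
  have h1 : (α : K) - (a : K) = (p : K) * (β : K) := by
    have := congrArg (algebraMap OK K) hβ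
    simpa using this
  have h2 := congrArg (Algebra.trace ℚ K) h1
  rw [map_sub, trace_sqrt h hα] at h2
  have h3 : Algebra.trace ℚ K (a : K) = 2 * a := by
    have := Algebra.trace_algebraMap (R := ℚ) (S := K) (a : ℚ)
    rw [hK] at this
    simpa using this
  have h4 : Algebra.trace ℚ K ((p : K) * (β : K)) = p * Algebra.trace ℚ K (β : K) := by
    have := (Algebra.trace ℚ K).map_smul (p : ℚ) (β : K)
    simpa [Algebra.smul_def] using this
  rw [h3, h4] at h2
  obtain ⟨t, ht⟩ : ∃ t : ℤ, (t : ℚ) = Algebra.trace ℚ K (β : K) := by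
    have := Algebra.isIntegral_trace (L := ℚ) (F := K) (NumberField.RingOfIntegers.isIntegral_coe β)
    obtain ⟨t, ht⟩ := IsIntegrallyClosed.isIntegral_iff.1 this
    exact ⟨t, by simpa using ht⟩
  rw [← ht] at h2
  apply hpa
  refine ⟨-t, ?_⟩
  have : (0 : ℤ) - 2 * a = p * t := by exact_mod_cast h2
  linarith

lemma spl_iff (hK : Module.finrank ℚ K = 2) {α : OK} {d : ℤ} (h : α ^ 2 = (d : OK))
    (hα : ∀ r : ℚ, (algebraMap ℚ K r) ≠ (α : K)) {p : ℕ} (hp : p.Prime) (hpd : ¬ (p : ℤ) ∣ 2 * d) :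
    Spl K p ↔ IsSquare (d : ZMod p) := by
  have := Fact.mk hp
  constructor
  · rintro ⟨P, -, -, hP, -⟩
    have hc : Nat.card (OK ⧸ P) = p := by
      rw [← hP, Ideal.absNorm_apply, Submodule.cardQuot_apply]
    have : Finite (OK ⧸ P) := Nat.finite_of_card_ne_zero (by rw [hc]; exact hp.ne_zero)
    have := Fintype.ofFinite (OK ⧸ P)
    rw [Nat.card_eq_fintype_card] at hc
    let e := ZMod.ringEquivOfPrime (OK ⧸ P) hp hc
    refine ⟨e.symm (Ideal.Quotient.mk P α), ?_⟩
    rw [← map_mul, ← map_mul, ← pow_two, h]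
    simp
  · rintro ⟨x, hx⟩
    by_contra hns
    obtain ⟨P, hP, hpP, hall⟩ := nonsplit_pow hK hp hns
    obtain ⟨j, hj⟩ := hall 2 _ (norm_span_p hK p)
    obtain ⟨a, rfl⟩ := ZMod.intCast_surjective x
    have hdvd : (p : ℤ) ∣ d - a * a := by
      rw [← ZMod.intCast_zmod_eq_zero_iff_dvd] 
      push_cast; rw [hx]; ring
    have hpa : ¬ (p : ℤ) ∣ 2 * a := by
      intro h1
      apply hpd
      have : (p : ℤ) ∣ 2 * (d - a * a) + (2 * a) * a := dvd_add (hdvd.mul_left _) (h1.mul_right _)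
      have e : 2 * (d - a * a) + (2 * a) * a = 2 * d := by ring
      rwa [e] at this
    have hprod : (α - (a : OK)) * (α + (a : OK)) ∈ P ^ j := by
      rw [← hj, Ideal.mem_span_singleton]
      obtain ⟨t, ht⟩ := hdvd
      refine ⟨t, ?_⟩
      have : (d : OK) - a * a = p * t := by exact_mod_cast congrArg (Int.cast : ℤ → OK) ht
      linear_combination h + this
    have hnot : ¬ (α - (a : OK) ∈ P ∧ α + (a : OK) ∈ P) := by
      rintro ⟨h1, h2⟩
      have h3 : ((2 * a : ℤ) : OK) ∈ P := by
        have := P.sub_mem h2 h1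
        push_cast
        convert this using 1
        ring
      have hcop : IsCoprime (p : ℤ) (2 * a) :=
        (Nat.prime_iff_prime_int.1 hp).coprime_iff_not_dvd.2 hpa
      obtain ⟨u, v, huv⟩ := hcop
      apply hP.ne_top
      rw [Ideal.eq_top_iff_one]
      have : (1 : OK) = (u : OK) * p + (v : OK) * ((2 * a : ℤ) : OK) := by exact_mod_cast congrArg (Int.cast : ℤ → OK) huv.symm
      rw [this]
      exact P.add_mem (P.mul_mem_left _ hpP) (P.mul_mem_left _ h3)
    have hmain : ∀ x y : OK, x * y ∈ P ^ j → y ∉ P → x ∈ P ^ j := by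
      intro x y hxy hy
      exact ((hP.mul_mem_pow P (by rwa [mul_comm] at hxy)).resolve_left hy)
    by_cases h1 : α + (a : OK) ∈ P
    · have h2 : α - (a : OK) ∉ P := fun h2 => hnot ⟨h2, h1⟩
      have := hmain _ _ (by rw [mul_comm] at hprod; exact hprod) h2
      rw [← hj, Ideal.mem_span_singleton] at this
      apply not_dvd_sub h hK hα (a := -a) (p := p) (by simpa using hpa)
      simpa using this
    · have := hmain _ _ hprod h1
      rw [← hj, Ideal.mem_span_singleton] at this
      exact not_dvd_sub h hK hα hpa this

end alg

section chr
open NumberTheorySymbols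

lemma exists_jacobi_neg_aux {d : ℤ} {r k : ℕ} {M : ℤ} (hr : r.Prime) (hk : Odd k)
    (hd : d = (r : ℤ) ^ k * M) (hM : M ≠ 0) (hrM : ¬ (r : ℤ) ∣ M) :
    ∃ n : ℕ, n.Coprime (4 * d.natAbs) ∧ J(d | n) = -1 := by
  have hMn : M.natAbs ≠ 0 := by simpa using hM
  have hrM' : r.Coprime M.natAbs := by
    rw [Nat.Prime.coprime_iff_not_dvd hr]; rwa [← Int.natCast_dvd]
  have key : ∃ n : ℕ, n % 4 = 1 ∧ n.Coprime r ∧ n % (M.natAbs) = 1 % M.natAbs ∧ J(r | n) = -1 ∧ J(M | n) = 1 := by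
    have := Fact.mk hr
    rcases hr.eq_two_or_odd' with rfl | hodd
    · have hMo : Odd M.natAbs := by
        exact (Nat.coprime_two_left.1 hrM')
      have hc : Nat.Coprime 8 M.natAbs := by
        have : (8:ℕ) = 2 ^ 3 := by norm_num
        rw [this]; exact Nat.Coprime.pow_left _ hrM'
      obtain ⟨n, h1, h2⟩ := Nat.chineseRemainder hc 5 1
      have h8 : n % 8 = 5 := h1
      have h4 : n % 4 = 1 := by omega
      have hno : Odd n := Nat.odd_iff.2 (by omega)
      refine ⟨n, h4, Nat.coprime_two_right.2 hno, h2, ?_, ?_⟩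
      · push_cast
        rw [jacobiSym.at_two hno, ZMod.χ₈_nat_eq_if_mod_eight]
        rw [if_neg (by omega), if_neg (by omega)]
      · have e1 : J((M.natAbs : ℤ) | n) = 1 := by
          rw [← jacobiSym.quadratic_reciprocity_one_mod_four h4 hMo, jacobiSym.mod_left' (a₂ := 1), jacobiSym.one_left]
          exact_mod_cast congrArg (Nat.cast : ℕ → ℤ) h2
        have e2 : J(-1 | n) = 1 := by
          rw [jacobiSym.at_neg_one hno, ZMod.χ₄_nat_one_mod_four h4]
        rcases Int.natAbs_eq M with h | h
        · rw [h]; exact e1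
        · rw [h, ← neg_one_mul, jacobiSym.mul_left, e1, e2]; norm_num
    · have hc : Nat.Coprime r (4 * M.natAbs) := by
        refine Nat.Coprime.mul_right ?_ hrM'
        have : (4:ℕ) = 2 ^ 2 := by norm_num
        rw [this]; exact Nat.Coprime.pow_right _ (Nat.coprime_two_right.2 hodd)
      obtain ⟨x, hx⟩ := FiniteField.exists_nonsquare (F := ZMod r) (by
        rw [ZMod.ringChar_zmod_n]; rintro rfl; revert hodd; decide)
      obtain ⟨n, h1, h2⟩ := Nat.chineseRemainder hc x.val 1
      have h4 : n % 4 = 1 := by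
        have : n ≡ 1 [MOD 4] := h2.of_mul_right _
        exact this
      have hno : Odd n := Nat.odd_iff.2 (by omega)
      have hJ : J((n : ℤ) | r) = -1 := by
        rw [← jacobiSym.legendreSym.to_jacobiSym, legendreSym.eq_neg_one_iff]
        have : ((n : ℤ) : ZMod r) = x := by
          have := (ZMod.natCast_eq_natCast_iff _ _ _).2 h1
          simpa using this
        rwa [this]
      refine ⟨n, h4, ?_, h2.of_mul_left _, ?_, ?_⟩
      · by_contra h
        have : J((n : ℤ) | r) = 0 := by
          rw [jacobiSym.eq_zero_iff]
          exact ⟨hr.ne_zero, by simpa [Int.gcd_natCast_natCast] using h⟩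
        rw [hJ] at this; norm_num at this
      · rw [jacobiSym.quadratic_reciprocity_one_mod_four' hodd h4, hJ]
      · rw [jacobiSym.mod_right _ hno]
        have : n % (4 * M.natAbs) = 1 := by
          have := h2
          rw [Nat.ModEq, Nat.mod_eq_of_lt (a := 1) (by omega)] at this
          exact this
        rw [this, jacobiSym.one_right]
  obtain ⟨n, h4, hnr, hnM, hJr, hJM⟩ := key
  refine ⟨n, ?_, ?_⟩
  · refine Nat.Coprime.mul_right ?_ ?_
    · have : (4:ℕ) = 2 ^ 2 := by norm_num
      rw [this]; exact Nat.Coprime.pow_right _ (Nat.coprime_two_right.2 (Nat.odd_iff.2 (by omega)))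
    · rw [hd, Int.natAbs_mul, Int.natAbs_pow, Int.natAbs_natCast]
      refine Nat.Coprime.mul_right (Nat.Coprime.pow_right _ hnr) ?_
      have h1 : n ≡ 1 [MOD M.natAbs] := hnM
      have := h1.gcd_eq
      rw [Nat.Coprime, this]; simp
  · rw [hd, jacobiSym.mul_left, jacobiSym.pow_left, hJr, hJM, hk.neg_one_pow]; norm_num

lemma exists_jacobi_neg {d : ℤ} (hd0 : d ≠ 0) (hd : ¬ IsSquare d) :
    ∃ n : ℕ, n.Coprime (4 * d.natAbs) ∧ J(d | n) = -1 := by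
  obtain ⟨a, b, hab, ha⟩ := Nat.sq_mul_squarefree d.natAbs
  have hb0 : b ≠ 0 := by
    rintro rfl; simp at hab; omega
  by_cases ha1 : a = 1
  · subst ha1
    have hneg : d = -(b : ℤ) ^ 2 := by
      rcases Int.natAbs_eq d with h | h
      · exfalso; apply hd; refine ⟨b, ?_⟩; rw [h, ← hab]; push_cast; ring
      · rw [h, ← hab]; push_cast; ring
    have hpos : 0 < d.natAbs := by omega
    refine ⟨4 * d.natAbs - 1, ?_, ?_⟩
    · rw [Nat.coprime_comm]
      exact (Nat.coprime_self_sub_right (by omega)).2 (by simp)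
    · have hno : Odd (4 * d.natAbs - 1) := Nat.odd_iff.2 (by omega)
      have hc : Nat.Coprime (4 * d.natAbs - 1) b := by
        have : Nat.Coprime (4 * d.natAbs - 1) (4 * d.natAbs) := by
          rw [Nat.coprime_comm]
          exact (Nat.coprime_self_sub_right (by omega)).2 (by simp)
        refine this.coprime_dvd_right ?_
        rw [← hab]; exact ⟨4 * b, by ring⟩
      have e : J((b : ℤ) ^ 2 | 4 * d.natAbs - 1) = 1 := by
        apply jacobiSym.sq_one'
        rw [Int.gcd_natCast_natCast]; exact hc.symm
      have hh : d = -1 * (b : ℤ) ^ 2 := by rw [hneg]; ring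
      have h3 : (4 * d.natAbs - 1) % 4 = 3 := by omega
      generalize 4 * d.natAbs - 1 = n at *
      rw [hh, jacobiSym.mul_left, e, jacobiSym.at_neg_one hno, ZMod.χ₄_nat_three_mod_four h3]
      norm_num
  · obtain ⟨r, hr, hra⟩ := Nat.exists_prime_and_dvd ha1
    obtain ⟨a', rfl⟩ := hra
    obtain ⟨j, b', hb', rfl⟩ := Nat.exists_eq_pow_mul_and_not_dvd hb0 r hr.ne_one
    have hra' : ¬ r ∣ a' := by
      intro h
      obtain ⟨t, rfl⟩ := h
      have := ha r ⟨t, by ring⟩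
      exact hr.ne_one (Nat.isUnit_iff.1 this)
    have hnd : ¬ r ∣ b' ^ 2 * a' := by
      intro h
      rcases hr.dvd_mul.1 h with h | h
      · exact hb' (hr.dvd_of_dvd_pow h)
      · exact hra' h
    have e : (d.natAbs : ℤ) = (r : ℤ) ^ (2 * j + 1) * ((b' ^ 2 * a' : ℕ) : ℤ) := by
      rw [← hab]; push_cast; ring
    have hne : b' ^ 2 * a' ≠ 0 := by
      intro h; rw [h] at hnd; simp at hnd
    rcases Int.natAbs_eq d with h | h
    · refine exists_jacobi_neg_aux (M := ((b' ^ 2 * a' : ℕ) : ℤ)) hr ⟨j, rfl⟩ (h.trans e) (by exact_mod_cast hne) ?_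
      exact_mod_cast hnd
    · refine exists_jacobi_neg_aux (M := -((b' ^ 2 * a' : ℕ) : ℤ)) hr ⟨j, rfl⟩ (h.trans (by rw [e]; ring)) (by rw [neg_ne_zero]; exact_mod_cast hne) ?_
      rw [dvd_neg]
      exact_mod_cast hnd

open Classical in
/-- the quadratic character attached to d -/
noncomputable def jchar (d : ℤ) (hd : d ≠ 0) : DirichletCharacter ℂ (4 * d.natAbs) where
  toFun a := if IsUnit a then ((J(d | a.val) : ℤ) : ℂ) else 0
  map_one' := by
    have : NeZero (4 * d.natAbs) := ⟨by omega⟩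
    have : Fact (1 < 4 * d.natAbs) := ⟨by omega⟩
    rw [if_pos isUnit_one, ZMod.val_one]; simp
  map_mul' a b := by
    have : NeZero (4 * d.natAbs) := ⟨by omega⟩
    by_cases ha : IsUnit a
    · by_cases hb : IsUnit b
      · rw [if_pos (ha.mul hb), if_pos ha, if_pos hb, ← Int.cast_mul]
        have hodd : ∀ c : ZMod (4 * d.natAbs), IsUnit c → Odd c.val := by
          intro c hc
          rw [← ZMod.natCast_zmod_val c, ZMod.isUnit_iff_coprime] at hc
          have : Nat.Coprime c.val 2 := hc.coprime_dvd_right ⟨2 * d.natAbs, by ring⟩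
          exact Nat.coprime_two_right.1 this
        have ho := (hodd a ha).mul (hodd b hb)
        have : NeZero a.val := ⟨by rintro h; have := hodd a ha; rw [h] at this; revert this; decide⟩
        have : NeZero b.val := ⟨by rintro h; have := hodd b hb; rw [h] at this; revert this; decide⟩
        rw [ZMod.val_mul, ← jacobiSym.mod_right _ ho, jacobiSym.mul_right]
      · rw [if_neg hb, if_neg (fun h => hb (isUnit_of_mul_isUnit_right h))]; simp
    · rw [if_neg ha, if_neg (fun h => ha (isUnit_of_mul_isUnit_left h))]; simp
  map_nonunit' a ha := if_neg ha

lemma jchar_apply {d : ℤ} (hd : d ≠ 0) {n : ℕ} (hn : n.Coprime (4 * d.natAbs)) :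
    jchar d hd n = ((J(d | n) : ℤ) : ℂ) := by
  have hu : IsUnit (n : ZMod (4 * d.natAbs)) := (ZMod.isUnit_iff_coprime _ _).2 hn
  have : jchar d hd n = ((J(d | (n : ZMod (4 * d.natAbs)).val) : ℤ) : ℂ) := if_pos hu
  rw [this, ZMod.val_natCast, ← jacobiSym.mod_right]
  have : Nat.Coprime n 2 := hn.coprime_dvd_right ⟨2 * d.natAbs, by ring⟩
  exact Nat.coprime_two_right.1 this

lemma exists_char (K : Type*) [Field K] [NumberField K] (hK : Module.finrank ℚ K = 2) :
    ∃ (N : ℕ) (_ : NeZero N) (χ : DirichletCharacter ℂ N), χ ≠ 1 ∧ χ ^ 2 = 1 ∧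
      ∀ p : ℕ, p.Prime → ¬ p ∣ N → (χ p = 1 ∧ Spl K p) ∨ (χ p = -1 ∧ ¬ Spl K p) := by
  obtain ⟨α, d, h, hα⟩ := exists_sqrt hK
  have hsq : ¬ IsSquare d := by
    rintro ⟨b, rfl⟩
    have h2 : (α : K) ^ 2 = (b : K) ^ 2 := by
      have := congrArg (algebraMap (NumberField.RingOfIntegers K) K) h
      rw [pow_two (b : K)]
      simpa using this
    rcases sq_eq_sq_iff_eq_or_eq_neg.1 h2 with h | h
    · exact hα b (by simp [h])
    · exact hα (-b) (by simp [h])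
  have hd : d ≠ 0 := by rintro rfl; exact hsq ⟨0, rfl⟩
  have hN : NeZero (4 * d.natAbs) := ⟨by omega⟩
  have hval : ∀ n : ℕ, n.Coprime (4 * d.natAbs) → J(d | n) = 1 ∨ J(d | n) = -1 := by
    intro n hn
    apply jacobiSym.eq_one_or_neg_one
    rw [Int.gcd, Int.natAbs_natCast]
    exact (hn.coprime_dvd_right ⟨4, by ring⟩).symm
  refine ⟨4 * d.natAbs, hN, jchar d hd, ?_, ?_, ?_⟩
  · obtain ⟨n, hn, hJ⟩ := exists_jacobi_neg hd hsq
    intro h1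
    have h2 := jchar_apply hd hn
    rw [h1, MulChar.one_apply ((ZMod.isUnit_iff_coprime _ _).2 hn), hJ] at h2
    norm_num at h2
  · ext a
    rw [MulChar.pow_apply_coe, MulChar.one_apply_coe]
    have hc := ZMod.val_coe_unit_coprime a
    have := jchar_apply hd hc
    rw [ZMod.natCast_zmod_val] at this
    rw [this]
    rcases hval _ hc with h | h <;> rw [h] <;> norm_num
  · intro p hp hpN
    have hc : p.Coprime (4 * d.natAbs) := (Nat.Prime.coprime_iff_not_dvd hp).2 hpN
    have := Fact.mk hp
    rw [jchar_apply hd hc]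
    have hpd : ¬ (p : ℤ) ∣ 2 * d := by
      intro h
      apply hpN
      have := Int.natCast_dvd.1 h
      rw [Int.natAbs_mul] at this
      exact this.trans ⟨2, by norm_num; ring⟩
    rw [spl_iff hK h hα hp hpd]
    have hd0 : (d : ZMod p) ≠ 0 := by
      rw [Ne, ZMod.intCast_zmod_eq_zero_iff_dvd]
      exact fun h => hpd (h.mul_left _)
    rw [← jacobiSym.legendreSym.to_jacobiSym]
    rcases legendreSym.eq_one_or_neg_one p hd0 with h1 | h1
    · left; exact ⟨by rw [h1]; simp, (legendreSym.eq_one_iff p hd0).1 h1⟩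
    · right; exact ⟨by rw [h1]; simp, (legendreSym.eq_neg_one_iff p).1 h1⟩

end chr

section B1
open Complex MeasureTheory

variable {N : ℕ} [NeZero N]

/-- mean value of a character -/
noncomputable def kap (χ : DirichletCharacter ℂ N) : ℂ := (∑ k ∈ Finset.range N, χ k) / N

/-- remainder -/
noncomputable def rem (χ : DirichletCharacter ℂ N) (u : ℝ) : ℂ :=
  ∑ k ∈ Finset.Icc 1 ⌊u⌋₊, χ k - kap χ * u

lemma rem_bdd (χ : DirichletCharacter ℂ N) : ∃ B : ℝ, 0 < B ∧ ∀ u : ℝ, 0 ≤ u → ‖rem χ u‖ ≤ B := by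
  set h : ℕ → ℂ := fun n => ∑ k ∈ Finset.Icc 1 n, χ k - kap χ * n with hh
  have hN : (N : ℂ) ≠ 0 := by exact_mod_cast NeZero.ne N
  have hper : ∀ a : ℕ, ∑ k ∈ Finset.range N, χ ((k + a : ℕ)) = ∑ k ∈ Finset.range N, χ k := by
    intro a
    induction a with
    | zero => simp
    | succ a ih =>
      rw [← ih]
      have h1 := Finset.sum_range_succ (fun k => χ ((k + a : ℕ))) N
      have h2 := Finset.sum_range_succ' (fun k => χ ((k + a : ℕ))) N
      have h3 : χ ((N + a : ℕ)) = χ ((0 + a : ℕ)) := by push_cast; simp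
      rw [h1, h3] at h2
      have := add_right_cancel h2
      rw [this]
      apply Finset.sum_congr rfl; intro k _; congr 2; ring
  have hp : ∀ n, h (n + N) = h n := by
    intro n
    have : ∑ k ∈ Finset.Icc 1 (n + N), χ k = ∑ k ∈ Finset.Icc 1 n, χ k + ∑ k ∈ Finset.range N, χ ((k + (n+1) : ℕ)) := by
      have e : ∀ m : ℕ, ∑ k ∈ Finset.Icc 1 m, χ k = ∑ k ∈ Finset.range m, χ ((k + 1 : ℕ)) := by
        intro m
        induction m with
        | zero => simp
        | succ m ih => rw [Finset.sum_Icc_succ_top (by omega), Finset.sum_range_succ, ih]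
      rw [e, e, Finset.sum_range_add]
      congr 1
      apply Finset.sum_congr rfl; intro k _; congr 2; ring
    simp only [hh]
    rw [this, hper, kap]
    push_cast
    field_simp
    ring
  have hmod : ∀ n, h n = h (n % N) := by
    intro n
    conv_lhs => rw [← Nat.mod_add_div n N]
    generalize n / N = q
    induction q with
    | zero => simp
    | succ q ih => rw [mul_add, mul_one, ← add_assoc, hp, ih]
  refine ⟨∑ j ∈ Finset.range N, ‖h j‖ + ‖kap χ‖ + 1, by positivity, ?_⟩
  intro u hu
  have e : rem χ u = h ⌊u⌋₊ - kap χ * ((u - ⌊u⌋₊ : ℝ) : ℂ) := by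
    simp only [hh, rem]; push_cast; ring
  rw [e]
  refine (norm_sub_le _ _).trans ?_
  have h1 : ‖h ⌊u⌋₊‖ ≤ ∑ j ∈ Finset.range N, ‖h j‖ := by
    rw [hmod]
    exact Finset.single_le_sum (f := fun j => ‖h j‖) (fun _ _ => norm_nonneg _) (Finset.mem_range.2 (Nat.mod_lt _ (NeZero.pos N)))
  have h2 : ‖kap χ * ((u - ⌊u⌋₊ : ℝ) : ℂ)‖ ≤ ‖kap χ‖ := by
    rw [norm_mul, Complex.norm_real, Real.norm_eq_abs, abs_of_nonneg (sub_nonneg.2 (Nat.floor_le hu))]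
    have := Nat.lt_floor_add_one u
    nlinarith [norm_nonneg (kap χ)]
  linarith

lemma rem_meas (χ : DirichletCharacter ℂ N) : Measurable (rem χ) := by
  unfold rem
  apply Measurable.sub
  · exact (measurable_from_top (f := fun n : ℕ => ∑ k ∈ Finset.Icc 1 n, χ k)).comp Nat.measurable_floor
  · fun_prop

lemma rem_int (χ : DirichletCharacter ℂ N) {s : ℂ} (hs : 0 < s.re) {c : ℝ} (hc : 0 < c) :
    IntegrableOn (fun u : ℝ => rem χ u * (u : ℂ) ^ (-(s + 1))) (Set.Ioi c) := by
  obtain ⟨B, hB, hb⟩ := rem_bdd χ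
  have h1 : IntegrableOn (fun t : ℝ => (t : ℂ) ^ (-(s+1))) (Set.Ioi c) :=
    integrableOn_Ioi_cpow_of_lt (by simp; linarith) hc
  refine Integrable.bdd_mul (c := B) h1 (rem_meas χ).aestronglyMeasurable ?_
  filter_upwards [ae_restrict_mem measurableSet_Ioi] with u hu
  exact hb u (hc.le.trans (le_of_lt hu))

lemma L_one (χ : DirichletCharacter ℂ N) {s : ℂ} (hs : 1 < s.re) :
    χ.LFunction s = kap χ * s / (s - 1) + s * ∫ u in Set.Ioi (1 : ℝ), rem χ u * (u : ℂ) ^ (-(s + 1)) := by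
  rw [χ.LFunction_eq_LSeries hs]
  rw [LSeries_eq_mul_integral' (r := 1) _ zero_le_one hs]
  · have hs1 : s - 1 ≠ 0 := by
      intro h; rw [sub_eq_zero] at h; rw [h] at hs; simp at hs
    have e : ∫ t in Set.Ioi (1 : ℝ), (∑ k ∈ Finset.Icc 1 ⌊t⌋₊, χ k) * (t : ℂ) ^ (-(s + 1)) =
        ∫ t in Set.Ioi (1 : ℝ), (kap χ * (t : ℂ) ^ (-s) + rem χ t * (t : ℂ) ^ (-(s + 1))) := by
      apply setIntegral_congr_fun measurableSet_Ioi
      intro t ht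
      have ht0 : (t : ℂ) ≠ 0 := by
        have : (0:ℝ) < t := zero_lt_one.trans ht
        exact_mod_cast this.ne'
      simp only [rem]
      have : (t : ℂ) ^ (-s) = t * (t : ℂ) ^ (-(s+1)) := by
        rw [show -s = 1 + -(s+1) by ring, Complex.cpow_add _ _ ht0, Complex.cpow_one]
      rw [this]; ring
    rw [e, integral_add, integral_const_mul, integral_Ioi_cpow_of_lt (by simpa using hs) zero_lt_one]
    · have : -s + 1 ≠ 0 := by intro h; apply hs1; linear_combination -h
      have e2 : -((1:ℝ) : ℂ) ^ (-s + 1) / (-s + 1) = 1 / (s - 1) := by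
        simp only [ofReal_one, one_cpow]; field_simp; ring
      rw [e2]; ring
    · exact (integrableOn_Ioi_cpow_of_lt (by simpa using hs) zero_lt_one).const_mul _
    · exact rem_int χ (by linarith) zero_lt_one
  · apply Asymptotics.IsBigO.of_bound 1
    filter_upwards with n
    rw [Real.rpow_one, Real.norm_of_nonneg (by positivity), Real.norm_of_nonneg (by positivity), one_mul]
    calc ∑ k ∈ Finset.Icc 1 n, ‖χ k‖ ≤ ∑ k ∈ Finset.Icc 1 n, (1:ℝ) := Finset.sum_le_sum fun k _ => χ.norm_le_one _
      _ = n := by simp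

lemma L_two (χ : DirichletCharacter ℂ N) {s : ℂ} (hs : 0 < s.re) (hs1 : s.im ≠ 0) :
    χ.LFunction s = kap χ * s / (s - 1) + s * ∫ u in Set.Ioi (1 : ℝ), rem χ u * (u : ℂ) ^ (-(s + 1)) := by
  obtain ⟨e, he⟩ : ∃ e : ℝ, 0 < e * s.im := ⟨s.im, mul_self_pos.2 hs1⟩
  set U : Set ℂ := {z | 0 < z.re} ∩ {z | 0 < e * z.im} with hU
  have hUo : IsOpen U := (isOpen_lt continuous_const continuous_re).inter
    (isOpen_lt continuous_const (continuous_const.mul continuous_im))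
  have hUc : Convex ℝ U := by
    apply Convex.inter
    · exact convex_halfSpace_re_gt 0
    · intro x hx y hy a b ha hb hab
      simp at hx hy ⊢
      rcases ha.eq_or_lt with rfl | ha
      · simp at hab; subst hab; simpa using hy
      · have := mul_pos ha hx
        have := mul_nonneg hb hy.le
        nlinarith
  have hne : ∀ z ∈ U, z ≠ 1 := by
    rintro z ⟨-, hz⟩ rfl
    simp at hz
  obtain ⟨B, hB, hb⟩ := rem_bdd χ
  set f : ℝ → ℂ := (Set.Ioi (1:ℝ)).indicator (rem χ) with hf
  have hmel : ∀ z : ℂ, ∫ u in Set.Ioi (1 : ℝ), rem χ u * (u : ℂ) ^ (-(z + 1)) = mellin f (-z) := by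
    intro z
    rw [mellin]
    have e1 : Set.Ioi (1:ℝ) = Set.Ioi 0 ∩ Set.Ioi 1 := by
      rw [Set.Ioi_inter_Ioi]; simp
    conv_lhs => rw [e1]
    rw [← setIntegral_indicator measurableSet_Ioi]
    congr 1; ext u
    simp only [hf, Set.indicator, smul_eq_mul]
    split_ifs
    · rw [mul_comm]; congr 2; ring
    · simp
  have hfb : ∀ u, ‖f u‖ ≤ B := by
    intro u
    simp only [hf, Set.indicator]
    split_ifs with h
    · exact hb u (zero_le_one.trans (le_of_lt h))
    · simpa using hB.le
  have hdiff : ∀ z : ℂ, 0 < z.re → DifferentiableAt ℂ (fun z => ∫ u in Set.Ioi (1 : ℝ), rem χ u * (u : ℂ) ^ (-(z + 1))) z := by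
    intro z hz
    simp_rw [hmel]
    have : DifferentiableAt ℂ (mellin f) (-z) := by
      apply mellin_differentiableAt_of_isBigO_rpow (a := 0) (b := -z.re - 1)
      · have hm : Measurable f := (rem_meas χ).indicator measurableSet_Ioi
        have hg : LocallyIntegrable (fun _ : ℝ => B) := locallyIntegrable_const B
        refine LocallyIntegrable.locallyIntegrableOn (hg.mono hm.aestronglyMeasurable ?_) _
        filter_upwards with u
        rw [Real.norm_of_nonneg hB.le]; exact hfb u
      · apply Asymptotics.IsBigO.of_bound B
        filter_upwards with u
        simpa using hfb u
      · simpa using hz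
      · apply Asymptotics.IsBigO.of_bound B
        filter_upwards [Ioo_mem_nhdsGT (zero_lt_one (α := ℝ))] with u hu
        have : f u = 0 := by
          simp only [hf, Set.indicator]; rw [if_neg]; simpa using hu.2.le
        rw [this, norm_zero]; positivity
      · simp
    exact this.comp z differentiableAt_id.neg
  have hA : AnalyticOnNhd ℂ χ.LFunction U := by
    apply DifferentiableOn.analyticOnNhd _ hUo
    intro z hz
    exact (χ.differentiableAt_LFunction z (Or.inl (hne z hz))).differentiableWithinAt
  have hB' : AnalyticOnNhd ℂ (fun z => kap χ * z / (z - 1) + z * ∫ u in Set.Ioi (1 : ℝ), rem χ u * (u : ℂ) ^ (-(z + 1))) U := by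
    apply DifferentiableOn.analyticOnNhd _ hUo
    intro z hz
    apply DifferentiableAt.differentiableWithinAt
    have := hdiff z hz.1
    have h1 : z - 1 ≠ 0 := sub_ne_zero.2 (hne z hz)
    refine DifferentiableAt.add (DifferentiableAt.div (by fun_prop) (by fun_prop) h1) (differentiableAt_id.mul this)
  have hz0 : (2 + I * s.im : ℂ) ∈ U := ⟨by simp, by simpa using he⟩
  refine hA.eqOn_of_preconnected_of_eventuallyEq hB' hUc.isPreconnected hz0 ?_ (⟨hs, he⟩ : s ∈ U)
  have : {z : ℂ | 1 < z.re} ∈ nhds (2 + I * s.im : ℂ) := (isOpen_lt continuous_const continuous_re).mem_nhds (by simp)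
  filter_upwards [this] with z hz
  exact L_one χ hz

lemma L_trunc (χ : DirichletCharacter ℂ N) {s : ℂ} (hs : 0 < s.re) (hs1 : s.im ≠ 0) {M : ℕ} (hM : 1 ≤ M) :
    χ.LFunction s = ∑ n ∈ Finset.Icc 1 M, (n : ℂ) ^ (-s) * χ n - (M : ℂ) ^ (-s) * (∑ n ∈ Finset.Icc 1 M, χ n)
      + kap χ * s / (s - 1) * (M : ℂ) ^ (1 - s)
      + s * ∫ u in Set.Ioi (M : ℝ), rem χ u * (u : ℂ) ^ (-(s + 1)) := by
  have hM1 : (1:ℝ) ≤ M := by exact_mod_cast hM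
  have hs0 : s ≠ 0 := by rintro rfl; simp at hs
  have hsne : s - 1 ≠ 0 := by
    intro h; rw [sub_eq_zero] at h; rw [h] at hs1; simp at hs1
  rw [L_two χ hs hs1]
  have hsplit : ∫ u in Set.Ioi (1 : ℝ), rem χ u * (u : ℂ) ^ (-(s + 1)) =
      (∫ u in Set.Ioc (1 : ℝ) M, rem χ u * (u : ℂ) ^ (-(s + 1))) + ∫ u in Set.Ioi (M : ℝ), rem χ u * (u : ℂ) ^ (-(s + 1)) := by
    rw [← setIntegral_union (Set.Ioc_disjoint_Ioi le_rfl) measurableSet_Ioi, Set.Ioc_union_Ioi_eq_Ioi hM1]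
    · exact (rem_int χ hs zero_lt_one).mono_set Set.Ioc_subset_Ioi_self
    · exact rem_int χ hs (by linarith)
  set c : ℕ → ℂ := fun n => if n = 0 then 0 else χ n with hc
  have hcs : ∀ m : ℕ, ∑ k ∈ Finset.Icc 0 m, c k = ∑ k ∈ Finset.Icc 1 m, χ k := by
    intro m
    rw [← Finset.insert_Icc_add_one_left_eq_Icc m.zero_le, Finset.sum_insert (by simp)]
    simp only [hc, if_true, zero_add]
    exact Finset.sum_congr rfl fun k hk => if_neg (by have := (Finset.mem_Icc.1 hk).1; omega)
  have hd : ∀ t : ℝ, 1 ≤ t → HasDerivAt (fun x : ℝ => (x : ℂ) ^ (-s)) (-s * (t : ℂ) ^ (-(s+1))) t := by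
    intro t ht
    have := hasDerivAt_ofReal_cpow_const (x := t) (r := -s) (by linarith) (neg_ne_zero.2 hs0)
    rwa [show -s - 1 = -(s+1) by ring] at this
  have hcont : ContinuousOn (fun t : ℝ => (t : ℂ) ^ (-(s+1))) (Set.Icc 1 (M:ℝ)) := by
    intro t ht
    have : (0:ℝ) < t := by linarith [ht.1]
    exact (continuousAt_ofReal_cpow_const _ _ (Or.inr this.ne')).continuousWithinAt
  have habel := sum_mul_eq_sub_integral_mul₀' (f := fun x : ℝ => (x : ℂ) ^ (-s)) c (by simp [hc]) M
    (fun t ht => (hd t ht.1).differentiableAt) (by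
      have : IntegrableOn (fun t : ℝ => -s * (t : ℂ) ^ (-(s+1))) (Set.Icc 1 (M:ℝ)) :=
        (continuousOn_const.mul hcont).integrableOn_Icc
      exact this.congr_fun (fun t ht => ((hd t ht.1).deriv).symm) measurableSet_Icc)
  simp_rw [hcs] at habel
  have e1 : ∑ k ∈ Finset.Icc 0 M, ((k : ℝ) : ℂ) ^ (-s) * c k = ∑ n ∈ Finset.Icc 1 M, (n : ℂ) ^ (-s) * χ n := by
    rw [← Finset.insert_Icc_add_one_left_eq_Icc M.zero_le, Finset.sum_insert (by simp)]
    simp only [hc, if_true, zero_add, mul_zero]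
    exact Finset.sum_congr rfl fun k hk => by rw [if_neg (by have := (Finset.mem_Icc.1 hk).1; omega)]; simp
  rw [e1] at habel
  have e2 : ∫ t in Set.Ioc 1 (M:ℝ), deriv (fun x : ℝ => (x : ℂ) ^ (-s)) t * ∑ k ∈ Finset.Icc 1 ⌊t⌋₊, χ k
     = ∫ t in Set.Ioc 1 (M:ℝ), (-s * (kap χ * (t : ℂ) ^ (-s)) + (-s) * (rem χ t * (t : ℂ) ^ (-(s + 1)))) := by
    apply setIntegral_congr_fun measurableSet_Ioc
    intro t ht
    have ht0 : (t : ℂ) ≠ 0 := by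
      have : (0:ℝ) < t := zero_lt_one.trans ht.1
      exact_mod_cast this.ne'
    simp only [rem]
    rw [(hd t ht.1.le).deriv]
    have : (t : ℂ) ^ (-s) = t * (t : ℂ) ^ (-(s+1)) := by
      rw [show -s = 1 + -(s+1) by ring, Complex.cpow_add _ _ ht0, Complex.cpow_one]
    rw [this]; ring
  have hcont2 : ContinuousOn (fun t : ℝ => (t : ℂ) ^ (-s)) (Set.Icc 1 (M:ℝ)) := by
    intro t ht
    have : (0:ℝ) < t := by linarith [ht.1]
    exact (continuousAt_ofReal_cpow_const _ _ (Or.inr this.ne')).continuousWithinAt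
  have e3 : ∫ t in Set.Ioc 1 (M:ℝ), (t : ℂ) ^ (-s) = ((M:ℂ) ^ (1 - s) - 1) / (1 - s) := by
    rw [← intervalIntegral.integral_of_le hM1, integral_cpow]
    · have : -s + 1 = 1 - s := by ring
      rw [this]; simp
    · right; refine ⟨?_, ?_⟩
      · intro h; apply hsne; linear_combination -h
      · rw [Set.uIcc_of_le hM1]; intro h; linarith [h.1]
  rw [e2, integral_add, integral_const_mul, integral_const_mul, integral_const_mul, e3] at habel
  · rw [hsplit, habel]
    have h1s : 1 - s ≠ 0 := by intro h; apply hsne; linear_combination -h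
    push_cast
    have : kap χ * s / (s - 1) = - (kap χ * s / (1 - s)) := by
      rw [← div_neg]; congr 1; ring
    rw [this]
    field_simp
    ring
  · exact ((hcont2.integrableOn_Icc.mono_set Set.Ioc_subset_Icc_self).const_mul _).const_mul _
  · exact ((rem_int χ hs zero_lt_one).mono_set Set.Ioc_subset_Ioi_self).const_mul _

end B1

section B2
open Complex MeasureTheory

variable {N : ℕ} [NeZero N]

lemma L_bound (χ : DirichletCharacter ℂ N) : ∃ C : ℝ, 0 < C ∧ ∀ s : ℂ, 39/40 ≤ s.re → s.re ≤ 4 → 1 ≤ |s.im| →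
    ‖χ.LFunction s‖ ≤ C * |s.im| ^ (1/20 : ℝ) := by
  obtain ⟨B, hB, hb⟩ := rem_bdd χ
  refine ⟨(42 + 5 * ‖kap χ‖ + 10 * B) * 2, by positivity, ?_⟩
  intro s h1 h2 hT
  set T := |s.im| with hTd
  set M := ⌈T⌉₊ with hMd
  have hTM : T ≤ M := Nat.le_ceil T
  have hMT : (M:ℝ) < T + 1 := Nat.ceil_lt_add_one (by linarith)
  have hM1 : (1:ℝ) ≤ M := by linarith
  have hM1' : 1 ≤ M := by exact_mod_cast hM1
  have hM0 : (0:ℝ) < M := by linarith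
  have hs1 : s.im ≠ 0 := by intro h; rw [hTd, h] at hT; simp at hT; linarith
  have hs0 : 0 < s.re := by linarith
  have hMd1 : (M:ℝ) ^ (1 - s.re) ≤ (M:ℝ) ^ (1/40 : ℝ) := Real.rpow_le_rpow_of_exponent_le hM1 (by linarith)
  have hMd2 : (M:ℝ) ^ (1/40 : ℝ) ≤ (M:ℝ) ^ (1/20 : ℝ) := Real.rpow_le_rpow_of_exponent_le hM1 (by norm_num)
  set E := (M:ℝ) ^ (1/20 : ℝ) with hE
  have hE0 : 0 ≤ E := by positivity
  have hET : E ≤ 2 * T ^ (1/20 : ℝ) := by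
    calc E ≤ (2 * T) ^ (1/20 : ℝ) := Real.rpow_le_rpow hM0.le (by linarith) (by norm_num)
      _ = 2 ^ (1/20 : ℝ) * T ^ (1/20 : ℝ) := Real.mul_rpow (by norm_num) (by linarith)
      _ ≤ 2 * T ^ (1/20 : ℝ) := by
        gcongr
        calc (2:ℝ) ^ (1/20 : ℝ) ≤ 2 ^ (1:ℝ) := Real.rpow_le_rpow_of_exponent_le (by norm_num) (by norm_num)
          _ = 2 := by simp
  have hsn : ‖s‖ ≤ 5 * T := by
    have := Complex.norm_le_abs_re_add_abs_im s
    rw [abs_of_pos hs0] at this; linarith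
  have hsm : T ≤ ‖s - 1‖ := by
    have := Complex.abs_im_le_norm (s - 1)
    simpa using this
  have hpow : (M:ℝ) ^ (-s.re) * M = (M:ℝ) ^ (1 - s.re) := by
    rw [show 1 - s.re = -s.re + 1 by ring, Real.rpow_add_one hM0.ne']
  -- term 1
  have t1 : ‖∑ n ∈ Finset.Icc 1 M, (n : ℂ) ^ (-s) * χ n‖ ≤ 41 * E := by
    have hterm : ∀ n ∈ Finset.Icc 1 M, ‖(n : ℂ) ^ (-s) * χ n‖ ≤ (M:ℝ) ^ (1/40 : ℝ) * (n:ℝ)⁻¹ := by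
      intro n hn
      have hn1 := (Finset.mem_Icc.1 hn).1
      have hn2 : (n:ℝ) ≤ M := by exact_mod_cast (Finset.mem_Icc.1 hn).2
      have hn1' : (1:ℝ) ≤ n := by exact_mod_cast hn1
      have hn0 : (0:ℝ) < n := by linarith
      rw [norm_mul, Complex.norm_natCast_cpow_of_pos (by omega)]
      calc (n:ℝ) ^ (-s).re * ‖χ n‖ ≤ (n:ℝ) ^ (-s).re * 1 := by
            gcongr; exact χ.norm_le_one _
        _ = (n:ℝ) ^ (-s.re) := by simp
        _ ≤ (n:ℝ) ^ (1/40 + (-1) : ℝ) := Real.rpow_le_rpow_of_exponent_le hn1' (by linarith)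
        _ = (n:ℝ) ^ (1/40 : ℝ) * (n:ℝ)⁻¹ := by rw [Real.rpow_add hn0, Real.rpow_neg_one]
        _ ≤ _ := by gcongr
    have hharm : ∑ n ∈ Finset.Icc 1 M, (n:ℝ)⁻¹ ≤ 1 + Real.log M := by
      have := harmonic_le_one_add_log M
      rw [harmonic_eq_sum_Icc] at this
      push_cast at this
      exact this
    have hlog : Real.log M ≤ 40 * (M:ℝ) ^ (1/40 : ℝ) := by
      have := Real.log_le_rpow_div hM0.le (show (0:ℝ) < 1/40 by norm_num)
      linarith
    have hone : 1 ≤ (M:ℝ) ^ (1/40 : ℝ) := Real.one_le_rpow hM1 (by norm_num)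
    have hsq : (M:ℝ) ^ (1/40 : ℝ) * (M:ℝ) ^ (1/40 : ℝ) = E := by
      rw [← Real.rpow_add hM0]; norm_num [hE]
    calc _ ≤ ∑ n ∈ Finset.Icc 1 M, (M:ℝ) ^ (1/40 : ℝ) * (n:ℝ)⁻¹ := norm_sum_le_of_le _ hterm
      _ = (M:ℝ) ^ (1/40 : ℝ) * ∑ n ∈ Finset.Icc 1 M, (n:ℝ)⁻¹ := by rw [Finset.mul_sum]
      _ ≤ (M:ℝ) ^ (1/40 : ℝ) * (41 * (M:ℝ) ^ (1/40 : ℝ)) := by gcongr; linarith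
      _ = 41 * E := by rw [← hsq]; ring
  have t2 : ‖(M : ℂ) ^ (-s) * (∑ n ∈ Finset.Icc 1 M, χ n)‖ ≤ E := by
    rw [norm_mul, Complex.norm_natCast_cpow_of_pos (by omega)]
    have : ‖∑ n ∈ Finset.Icc 1 M, χ n‖ ≤ M := by
      calc _ ≤ ∑ n ∈ Finset.Icc 1 M, (1:ℝ) := norm_sum_le_of_le _ fun n _ => χ.norm_le_one _
        _ = M := by simp
    calc _ ≤ (M:ℝ) ^ (-s.re) * M := by rw [neg_re]; gcongr
      _ ≤ E := by rw [hpow]; linarith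
  have t3 : ‖kap χ * s / (s - 1) * (M : ℂ) ^ (1 - s)‖ ≤ 5 * ‖kap χ‖ * E := by
    rw [norm_mul, Complex.norm_natCast_cpow_of_pos (by omega), norm_div, norm_mul]
    have : ‖kap χ‖ * ‖s‖ / ‖s - 1‖ ≤ 5 * ‖kap χ‖ := by
      rw [div_le_iff₀ (by linarith)]
      nlinarith [norm_nonneg (kap χ), mul_le_mul_of_nonneg_left hsn (norm_nonneg (kap χ)), mul_le_mul_of_nonneg_left hsm (norm_nonneg (kap χ))]
    have h3 : (M:ℝ) ^ (1 - s).re ≤ E := by rw [sub_re, one_re]; linarith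
    gcongr
  have t4 : ‖s * ∫ u in Set.Ioi (M : ℝ), rem χ u * (u : ℂ) ^ (-(s + 1))‖ ≤ 10 * B * E := by
    have hint : ‖∫ u in Set.Ioi (M : ℝ), rem χ u * (u : ℂ) ^ (-(s + 1))‖ ≤ ∫ u in Set.Ioi (M : ℝ), B * u ^ (-(s.re + 1)) := by
      apply norm_integral_le_of_norm_le
      · exact (integrableOn_Ioi_rpow_of_lt (by linarith) hM0).const_mul B
      · filter_upwards [ae_restrict_mem measurableSet_Ioi] with u hu
        have hu0 : 0 < u := hM0.trans hu
        rw [norm_mul, Complex.norm_cpow_eq_rpow_re_of_pos hu0]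
        simp only [neg_re, add_re, one_re]
        gcongr
        exact hb u hu0.le
    rw [integral_const_mul, integral_Ioi_rpow_of_lt (by linarith) hM0] at hint
    rw [norm_mul]
    have e : -(M:ℝ) ^ (-(s.re + 1) + 1) / (-(s.re + 1) + 1) = (M:ℝ) ^ (-s.re) / s.re := by
      rw [show -(s.re + 1) + 1 = -s.re by ring, neg_div_neg_eq]
    rw [e] at hint
    have h5 : (M:ℝ) ^ (-s.re) / s.re ≤ 2 * (M:ℝ) ^ (-s.re) := by
      rw [div_le_iff₀ hs0]
      have : 0 ≤ (M:ℝ) ^ (-s.re) := by positivity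
      nlinarith
    calc _ ≤ (5 * T) * (B * (2 * (M:ℝ) ^ (-s.re))) := by gcongr; exact hint.trans (by gcongr)
      _ = 10 * B * ((M:ℝ) ^ (-s.re) * T) := by ring
      _ ≤ 10 * B * ((M:ℝ) ^ (-s.re) * M) := by gcongr
      _ ≤ 10 * B * E := by rw [hpow]; gcongr; linarith
  rw [L_trunc χ hs0 hs1 hM1']
  calc _ ≤ 41 * E + E + 5 * ‖kap χ‖ * E + 10 * B * E := by
        refine (norm_add_le _ _).trans (add_le_add ((norm_add_le _ _).trans (add_le_add ((norm_sub_le _ _).trans (add_le_add t1 t2)) t3)) t4)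
    _ = (42 + 5 * ‖kap χ‖ + 10 * B) * E := by ring
    _ ≤ (42 + 5 * ‖kap χ‖ + 10 * B) * (2 * T ^ (1/20 : ℝ)) := by gcongr
    _ = _ := by ring

lemma L_deriv_bound (χ : DirichletCharacter ℂ N) : ∃ C : ℝ, 0 < C ∧ ∀ s : ℂ, 1 ≤ s.re → s.re ≤ 3 → 2 ≤ |s.im| →
    ‖χ.LFunction s‖ ≤ C * |s.im| ^ (1/20 : ℝ) ∧ ‖deriv χ.LFunction s‖ ≤ C * |s.im| ^ (1/20 : ℝ) ∧
    ‖deriv (deriv χ.LFunction) s‖ ≤ C * |s.im| ^ (1/20 : ℝ) := by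
  obtain ⟨C, hC, h⟩ := L_bound χ
  refine ⟨C * 2 * 3200, by positivity, ?_⟩
  intro s h1 h2 hT
  set T := |s.im| with hTd
  have hbd : ∀ z ∈ Metric.closedBall s (1/40), ‖χ.LFunction z‖ ≤ C * 2 * T ^ (1/20 : ℝ) ∧ z ≠ 1 := by
    intro z hz
    rw [Metric.mem_closedBall, dist_eq_norm] at hz
    have hre := (Complex.abs_re_le_norm (z - s)).trans hz
    have him := (Complex.abs_im_le_norm (z - s)).trans hz
    rw [sub_re, abs_le] at hre
    rw [sub_im] at him
    have i1 : |z.im| ≤ T + 1/40 := by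
      have := abs_sub_abs_le_abs_sub z.im s.im; linarith
    have i2 : T - 1/40 ≤ |z.im| := by
      have := abs_sub_abs_le_abs_sub s.im z.im; rw [abs_sub_comm] at this; linarith
    refine ⟨?_, ?_⟩
    · refine (h z (by linarith) (by linarith) (by linarith)).trans ?_
      rw [mul_assoc]
      gcongr
      calc |z.im| ^ (1/20 : ℝ) ≤ (2 * T) ^ (1/20 : ℝ) := Real.rpow_le_rpow (abs_nonneg _) (by linarith) (by norm_num)
        _ = 2 ^ (1/20 : ℝ) * T ^ (1/20 : ℝ) := Real.mul_rpow (by norm_num) (by linarith)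
        _ ≤ 2 * T ^ (1/20 : ℝ) := by
          gcongr
          calc (2:ℝ) ^ (1/20 : ℝ) ≤ 2 ^ (1:ℝ) := Real.rpow_le_rpow_of_exponent_le (by norm_num) (by norm_num)
            _ = 2 := by simp
    · rintro rfl
      simp at i2; linarith
  have hdc : DiffContOnCl ℂ χ.LFunction (Metric.ball s (1/40)) := by
    apply DifferentiableOn.diffContOnCl
    rw [closure_ball _ (by norm_num)]
    intro z hz
    exact (χ.differentiableAt_LFunction z (Or.inl (hbd z hz).2)).differentiableWithinAt
  have hsph : ∀ z ∈ Metric.sphere s (1/40), ‖χ.LFunction z‖ ≤ C * 2 * T ^ (1/20 : ℝ) := fun z hz =>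
    (hbd z (Metric.sphere_subset_closedBall hz)).1
  have hP : 0 ≤ C * 2 * T ^ (1/20 : ℝ) := by positivity
  refine ⟨?_, ?_, ?_⟩
  · have := (hbd s (Metric.mem_closedBall_self (by norm_num))).1
    linarith
  · have := Complex.norm_deriv_le_of_forall_mem_sphere_norm_le (by norm_num) hdc hsph
    refine this.trans ?_
    rw [div_eq_mul_inv]
    norm_num at hP ⊢
    linarith
  · have := Complex.norm_iteratedDeriv_le_of_forall_mem_sphere_norm_le 2 (by norm_num) hdc hsph
    rw [iteratedDeriv_succ, iteratedDeriv_one] at this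
    refine this.trans ?_
    norm_num at hP ⊢
    linarith

end B2

section B3
open Complex MeasureTheory

variable {N : ℕ} [NeZero N]

lemma L_real_bound (χ : DirichletCharacter ℂ N) : ∃ C : ℝ, 0 < C ∧ ∀ x : ℝ, 0 < x → x ≤ 1 →
    ‖χ.LFunction (1 + x)‖ ≤ C / x := by
  obtain ⟨B, hB, hb⟩ := rem_bdd χ
  refine ⟨2 * ‖kap χ‖ + 2 * B, by positivity, ?_⟩
  intro x hx hx1
  rw [L_one χ (s := 1 + x) (by simpa using hx)]
  have h1 : ‖kap χ * (1 + (x:ℂ)) / (1 + x - 1)‖ ≤ 2 * ‖kap χ‖ / x := by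
    rw [add_sub_cancel_left, norm_div, norm_mul, norm_real, Real.norm_of_nonneg hx.le]
    have : ‖1 + (x:ℂ)‖ ≤ 2 := by
      have : (1 + (x:ℂ)) = ((1 + x : ℝ) : ℂ) := by push_cast; ring
      rw [this, norm_real, Real.norm_of_nonneg (by linarith)]; linarith
    refine div_le_div_of_nonneg_right ?_ hx.le
    nlinarith [norm_nonneg (kap χ)]
  have h2 : ‖(1 + (x:ℂ)) * ∫ u in Set.Ioi (1 : ℝ), rem χ u * (u : ℂ) ^ (-(1 + (x:ℂ) + 1))‖ ≤ 2 * B := by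
    have hint : ‖∫ u in Set.Ioi (1 : ℝ), rem χ u * (u : ℂ) ^ (-(1 + (x:ℂ) + 1))‖ ≤ ∫ u in Set.Ioi (1 : ℝ), B * u ^ (-(1 + x + 1)) := by
      apply norm_integral_le_of_norm_le
      · exact (integrableOn_Ioi_rpow_of_lt (by linarith) zero_lt_one).const_mul B
      · filter_upwards [ae_restrict_mem measurableSet_Ioi] with u hu
        have hu0 : 0 < u := zero_lt_one.trans hu
        rw [norm_mul, Complex.norm_cpow_eq_rpow_re_of_pos hu0]
        simp only [neg_re, add_re, one_re, ofReal_re]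
        gcongr
        exact hb u hu0.le
    rw [integral_const_mul, integral_Ioi_rpow_of_lt (by linarith) zero_lt_one] at hint
    have e : -(1:ℝ) ^ (-(1 + x + 1) + 1) / (-(1 + x + 1) + 1) = 1 / (1 + x) := by
      rw [Real.one_rpow, show -(1 + x + 1) + 1 = -(1 + x) by ring, neg_div_neg_eq]
    rw [e] at hint
    have h3 : ‖1 + (x:ℂ)‖ = 1 + x := by
      have : (1 + (x:ℂ)) = ((1 + x : ℝ) : ℂ) := by push_cast; ring
      rw [this, norm_real, Real.norm_of_nonneg (by linarith)]
    rw [norm_mul, h3]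
    calc _ ≤ (1 + x) * (B * (1 / (1 + x))) := by gcongr
      _ = B := by field_simp
      _ ≤ 2 * B := by linarith
  refine (norm_add_le _ _).trans ?_
  rw [add_div]
  have : 2 * B ≤ 2 * B / x := by rw [le_div_iff₀ hx]; nlinarith
  linarith

lemma L_lower (χ : DirichletCharacter ℂ N) : ∃ c : ℝ, 0 < c ∧ ∀ s : ℂ, 1 ≤ s.re → s.re ≤ 2 → 2 ≤ |s.im| →
    c * |s.im| ^ (-(1/5) : ℝ) ≤ ‖χ.LFunction s‖ := by
  obtain ⟨C1, hC1, h1⟩ := L_real_bound (1 : DirichletCharacter ℂ N)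
  obtain ⟨C2, hC2, h2⟩ := L_deriv_bound χ
  obtain ⟨C3, hC3, h3⟩ := L_deriv_bound (χ ^ 2)
  -- c0 ^ 4 = 1 / (C1^3 * C3 * 2)
  obtain ⟨c0, hc0, hc0'⟩ : ∃ c0 : ℝ, 0 < c0 ∧ c0 ^ 4 = 1 / (C1 ^ 3 * (C3 * 2)) := by
    refine ⟨(1 / (C1 ^ 3 * (C3 * 2))) ^ (1/4 : ℝ), by positivity, ?_⟩
    rw [← Real.rpow_natCast, ← Real.rpow_mul (by positivity)]; norm_num
  have hlow : ∀ x y : ℝ, 0 < x → x ≤ 1 → 2 ≤ |y| →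
      c0 ^ 4 * x ^ 3 * |y| ^ (-(1/20) : ℝ) ≤ ‖χ.LFunction (1 + x + I * y)‖ ^ 4 := by
    intro x y hx hx1 hy
    have hp := χ.norm_LFunction_product_ge_one hx y
    rw [norm_mul, norm_mul, norm_pow, norm_pow] at hp
    have a1 := h1 x hx hx1
    have a3 := (h3 (1 + x + 2 * I * y) (by simp; linarith) (by simp; linarith) (by simp [abs_mul]; linarith)).1
    have e : (1 + (x:ℂ) + 2 * I * y).im = 2 * y := by simp
    rw [e, abs_mul, abs_two] at a3
    have hy0 : 0 < |y| := by linarith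
    have a4 : (2 * |y|) ^ (1/20 : ℝ) ≤ 2 * |y| ^ (1/20 : ℝ) := by
      rw [Real.mul_rpow (by norm_num) (by linarith)]
      gcongr
      calc (2:ℝ) ^ (1/20 : ℝ) ≤ 2 ^ (1:ℝ) := Real.rpow_le_rpow_of_exponent_le (by norm_num) (by norm_num)
        _ = 2 := by simp
    have a5 : ‖(χ ^ 2).LFunction (1 + x + 2 * I * y)‖ ≤ C3 * (2 * |y| ^ (1/20 : ℝ)) := a3.trans (by gcongr)
    set Z := ‖χ.LFunction (1 + x + I * y)‖ ^ 4 with hZ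
    have hZ0 : 0 ≤ Z := by positivity
    set W := |y| ^ (1/20 : ℝ) with hW
    have hW0 : 0 < W := by positivity
    have hp2 : 1 ≤ (C1 / x) ^ 3 * Z * (C3 * (2 * W)) := by
      refine hp.trans ?_
      have : ‖DirichletCharacter.LFunctionTrivChar N (1 + x)‖ ≤ C1 / x := a1
      gcongr
    rw [Real.rpow_neg hy0.le, ← hW, hc0']
    rw [div_mul_eq_mul_div, one_mul, ← div_eq_mul_inv, div_div, div_le_iff₀ (by positivity)]
    have e2 : (C1 / x) ^ 3 * Z * (C3 * (2 * W)) = Z * (C1 ^ 3 * (C3 * 2) * W) / x ^ 3 := by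
      field_simp
    rw [e2, le_div_iff₀ (by positivity)] at hp2
    linarith
  set η := min 1 (c0 / (2 * C2)) with hη
  have hη0 : 0 < η := by positivity
  have hη1 : η ≤ 1 := min_le_left _ _
  have hη2 : η * (2 * C2) ≤ c0 := by
    have : η ≤ c0 / (2 * C2) := min_le_right _ _
    rwa [le_div_iff₀ (by positivity)] at this
  refine ⟨c0 * η ^ 3 / 2, by positivity, ?_⟩
  intro s hs1 hs2 hT
  set T := |s.im| with hTd
  have hT0 : 0 < T := by linarith
  set x0 := η ^ 4 * T ^ (-(1/4) : ℝ) with hx0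
  have hx0p : 0 < x0 := by positivity
  have hx01 : x0 ≤ 1 := by
    have : T ^ (-(1/4) : ℝ) ≤ 1 := Real.rpow_le_one_of_one_le_of_nonpos (by linarith) (by norm_num)
    have h4 : η ^ 4 ≤ 1 := pow_le_one₀ hη0.le hη1
    exact mul_le_one₀ h4 (by positivity) this
  have hbig : ∀ x : ℝ, x0 ≤ x → x ≤ 1 → c0 * η ^ 3 * T ^ (-(1/5) : ℝ) ≤ ‖χ.LFunction (1 + x + I * s.im)‖ := by
    intro x hx hx1
    have := hlow x s.im (by linarith) hx1 hT
    refine le_of_pow_le_pow_left₀ (n := 4) (by norm_num) (norm_nonneg _) (le_trans ?_ this)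
    calc (c0 * η ^ 3 * T ^ (-(1/5) : ℝ)) ^ 4 = c0 ^ 4 * x0 ^ 3 * T ^ (-(1/20) : ℝ) := by
          rw [hx0, mul_pow, mul_pow, mul_pow, ← Real.rpow_natCast (T ^ (-(1/5) : ℝ)), ← Real.rpow_natCast (T ^ (-(1/4) : ℝ)), ← Real.rpow_mul hT0.le, ← Real.rpow_mul hT0.le]
          have : T ^ (-(1 / 5) * ((4:ℕ):ℝ)) = T ^ (-(1 / 4) * ((3:ℕ):ℝ)) * T ^ (-(1/20) : ℝ) := by
            rw [← Real.rpow_add hT0]; norm_num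
          rw [this]; ring
      _ ≤ _ := by gcongr
  have hse : s = 1 + ((s.re - 1 : ℝ) : ℂ) + I * s.im := by
    apply Complex.ext <;> simp
  rcases le_or_gt x0 (s.re - 1) with hcase | hcase
  · have := hbig (s.re - 1) hcase (by linarith)
    rw [← hse] at this
    have : 0 ≤ c0 * η ^ 3 * T ^ (-(1/5) : ℝ) := by positivity
    linarith
  · have hb := hbig x0 le_rfl hx01
    set z : ℂ := 1 + x0 + I * s.im with hz
    -- mean value
    have hmv : ‖χ.LFunction z - χ.LFunction s‖ ≤ C2 * T ^ (1/20 : ℝ) * ‖z - s‖ := by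
      have hconv : Convex ℝ {w : ℂ | w.re ∈ Set.Icc 1 2 ∧ w.im = s.im} := by
        intro a ha b hb' p q hp hq hpq
        obtain ⟨⟨ha1, ha2⟩, ha3⟩ := ha
        obtain ⟨⟨hb1, hb2⟩, hb3⟩ := hb'
        refine ⟨⟨?_, ?_⟩, ?_⟩ <;> simp
        · nlinarith
        · nlinarith
        · rw [ha3, hb3, ← add_mul, hpq, one_mul]
      refine hconv.norm_image_sub_le_of_norm_deriv_le (f := χ.LFunction) (𝕜 := ℂ) (C := C2 * T ^ (1/20 : ℝ)) ?_ ?_ ?_ ?_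
      · intro w hw
        apply χ.differentiableAt_LFunction w (Or.inl _)
        rintro rfl
        have := hw.2
        simp at this
        rw [hTd, ← this] at hT; simp at hT; linarith
      · intro w hw
        have := (h2 w hw.1.1 (by linarith [hw.1.2]) (by rw [hw.2]; exact hT)).2.1
        rwa [hw.2] at this
      · exact ⟨⟨hs1, hs2⟩, rfl⟩
      · refine ⟨⟨?_, ?_⟩, ?_⟩ <;> simp [hz] <;> linarith
    have hzs : ‖z - s‖ ≤ x0 := by
      have : z - s = ((x0 - (s.re - 1) : ℝ) : ℂ) := by
        rw [hz]; conv_lhs => rw [hse]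
        push_cast; simp; ring
      rw [this, norm_real, Real.norm_of_nonneg (by linarith)]; linarith
    have htri : ‖χ.LFunction z‖ - ‖χ.LFunction z - χ.LFunction s‖ ≤ ‖χ.LFunction s‖ := by
      have := norm_sub_norm_le (χ.LFunction z) (χ.LFunction s)
      linarith
    have hfin : C2 * T ^ (1/20 : ℝ) * ‖z - s‖ ≤ c0 * η ^ 3 / 2 * T ^ (-(1/5) : ℝ) := by
      calc _ ≤ C2 * T ^ (1/20 : ℝ) * x0 := by gcongr
        _ = (η * (2 * C2)) * η ^ 3 / 2 * T ^ (-(1/5) : ℝ) := by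
          rw [hx0]
          have : T ^ (-(1/5) : ℝ) = T ^ (1/20 : ℝ) * T ^ (-(1/4) : ℝ) := by
            rw [← Real.rpow_add hT0]; norm_num
          rw [this]; ring
        _ ≤ _ := by gcongr
    linarith

end B3

section B4
open Complex MeasureTheory DirichletCharacter

variable {N : ℕ} [NeZero N]

/-- the regularized log derivative -/
noncomputable def Fd (χ : DirichletCharacter ℂ N) (s : ℂ) : ℂ :=
  - logDeriv (LFunctionTrivChar₁ N) s - logDeriv (χ.LFunction) s

lemma deriv_logDeriv_eq {f : ℂ → ℂ} {s : ℂ} (hf : AnalyticAt ℂ f s) (h0 : f s ≠ 0) :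
    deriv (logDeriv f) s = deriv (deriv f) s / f s - (deriv f s / f s) ^ 2 := by
  have h1 := hf.deriv.differentiableAt.hasDerivAt
  have h2 := hf.differentiableAt.hasDerivAt
  have := (h1.div h2 h0).deriv
  have e : logDeriv f = fun z => deriv f z / f z := by ext z; rw [logDeriv_apply]
  rw [e]
  refine this.trans ?_
  field_simp

lemma LogD_bound (χ : DirichletCharacter ℂ N) : ∃ C : ℝ, 0 < C ∧ ∀ s : ℂ, 1 ≤ s.re → s.re ≤ 2 → 2 ≤ |s.im| →
    ‖logDeriv χ.LFunction s‖ ≤ C * |s.im| ^ (1/2 : ℝ) ∧ ‖deriv (logDeriv χ.LFunction) s‖ ≤ C * |s.im| ^ (1/2 : ℝ) := by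
  obtain ⟨C, hC, h⟩ := L_deriv_bound χ
  obtain ⟨c, hc, hl⟩ := L_lower χ
  refine ⟨C / c + (C / c) ^ 2, by positivity, ?_⟩
  intro s h1 h2 hT
  obtain ⟨a0, a1, a2⟩ := h s h1 (by linarith) hT
  have b := hl s h1 h2 hT
  have hs1 : s ≠ 1 := by rintro rfl; simp at hT; linarith
  set T := |s.im| with hTd
  have hT0 : 0 < T := by linarith
  have hL0 : χ.LFunction s ≠ 0 := by
    rw [← norm_pos_iff]; exact lt_of_lt_of_le (by positivity) b
  have hT4 : T ^ (1/20 : ℝ) / T ^ (-(1/5) : ℝ) = T ^ (1/4 : ℝ) := by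
    rw [← Real.rpow_sub hT0]; norm_num
  have hT42 : T ^ (1/4 : ℝ) ≤ T ^ (1/2 : ℝ) := Real.rpow_le_rpow_of_exponent_le (by linarith) (by norm_num)
  have hT44 : (T ^ (1/4 : ℝ)) ^ 2 = T ^ (1/2 : ℝ) := by
    rw [← Real.rpow_natCast, ← Real.rpow_mul hT0.le]; norm_num
  have hq : ∀ w : ℂ, ‖w‖ ≤ C * T ^ (1/20 : ℝ) → ‖w / χ.LFunction s‖ ≤ C / c * T ^ (1/4 : ℝ) := by
    intro w hw
    rw [norm_div, ← hT4, div_mul_div_comm]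
    gcongr
  have hq1 := hq _ a1
  have hq2 := hq _ a2
  have han : AnalyticAt ℂ χ.LFunction s := by
    rw [analyticAt_iff_eventually_differentiableAt]
    filter_upwards [isOpen_ne.mem_nhds hs1] with z hz
    exact χ.differentiableAt_LFunction z (Or.inl hz)
  refine ⟨?_, ?_⟩
  · rw [logDeriv_apply]
    refine hq1.trans ?_
    calc C / c * T ^ (1/4 : ℝ) ≤ C / c * T ^ (1/2 : ℝ) := by gcongr
      _ ≤ _ := by gcongr; linarith [sq_nonneg (C/c)]
  · rw [deriv_logDeriv_eq han hL0]
    refine (norm_sub_le _ _).trans ?_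
    rw [norm_pow, add_mul]
    gcongr
    · exact hq2.trans (by gcongr)
    · calc _ ≤ (C / c * T ^ (1/4 : ℝ)) ^ 2 := by gcongr
        _ = _ := by rw [mul_pow, hT44]

lemma Fd_analyticAt {χ : DirichletCharacter ℂ N} (hχ : χ ≠ 1) {s : ℂ} (hs : 1 ≤ s.re) : AnalyticAt ℂ (Fd χ) s := by
  have h1 : AnalyticAt ℂ (LFunctionTrivChar₁ N) s := (differentiable_LFunctionTrivChar₁ N).analyticAt s
  have h2 : AnalyticAt ℂ χ.LFunction s := (differentiable_LFunction hχ).analyticAt s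
  have n1 : LFunctionTrivChar₁ N s ≠ 0 := by
    rcases eq_or_ne s 1 with rfl | hw'
    · exact LFunctionTrivChar₁_apply_one_ne_zero _
    · rw [LFunctionTrivChar₁, Function.update_of_ne hw', mul_ne_zero_iff]
      exact ⟨sub_ne_zero_of_ne hw', LFunction_ne_zero_of_one_le_re _ (Or.inr hw') hs⟩
  have n2 : χ.LFunction s ≠ 0 := LFunction_ne_zero_of_one_le_re χ (Or.inl hχ) hs
  have e : Fd χ = fun z => -(deriv (LFunctionTrivChar₁ N) z / LFunctionTrivChar₁ N z) - deriv χ.LFunction z / χ.LFunction z := by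
    ext z; rw [Fd, logDeriv_apply, logDeriv_apply]
  rw [e]
  exact ((h1.deriv.div h1 n1).neg).sub (h2.deriv.div h2 n2)

lemma Fd_bound {χ : DirichletCharacter ℂ N} (hχ : χ ≠ 1) : ∃ C : ℝ, 0 < C ∧ ∀ s : ℂ, 1 ≤ s.re → s.re ≤ 2 →
    ‖Fd χ s‖ ≤ C * (1 + |s.im|) ^ (1/2 : ℝ) ∧ ‖deriv (Fd χ) s‖ ≤ C * (1 + |s.im|) ^ (1/2 : ℝ) := by
  obtain ⟨C1, hC1, h1⟩ := LogD_bound (1 : DirichletCharacter ℂ N)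
  obtain ⟨C2, hC2, h2⟩ := LogD_bound χ
  have hK : IsCompact (Set.Icc (1:ℝ) 2 ×ℂ Set.Icc (-2:ℝ) 2) := isCompact_Icc.reProdIm isCompact_Icc
  obtain ⟨C3, hC3⟩ := hK.exists_bound_of_continuousOn (f := Fd χ) (fun s hs =>
    (Fd_analyticAt hχ (Complex.mem_reProdIm.1 hs).1.1).continuousAt.continuousWithinAt)
  obtain ⟨C4, hC4⟩ := hK.exists_bound_of_continuousOn (f := deriv (Fd χ)) (fun s hs =>
    (Fd_analyticAt hχ (Complex.mem_reProdIm.1 hs).1.1).deriv.continuousAt.continuousWithinAt)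
  refine ⟨1 + C1 + C2 + |C3| + |C4|, by positivity, ?_⟩
  intro s hs1 hs2
  have hone : 1 ≤ (1 + |s.im|) ^ (1/2 : ℝ) := Real.one_le_rpow (by linarith [abs_nonneg s.im]) (by norm_num)
  rcases le_or_gt |s.im| 2 with hT | hT
  · have hm : s ∈ (Set.Icc (1:ℝ) 2 ×ℂ Set.Icc (-2:ℝ) 2) := Complex.mem_reProdIm.2 ⟨⟨hs1, hs2⟩, abs_le.1 hT⟩
    have b3 := (hC3 s hm).trans (le_abs_self _)
    have b4 := (hC4 s hm).trans (le_abs_self _)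
    have hb : (1 + C1 + C2 + |C3| + |C4|) * 1 ≤ (1 + C1 + C2 + |C3| + |C4|) * (1 + |s.im|) ^ (1/2 : ℝ) := by gcongr
    constructor
    · linarith [abs_nonneg C4]
    · linarith [abs_nonneg C3]
  · have hne : s ≠ 1 := by rintro rfl; simp at hT; linarith
    have hT0 : 0 < |s.im| := by linarith
    have hev : LFunctionTrivChar₁ N =ᶠ[nhds s] fun z => (z - 1) * LFunction (1 : DirichletCharacter ℂ N) z := by
      filter_upwards [isOpen_ne.mem_nhds hne] with z hz
      rw [LFunctionTrivChar₁, Function.update_of_ne hz]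
    have hlog : ∀ᶠ z in nhds s, logDeriv (LFunctionTrivChar₁ N) z = 1 / (z - 1) + logDeriv (LFunction (1 : DirichletCharacter ℂ N)) z := by
      have hL0 : ∀ᶠ z in nhds s, LFunction (1 : DirichletCharacter ℂ N) z ≠ 0 :=
        (differentiableAt_LFunction _ s (Or.inl hne)).continuousAt.eventually_ne
          (LFunction_ne_zero_of_one_le_re _ (Or.inr hne) hs1)
      filter_upwards [isOpen_ne.mem_nhds hne, hev.eventuallyEq_nhds, hL0] with z hz hz2 hz3
      have : logDeriv (LFunctionTrivChar₁ N) z = logDeriv (fun z => (z - 1) * LFunction (1 : DirichletCharacter ℂ N) z) z := by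
        rw [logDeriv_apply, logDeriv_apply, hz2.deriv_eq, hz2.eq_of_nhds]
      rw [this, logDeriv_mul (f := fun z => z - 1) z (sub_ne_zero.2 hz) hz3 (by fun_prop) (differentiableAt_LFunction _ z (Or.inl hz))]
      congr 1
      rw [logDeriv_apply]; simp
    have hs10 : s - 1 ≠ 0 := sub_ne_zero.2 hne
    have hsm : 1 ≤ ‖s - 1‖ := by
      have := Complex.abs_im_le_norm (s - 1)
      simp at this; linarith
    have hinv : ‖1 / (s - 1)‖ ≤ 1 := by
      rw [norm_div, norm_one]; exact div_le_one_of_le₀ hsm (norm_nonneg _)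
    have hinv2 : ‖-1 / (s - 1) ^ 2‖ ≤ 1 := by
      rw [norm_div, norm_neg, norm_one, norm_pow]; exact div_le_one_of_le₀ (one_le_pow₀ hsm) (by positivity)
    obtain ⟨p1, p2⟩ := h1 s hs1 hs2 hT.le
    obtain ⟨q1, q2⟩ := h2 s hs1 hs2 hT.le
    have hTle : |s.im| ^ (1/2 : ℝ) ≤ (1 + |s.im|) ^ (1/2 : ℝ) := Real.rpow_le_rpow hT0.le (by linarith) (by norm_num)
    set W := (1 + |s.im|) ^ (1/2 : ℝ)
    have hfin : 1 + C1 * |s.im| ^ (1/2 : ℝ) + C2 * |s.im| ^ (1/2 : ℝ) ≤ (1 + C1 + C2 + |C3| + |C4|) * W := by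
      have := mul_le_mul_of_nonneg_left hTle hC1.le
      have := mul_le_mul_of_nonneg_left hTle hC2.le
      have : 0 ≤ (|C3| + |C4|) * W := by positivity
      nlinarith
    have hanL : ∀ ψ : DirichletCharacter ℂ N, AnalyticAt ℂ ψ.LFunction s := by
      intro ψ
      rw [analyticAt_iff_eventually_differentiableAt]
      filter_upwards [isOpen_ne.mem_nhds hne] with z hz
      exact ψ.differentiableAt_LFunction z (Or.inl hz)
    have hld : ∀ ψ : DirichletCharacter ℂ N, DifferentiableAt ℂ (logDeriv ψ.LFunction) s := by
      intro ψ
      have e : logDeriv ψ.LFunction = fun z => deriv ψ.LFunction z / ψ.LFunction z := by ext z; rw [logDeriv_apply]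
      rw [e]
      exact ((hanL ψ).deriv.div (hanL ψ) (LFunction_ne_zero_of_one_le_re ψ (Or.inr hne) hs1)).differentiableAt
    have hFd : Fd χ =ᶠ[nhds s] fun z => -(1 / (z - 1) + logDeriv (LFunction (1 : DirichletCharacter ℂ N)) z) - logDeriv χ.LFunction z := by
      filter_upwards [hlog] with z hz
      rw [Fd, hz]
    constructor
    · rw [hFd.eq_of_nhds]
      refine le_trans ?_ hfin
      refine (norm_sub_le _ _).trans (add_le_add ?_ q1)
      rw [norm_neg]
      exact (norm_add_le _ _).trans (add_le_add hinv p1)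
    · rw [hFd.deriv_eq]
      have d1 : HasDerivAt (fun z : ℂ => 1 / (z - 1)) (-1 / (s - 1) ^ 2) s := by
        have := ((hasDerivAt_id s).sub_const 1).inv hs10
        simpa using! this
      have d2 := ((d1.add (hld 1).hasDerivAt).neg.sub (hld χ).hasDerivAt).deriv
      have d3 : deriv (fun z => -(1 / (z - 1) + logDeriv (LFunction (1 : DirichletCharacter ℂ N)) z) - logDeriv χ.LFunction z) s = _ := d2
      rw [d3]
      refine le_trans ?_ hfin
      refine (norm_sub_le _ _).trans (add_le_add ?_ q2)
      rw [norm_neg]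
      exact (norm_add_le _ _).trans (add_le_add hinv2 p2)

end B4

section B5
open Complex MeasureTheory DirichletCharacter Set
open scoped ArithmeticFunction Topology

lemma hinge_aux {c : ℝ} (hc : 0 < c) {s : ℂ} (hs : 0 < s.re) :
    IntegrableOn (fun u : ℝ => (u:ℂ) ^ (-s - 1 - 1) • ((max (u - c) 0 : ℝ) : ℂ)) (Ioi 0) ∧
    ∫ u in Ioi (0:ℝ), (u:ℂ) ^ (-s - 1 - 1) • ((max (u - c) 0 : ℝ) : ℂ) = (c:ℂ) ^ (-s) / (s * (s + 1)) := by
  have hs0 : s ≠ 0 := by rintro rfl; simp at hs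
  have hs1 : s + 1 ≠ 0 := by
    intro h; have := congrArg re h; simp at this; linarith
  have e : (Ioi (0:ℝ)).indicator (fun u : ℝ => (u:ℂ) ^ (-s - 1 - 1) • ((max (u - c) 0 : ℝ) : ℂ))
      = (Ioi c).indicator (fun u : ℝ => (u:ℂ) ^ (-s - 1) - c * (u:ℂ) ^ (-s - 1 - 1)) := by
    ext u
    by_cases h : c < u
    · have h0 : 0 < u := hc.trans h
      rw [indicator_of_mem (by exact h0), indicator_of_mem (by exact h), max_eq_left (by linarith)]
      have : (u:ℂ) ^ (-s - 1) = (u:ℂ) ^ (-s - 1 - 1) * u := by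
        rw [cpow_sub (-s-1) 1 (by exact_mod_cast h0.ne'), cpow_one]
        have : (u:ℂ) ≠ 0 := by exact_mod_cast h0.ne'
        field_simp
      rw [this]; push_cast; simp only [smul_eq_mul]; ring
    · rw [indicator_of_notMem (s := Ioi c) (by exact h)]
      by_cases h0 : 0 < u
      · rw [indicator_of_mem (by exact h0), max_eq_right (by linarith)]; simp
      · rw [indicator_of_notMem (by exact h0)]
  have i1 := integrableOn_Ioi_cpow_of_lt (a := -s - 1) (by simp; linarith) hc
  have i2 := integrableOn_Ioi_cpow_of_lt (a := -s - 1 - 1) (by simp; linarith) hc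
  constructor
  · rw [← integrable_indicator_iff measurableSet_Ioi, e, integrable_indicator_iff measurableSet_Ioi]
    exact i1.sub (i2.const_mul _)
  · rw [← integral_indicator measurableSet_Ioi, e, integral_indicator measurableSet_Ioi]
    rw [integral_sub i1 (i2.const_mul _), integral_const_mul,
      integral_Ioi_cpow_of_lt (by simp; linarith) hc, integral_Ioi_cpow_of_lt (by simp; linarith) hc]
    have h1 : -s - 1 + 1 = -s := by ring
    have h2 : -s - 1 - 1 + 1 = -s - 1 := by ring
    rw [h1, h2, cpow_sub _ _ (by exact_mod_cast hc.ne'), cpow_one]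
    have : (c:ℂ) ≠ 0 := by exact_mod_cast hc.ne'
    have h3 : -s - 1 ≠ 0 := by
      intro h; apply hs1; linear_combination -h
    have h4 : -s ≠ 0 := neg_ne_zero.mpr hs0
    field_simp
    ring

lemma sq_hinge_aux {s : ℂ} (hs : 1 < s.re) :
    IntegrableOn (fun u : ℝ => (u:ℂ) ^ (-s - 1 - 1) • (((max (u - 1) 0)^2/2 : ℝ) : ℂ)) (Ioi 0) ∧
    ∫ u in Ioi (0:ℝ), (u:ℂ) ^ (-s - 1 - 1) • (((max (u - 1) 0)^2/2 : ℝ) : ℂ) = 1 / (s - 1) / (s * (s + 1)) := by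
  have hs0 : s ≠ 0 := by rintro rfl; simp at hs; linarith
  have hs1 : s + 1 ≠ 0 := by
    intro h; have := congrArg re h; simp at this; linarith
  have hs2 : s - 1 ≠ 0 := by
    intro h; have := congrArg re h; simp at this; linarith
  have e : (Ioi (0:ℝ)).indicator (fun u : ℝ => (u:ℂ) ^ (-s - 1 - 1) • (((max (u - 1) 0)^2/2 : ℝ) : ℂ))
      = (Ioi 1).indicator (fun u : ℝ => 1/2 * (u:ℂ) ^ (-s) - (u:ℂ) ^ (-s - 1) + 1/2 * (u:ℂ) ^ (-s - 1 - 1)) := by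
    ext u
    by_cases h : 1 < u
    · have h0 : 0 < u := by linarith
      rw [indicator_of_mem (by exact h0), indicator_of_mem (by exact h), max_eq_left (by linarith)]
      have h5 : (u:ℂ) ^ (-s - 1) = (u:ℂ) ^ (-s - 1 - 1) * u := by
        rw [cpow_sub (-s-1) 1 (by exact_mod_cast h0.ne'), cpow_one]
        have : (u:ℂ) ≠ 0 := by exact_mod_cast h0.ne'
        field_simp
      have h6 : (u:ℂ) ^ (-s) = (u:ℂ) ^ (-s - 1) * u := by
        rw [cpow_sub _ _ (by exact_mod_cast h0.ne'), cpow_one]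
        have : (u:ℂ) ≠ 0 := by exact_mod_cast h0.ne'
        field_simp
      rw [h6, h5]; push_cast; simp only [smul_eq_mul]; ring
    · rw [indicator_of_notMem (s := Ioi 1) (by exact h)]
      by_cases h0 : 0 < u
      · rw [indicator_of_mem (by exact h0), max_eq_right (by linarith)]; simp
      · rw [indicator_of_notMem (by exact h0)]
  have i0 := integrableOn_Ioi_cpow_of_lt (a := -s) (by simp; linarith) one_pos
  have i1 := integrableOn_Ioi_cpow_of_lt (a := -s - 1) (by simp; linarith) one_pos
  have i2 := integrableOn_Ioi_cpow_of_lt (a := -s - 1 - 1) (by simp; linarith) one_pos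
  constructor
  · rw [← integrable_indicator_iff measurableSet_Ioi, e, integrable_indicator_iff measurableSet_Ioi]
    exact ((i0.const_mul _).sub i1).add (i2.const_mul _)
  · rw [← integral_indicator measurableSet_Ioi, e, integral_indicator measurableSet_Ioi]
    have i01 : IntegrableOn (fun t : ℝ => 1/2 * (t:ℂ) ^ (-s) - (t:ℂ) ^ (-s-1)) (Ioi 1) := (i0.const_mul _).sub i1
    rw [integral_add i01 (i2.const_mul _), integral_sub (i0.const_mul _) i1,
      integral_const_mul, integral_const_mul, integral_Ioi_cpow_of_lt (by simp; linarith) one_pos,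
      integral_Ioi_cpow_of_lt (by simp; linarith) one_pos, integral_Ioi_cpow_of_lt (by simp; linarith) one_pos]
    simp only [ofReal_one, one_cpow]
    have h1 : -s - 1 + 1 = -s := by ring
    have h2 : -s - 1 - 1 + 1 = -(s + 1) := by ring
    have h3 : -s + 1 = -(s - 1) := by ring
    rw [h1, h2, h3]
    field_simp
    ring

set_option linter.unusedSectionVars false
variable {N : ℕ} [NeZero N]

/-- coefficients -/
noncomputable def av (χ : DirichletCharacter ℂ N) (n : ℕ) : ℂ :=
  ((1 : DirichletCharacter ℂ N) n + χ n) * (Λ n : ℝ)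

lemma av_norm (χ : DirichletCharacter ℂ N) (n : ℕ) : ‖av χ n‖ ≤ 2 * Λ n := by
  unfold av
  rw [norm_mul, Complex.norm_real, Real.norm_eq_abs, abs_of_nonneg ArithmeticFunction.vonMangoldt_nonneg]
  have := ArithmeticFunction.vonMangoldt_nonneg (n := n)
  have h1 := (1 : DirichletCharacter ℂ N).norm_le_one n
  have h2 := χ.norm_le_one n
  gcongr
  exact (norm_add_le _ _).trans (by linarith)

/-- smoothed sum -/
noncomputable def Fs (χ : DirichletCharacter ℂ N) (u : ℝ) : ℂ :=
  ∑' n : ℕ, av χ n * ((max (u - n) 0 : ℝ) : ℂ)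

lemma Fs_eq (χ : DirichletCharacter ℂ N) {u : ℝ} {M : ℕ} (h : u ≤ M) :
    Fs χ u = ∑ n ∈ Finset.range M, av χ n * ((max (u - n) 0 : ℝ) : ℂ) := by
  unfold Fs
  apply tsum_eq_sum
  intro n hn
  simp at hn
  have : (M:ℝ) ≤ n := by exact_mod_cast hn
  rw [max_eq_right (by linarith)]; simp

lemma Fs_cont (χ : DirichletCharacter ℂ N) : Continuous (Fs χ) := by
  rw [continuous_iff_continuousAt]
  intro u
  obtain ⟨M, hM⟩ := exists_nat_gt u
  have : (fun u : ℝ => ∑ n ∈ Finset.range M, av χ n * ((max (u - n) 0 : ℝ) : ℂ)) =ᶠ[𝓝 u] Fs χ := by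
    filter_upwards [gt_mem_nhds hM] with v hv
    rw [Fs_eq χ hv.le]
  refine ContinuousAt.congr ?_ this
  fun_prop

lemma Fs_bound (χ : DirichletCharacter ℂ N) : ∃ C : ℝ, 0 < C ∧ ∀ u : ℝ, 0 ≤ u → ‖Fs χ u‖ ≤ C * u ^ 2 := by
  refine ⟨2 * (Real.log 4 + 4), by positivity, ?_⟩
  intro u hu
  have h1 : u ≤ (⌊u⌋₊ + 1 : ℕ) := by push_cast; exact (Nat.lt_floor_add_one u).le
  rw [Fs_eq χ h1]
  have := Chebyshev.psi_le_const_mul_self hu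
  rw [Chebyshev.psi_eq_sum_Icc] at this
  have h2 : Finset.range (⌊u⌋₊ + 1) = Finset.Icc 0 ⌊u⌋₊ := by ext; simp
  calc _ ≤ ∑ n ∈ Finset.range (⌊u⌋₊ + 1), 2 * u * Λ n := by
        refine (norm_sum_le _ _).trans (Finset.sum_le_sum fun n _ => ?_)
        rw [norm_mul, Complex.norm_real, Real.norm_eq_abs, abs_of_nonneg (le_max_right _ _)]
        have h3 : max (u - n) 0 ≤ u := by
          apply max_le _ hu
          have : (0:ℝ) ≤ n := by positivity
          linarith
        calc _ ≤ (2 * Λ n) * u := by gcongr; exact av_norm χ n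
          _ = _ := by ring
    _ = 2 * u * ∑ n ∈ Finset.Icc 0 ⌊u⌋₊, Λ n := by rw [← Finset.mul_sum, h2]
    _ ≤ 2 * u * ((Real.log 4 + 4) * u) := by gcongr
    _ = _ := by ring

lemma Fs_zero (χ : DirichletCharacter ℂ N) {u : ℝ} (h : u ≤ 1) : Fs χ u = 0 := by
  rw [Fs_eq χ (M := 1) (by simpa using h)]
  simp [av]

open scoped LSeries.notation in
lemma LS_av (χ : DirichletCharacter ℂ N) {s : ℂ} (hs : 1 < s.re) :
    HasSum (fun n : ℕ => av χ n * (n:ℂ) ^ (-s)) (Fd χ s + 1 / (s - 1)) := by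
  have a1 := LSeriesSummable_twist_vonMangoldt (1 : DirichletCharacter ℂ N) hs
  have a2 := LSeriesSummable_twist_vonMangoldt χ hs
  have e1 := LSeries_twist_vonMangoldt_eq (1 : DirichletCharacter ℂ N) hs
  have e2 := LSeries_twist_vonMangoldt_eq χ hs
  have h := a1.hasSum.add a2.hasSum
  have hs₁ : s ≠ 1 := by rintro rfl; simp at hs
  convert h using 1
  · ext n
    rcases eq_or_ne n 0 with rfl | hn
    · simp [av]
    · rw [LSeries.term_of_ne_zero hn, LSeries.term_of_ne_zero hn, cpow_neg]
      simp only [av, Pi.mul_apply]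
      ring
  · change _ = LSeries _ s + LSeries _ s
    rw [e1, e2, ← deriv_LFunction_eq_deriv_LSeries _ hs, ← deriv_LFunction_eq_deriv_LSeries _ hs,
      ← LFunction_eq_LSeries _ hs, ← LFunction_eq_LSeries _ hs]
    unfold Fd
    rw [logDeriv_apply, logDeriv_apply, deriv_LFunctionTrivChar₁_apply_of_ne_one _ hs₁, LFunctionTrivChar₁,
      Function.update_of_ne hs₁, LFunctionTrivChar]
    have := LFunction_ne_zero_of_one_le_re (1 : DirichletCharacter ℂ N) (.inr hs₁) hs.le
    have h2 := LFunction_ne_zero_of_one_le_re χ (.inr hs₁) hs.le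
    have h3 := sub_ne_zero_of_ne hs₁
    field_simp
    ring

end B5

section B6
open Complex MeasureTheory DirichletCharacter Set
open scoped ArithmeticFunction Topology

set_option linter.unusedSectionVars false
variable {N : ℕ} [NeZero N]

/-- error term -/
noncomputable def Dl (χ : DirichletCharacter ℂ N) (u : ℝ) : ℂ := Fs χ u - (((max (u - 1) 0)^2/2 : ℝ) : ℂ)

noncomputable def Ed (χ : DirichletCharacter ℂ N) (s : ℂ) : ℂ := Fd χ s / (s * (s + 1))

lemma Dl_cont (χ : DirichletCharacter ℂ N) : Continuous (Dl χ) := by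
  have := Fs_cont χ
  unfold Dl
  fun_prop

lemma Fs_top (χ : DirichletCharacter ℂ N) : Fs χ =O[atTop] (fun x : ℝ => x ^ (-(-2:ℝ))) := by
  obtain ⟨C, _, h⟩ := Fs_bound χ
  refine Asymptotics.IsBigO.of_bound C ?_
  filter_upwards [eventually_ge_atTop 0] with u hu
  rw [Real.norm_eq_abs, abs_of_nonneg (by positivity), neg_neg]
  exact_mod_cast h u hu

lemma sq_top : (fun u : ℝ => (((max (u - 1) 0)^2/2 : ℝ) : ℂ)) =O[atTop] (fun x : ℝ => x ^ (-(-2:ℝ))) := by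
  refine Asymptotics.IsBigO.of_bound 1 ?_
  filter_upwards [eventually_ge_atTop 1] with u hu
  rw [Real.norm_eq_abs, abs_of_nonneg (by positivity), neg_neg, Complex.norm_real, Real.norm_eq_abs,
    abs_of_nonneg (by positivity), max_eq_left (by linarith)]
  norm_cast
  nlinarith

lemma bot_of_zero {f : ℝ → ℂ} (h : ∀ u ≤ 1, f u = 0) (b : ℝ) : f =O[𝓝[>] 0] (fun x : ℝ => x ^ (-b)) := by
  refine Asymptotics.IsBigO.of_bound 1 ?_
  filter_upwards [Ioo_mem_nhdsGT (show (0:ℝ) < 1 by norm_num)] with u hu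
  rw [h u hu.2.le]; simp

lemma Dl_zero (χ : DirichletCharacter ℂ N) {u : ℝ} (h : u ≤ 1) : Dl χ u = 0 := by
  unfold Dl
  rw [Fs_zero χ h, max_eq_right (by linarith)]; simp

lemma Dl_top (χ : DirichletCharacter ℂ N) : Dl χ =O[atTop] (fun x : ℝ => x ^ (-(-2:ℝ))) :=
  (Fs_top χ).sub sq_top

lemma mellin_Fs (χ : DirichletCharacter ℂ N) {s : ℂ} (hs : 1 < s.re) :
    mellin (Fs χ) (-s - 1) = (Fd χ s + 1 / (s - 1)) / (s * (s + 1)) := by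
  have hs0 : 0 < s.re := by linarith
  set σ := s.re with hσ
  have hint : ∀ n : ℕ, Integrable (fun u : ℝ => (u:ℂ) ^ (-s - 1 - 1) • (av χ n * ((max (u - n) 0 : ℝ) : ℂ)))
      (volume.restrict (Ioi 0)) ∧
      ∫ u in Ioi (0:ℝ), (u:ℂ) ^ (-s - 1 - 1) • (av χ n * ((max (u - n) 0 : ℝ) : ℂ)) =
        av χ n * (n:ℂ) ^ (-s) / (s * (s + 1)) := by
    intro n
    rcases Nat.eq_zero_or_pos n with rfl | hn
    · simp [av]
    · have hn' : (0:ℝ) < n := by exact_mod_cast hn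
      obtain ⟨h1, h2⟩ := hinge_aux hn' (s := s) hs0
      have e : (fun u : ℝ => (u:ℂ) ^ (-s - 1 - 1) • (av χ n * ((max (u - n) 0 : ℝ) : ℂ))) =
        fun u : ℝ => av χ n * ((u:ℂ) ^ (-s - 1 - 1) • ((max (u - n) 0 : ℝ) : ℂ)) := by
        ext u; simp only [smul_eq_mul]; ring
      rw [e]
      refine ⟨h1.const_mul _, ?_⟩
      rw [integral_const_mul, h2]
      push_cast; ring
  have hnorm : ∀ n : ℕ, ∫ u in Ioi (0:ℝ), ‖(u:ℂ) ^ (-s - 1 - 1) • (av χ n * ((max (u - n) 0 : ℝ) : ℂ))‖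
      = ‖av χ n * (n:ℂ) ^ (-s)‖ / (σ * (σ + 1)) := by
    intro n
    rcases Nat.eq_zero_or_pos n with rfl | hn
    · simp [av]
    · have hn' : (0:ℝ) < n := by exact_mod_cast hn
      obtain ⟨h1, h2⟩ := hinge_aux hn' (s := (σ:ℂ)) (by simpa using hs0)
      have e : ∀ u ∈ Ioi (0:ℝ), ‖(u:ℂ) ^ (-s - 1 - 1) • (av χ n * ((max (u - n) 0 : ℝ) : ℂ))‖ =
          ‖av χ n‖ * (u ^ (-σ - 1 - 1) * max (u - n) 0) := by
        intro u hu
        rw [norm_smul, norm_mul, Complex.norm_real, norm_cpow_eq_rpow_re_of_pos hu, Real.norm_eq_abs,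
          abs_of_nonneg (le_max_right _ _)]
        simp only [sub_re, neg_re, one_re]; ring
      rw [setIntegral_congr_fun measurableSet_Ioi e, integral_const_mul, norm_mul, mul_div_assoc]
      congr 1
      have e2 : ∀ u ∈ Ioi (0:ℝ), (u:ℂ) ^ (-(σ:ℂ) - 1 - 1) • ((max (u - n) 0 : ℝ) : ℂ) =
          ((u ^ (-σ - 1 - 1) * max (u - n) 0 : ℝ) : ℂ) := by
        intro u hu
        rw [ofReal_mul, ofReal_cpow (le_of_lt hu)]
        push_cast; rfl
      rw [setIntegral_congr_fun measurableSet_Ioi e2, integral_complex_ofReal] at h2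
      have e3 : ((n:ℝ):ℂ) ^ (-(σ:ℂ)) = (((n:ℝ) ^ (-σ) : ℝ) : ℂ) := by
        rw [ofReal_cpow hn'.le]; push_cast; rfl
      rw [e3] at h2
      have e4 : ‖(n:ℂ) ^ (-s)‖ = (n:ℝ) ^ (-σ) := by
        rw [norm_natCast_cpow_of_pos hn]; simp [hσ]
      rw [e4]
      exact_mod_cast h2
  have hS := LS_av χ hs
  have key := hasSum_integral_of_summable_integral_norm (fun n => (hint n).1) (by
    simp_rw [hnorm]
    exact hS.summable.norm.div_const _)
  have h1 := key.unique (by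
    simp_rw [fun n => (hint n).2]
    exact hS.div_const _)
  rw [← h1]
  unfold mellin Fs
  congr 1
  ext u
  exact (tsum_const_smul'' _).symm

lemma mellin_Dl (χ : DirichletCharacter ℂ N) {s : ℂ} (hs : 1 < s.re) :
    mellin (Dl χ) (-s - 1) = Ed χ s := by
  have h1 : MellinConvergent (Fs χ) (-s-1) :=
    mellinConvergent_of_isBigO_rpow (a := -2) (b := (-s-1).re - 1) ((Fs_cont χ).continuousOn.locallyIntegrableOn measurableSet_Ioi)
      (Fs_top χ) (by simp; linarith) (bot_of_zero (fun u hu => Fs_zero χ hu) _) (by linarith)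
  obtain ⟨h2, h3⟩ := sq_hinge_aux hs
  have := integral_sub h1 h2
  rw [h3] at this
  have h4 := mellin_Fs χ hs
  unfold mellin at h4 ⊢
  rw [h4] at this
  unfold Dl Ed
  rw [← sub_div, add_sub_cancel_right] at this
  rw [← this]
  congr 1
  ext u
  simp only [smul_eq_mul]; ring

lemma mellin_log_Dl {χ : DirichletCharacter ℂ N} (hχ : χ ≠ 1) {w : ℂ} (hw : w.re < -2) :
    MellinConvergent (fun t => Real.log t • Dl χ t) w ∧
    mellin (fun t => Real.log t • Dl χ t) w = - deriv (Ed χ) (-w - 1) := by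
  obtain ⟨h1, h2⟩ := mellin_hasDerivAt_of_isBigO_rpow (a := -2) (b := w.re - 1) (s := w) (f := Dl χ)
    ((Dl_cont χ).continuousOn.locallyIntegrableOn measurableSet_Ioi)
    (Dl_top χ) (by linarith) (bot_of_zero (fun u hu => Dl_zero χ hu) _) (by linarith)
  refine ⟨h1, ?_⟩
  have hs : 1 < (-w - 1).re := by simp; linarith
  have e : (fun z => Ed χ (-z - 1)) =ᶠ[𝓝 w] mellin (Dl χ) := by
    filter_upwards [(isOpen_lt continuous_re continuous_const).mem_nhds hw] with z hz
    have hz : z.re < -2 := hz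
    rw [← mellin_Dl χ (s := -z - 1) (by simp; linarith)]
    congr 1; ring
  have hd : DifferentiableAt ℂ (Ed χ) (-w - 1) := by
    unfold Ed
    refine (Fd_analyticAt hχ hs.le).differentiableAt.div (by fun_prop) ?_
    apply mul_ne_zero
    · intro h; rw [h] at hs; simp at hs; linarith
    · intro h; have := congrArg re h; simp at this hs; linarith
  have h3 := h2.congr_of_eventuallyEq e
  have h4 : HasDerivAt (fun z => Ed χ (-z - 1)) (deriv (Ed χ) (-w - 1) * (-1)) w := by
    have hi : HasDerivAt (fun z : ℂ => -z - 1) (-1) w := by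
      simpa using (hasDerivAt_id w).neg.sub_const 1
    exact hd.hasDerivAt.comp w hi
  rw [h3.unique h4]; ring

lemma Ed_deriv_bound {χ : DirichletCharacter ℂ N} (hχ : χ ≠ 1) : ∃ C : ℝ, 0 < C ∧ ∀ s : ℂ, 1 ≤ s.re → s.re ≤ 2 →
    ‖deriv (Ed χ) s‖ ≤ C * (1 + ‖s.im‖) ^ (-(3/2) : ℝ) := by
  obtain ⟨C, hC, h⟩ := Fd_bound hχ
  refine ⟨12 * C, by positivity, ?_⟩
  intro s h1 h2
  obtain ⟨b1, b2⟩ := h s h1 h2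
  have n1 : (1 + |s.im|) / 2 ≤ ‖s‖ := by
    have := abs_im_le_norm s; have := re_le_norm s; linarith
  have n2 : (1 + |s.im|) / 2 ≤ ‖s + 1‖ := by
    have := abs_im_le_norm (s+1); have := re_le_norm (s+1); simp at *; linarith
  have n3 : 1 ≤ ‖s‖ := by have := re_le_norm s; linarith
  have n4 : 1 ≤ ‖s+1‖ := by have := re_le_norm (s+1); simp at this; linarith
  have hs0 : s ≠ 0 := norm_pos_iff.mp (by linarith)
  have hs1 : s + 1 ≠ 0 := norm_pos_iff.mp (by linarith)
  have hF := (Fd_analyticAt hχ h1).differentiableAt.hasDerivAt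
  have hg : HasDerivAt (fun s : ℂ => s * (s + 1)) (1 * (s + 1) + s * 1) s :=
    (hasDerivAt_id s).mul ((hasDerivAt_id s).add_const 1)
  have hd := hF.div hg (mul_ne_zero hs0 hs1)
  have e : deriv (Ed χ) s = (deriv (Fd χ) s - Fd χ s / s - Fd χ s / (s+1)) / (s * (s+1)) := by
    rw [show Ed χ = fun s => Fd χ s / (s * (s+1)) from rfl]
    refine hd.deriv.trans ?_
    field_simp
    ring
  set T := 1 + |s.im| with hT
  have hT1 : 1 ≤ T := by rw [hT]; linarith [abs_nonneg s.im]
  rw [e, norm_div, norm_mul]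
  have m1 : ‖deriv (Fd χ) s - Fd χ s / s - Fd χ s / (s+1)‖ ≤ 3 * C * T ^ (1/2 : ℝ) := by
    have a1 : ‖Fd χ s / s‖ ≤ C * T ^ (1/2 : ℝ) := by
      rw [norm_div]; exact (div_le_self (norm_nonneg _) n3).trans b1
    have a2 : ‖Fd χ s / (s+1)‖ ≤ C * T ^ (1/2 : ℝ) := by
      rw [norm_div]; exact (div_le_self (norm_nonneg _) n4).trans b1
    have := norm_sub_le (deriv (Fd χ) s - Fd χ s / s) (Fd χ s / (s+1))
    have := norm_sub_le (deriv (Fd χ) s) (Fd χ s / s)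
    linarith
  rw [Real.norm_eq_abs]
  have e2 : T ^ (-(3/2) : ℝ) = T ^ (1/2 : ℝ) / T ^ 2 := by
    rw [← Real.rpow_natCast, ← Real.rpow_sub (by linarith)]; norm_num
  rw [e2]
  calc _ ≤ (3 * C * T ^ (1/2 : ℝ)) / (T / 2 * (T / 2)) := by gcongr
    _ = _ := by field_simp; norm_num

lemma Dl_bound {χ : DirichletCharacter ℂ N} (hχ : χ ≠ 1) : ∃ C : ℝ, 0 < C ∧ ∀ x : ℝ, 1 ≤ x →
    Real.log x * ‖Dl χ x‖ ≤ C * x ^ 2 := by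
  obtain ⟨C, hC, h⟩ := Ed_deriv_bound hχ
  have hI : Integrable (fun y : ℝ => C * (1 + ‖y‖) ^ (-(3/2) : ℝ)) :=
    (integrable_one_add_norm (by simp; norm_num)).const_mul _
  set J := ∫ y : ℝ, C * (1 + ‖y‖) ^ (-(3/2) : ℝ) with hJ
  have hJ0 : 0 ≤ J := integral_nonneg fun y => by positivity
  refine ⟨J + 1, by linarith, ?_⟩
  intro x hx
  have hx0 : 0 < x := by linarith
  have main : ∀ σ : ℝ, 2 < σ → σ ≤ 3 → Real.log x * ‖Dl χ x‖ ≤ J * x ^ σ := by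
    intro σ h2 h3
    have hre : ∀ y : ℝ, (((-σ : ℝ) : ℂ) + y * I).re < -2 := by intro y; simp; linarith
    have hb : ∀ y : ℝ, ‖mellin (fun t => Real.log t • Dl χ t) (((-σ : ℝ) : ℂ) + y * I)‖ ≤
        C * (1 + ‖y‖) ^ (-(3/2) : ℝ) := by
      intro y
      rw [(mellin_log_Dl hχ (hre y)).2, norm_neg]
      have := h (-(((-σ : ℝ) : ℂ) + y * I) - 1) (by simp; linarith) (by simp; linarith)
      simpa using this
    have hv : VerticalIntegrable (mellin (fun t => Real.log t • Dl χ t)) (-σ) := by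
      unfold VerticalIntegrable
      refine hI.mono' ?_ (ae_of_all _ hb)
      have : (fun y : ℝ => mellin (fun t => Real.log t • Dl χ t) (((-σ : ℝ) : ℂ) + y * I)) =
          fun y : ℝ => - deriv (Ed χ) (-(((-σ : ℝ) : ℂ) + y * I) - 1) := by
        ext y; exact (mellin_log_Dl hχ (hre y)).2
      rw [this]
      refine Continuous.aestronglyMeasurable ?_
      refine Continuous.neg ?_
      rw [continuous_iff_continuousAt]
      intro y
      have hs : 1 < (-(((-σ : ℝ) : ℂ) + y * I) - 1).re := by simp; linarith
      have ha : AnalyticAt ℂ (Ed χ) (-(((-σ : ℝ) : ℂ) + y * I) - 1) := by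
        unfold Ed
        refine (Fd_analyticAt hχ hs.le).div (by fun_prop) ?_
        generalize (-(((-σ : ℝ) : ℂ) + y * I) - 1) = s at hs
        apply mul_ne_zero
        · rintro rfl; simp at hs; linarith
        · intro h; have := congrArg re h; simp at this; linarith
      exact ContinuousAt.comp (f := fun y : ℝ => -(((-σ : ℝ) : ℂ) + y * I) - 1) ha.deriv.continuousAt (by fun_prop)
    have hc : MellinConvergent (fun t => Real.log t • Dl χ t) ((-σ : ℝ) : ℂ) :=
      (mellin_log_Dl hχ (by simp; linarith)).1
    have inv := mellinInv_mellin_eq (-σ) (fun t => Real.log t • Dl χ t) hx0 hc hv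
      ((Real.continuousAt_log hx0.ne').smul (Dl_cont χ).continuousAt)
    have : ‖Real.log x • Dl χ x‖ ≤ J * x ^ σ := by
      rw [← inv]
      unfold mellinInv
      rw [norm_smul]
      have i2 : ‖∫ y : ℝ, (x:ℂ) ^ (-(((-σ : ℝ) : ℂ) + y * I)) • mellin (fun t => Real.log t • Dl χ t) (((-σ : ℝ) : ℂ) + y * I)‖
          ≤ ∫ y : ℝ, x ^ σ * (C * (1 + ‖y‖) ^ (-(3/2) : ℝ)) := by
        refine norm_integral_le_of_norm_le (hI.const_mul _) (ae_of_all _ fun y => ?_)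
        rw [norm_smul, norm_cpow_eq_rpow_re_of_pos hx0]
        have : (-(((-σ : ℝ) : ℂ) + y * I)).re = σ := by simp
        rw [this]
        gcongr
        exact hb y
      rw [integral_const_mul, ← hJ] at i2
      have h1 : ‖((1 / (2 * Real.pi) : ℝ))‖ ≤ 1 := by
        rw [Real.norm_eq_abs, abs_of_nonneg (by positivity), div_le_one (by positivity)]
        linarith [Real.pi_gt_three]
      calc _ ≤ 1 * (x ^ σ * J) := by
            refine mul_le_mul ?_ i2 (norm_nonneg _) zero_le_one
            simpa using h1
        _ = _ := by ring
    rw [norm_smul, Real.norm_eq_abs, abs_of_nonneg (Real.log_nonneg hx)] at this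
    exact this
  have hlim : Tendsto (fun σ : ℝ => J * x ^ σ) (𝓝[>] 2) (𝓝 (J * x ^ (2:ℝ))) := by
    apply Tendsto.mono_left _ nhdsWithin_le_nhds
    exact ((Real.continuous_const_rpow hx0.ne').tendsto 2).const_mul J
  have := ge_of_tendsto hlim (b := Real.log x * ‖Dl χ x‖) (by
    filter_upwards [Ioc_mem_nhdsGT (show (2:ℝ) < 3 by norm_num)] with σ hσ
    exact main σ hσ.1 hσ.2)
  norm_cast at this
  nlinarith [sq_nonneg x]

end B6

section C1
open scoped ArithmeticFunction

/-- split primes -/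
def QK (K : Type*) [Field K] [NumberField K] (p : ℕ) : Prop := p.Prime ∧ Spl K p

open Classical in
noncomputable def wQ (Q : ℕ → Prop) (q : ℕ) : ℝ := if Q q then 1 else 0

lemma wQ_nonneg (Q : ℕ → Prop) (q : ℕ) : 0 ≤ wQ Q q := by unfold wQ; split_ifs <;> simp
lemma wQ_le_one (Q : ℕ → Prop) (q : ℕ) : wQ Q q ≤ 1 := by unfold wQ; split_ifs <;> simp

noncomputable def PQ (Q : ℕ → Prop) (u : ℝ) : ℝ :=
  ∑ q ∈ Finset.range (⌊u⌋₊ + 1), wQ Q q * max (u - q) 0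

noncomputable def AQ (Q : ℕ → Prop) (u : ℝ) : ℝ :=
  ∑ q ∈ Finset.range (⌊u⌋₊ + 1), wQ Q q * Real.log q * max (u - q) 0

lemma av_prime {N : ℕ} [NeZero N] (K : Type*) [Field K] [NumberField K] (χ : DirichletCharacter ℂ N)
    (h : ∀ p : ℕ, p.Prime → ¬ p ∣ N → (χ p = 1 ∧ Spl K p) ∨ (χ p = -1 ∧ ¬ Spl K p)) (n : ℕ) :
    |(av χ n).re - 2 * (wQ (QK K) n * Real.log n)| ≤
      2 * (Λ n - (if n.Prime then Real.log n else 0)) + 2 * (if n ≤ N then Real.log N else 0) := by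
  have hN : 0 < N := Nat.pos_of_ne_zero (NeZero.ne N)
  have hN1 : 0 ≤ Real.log N := Real.log_natCast_nonneg N
  have hlast : 0 ≤ (if n ≤ N then Real.log N else 0) := by split_ifs <;> simp [hN1]
  by_cases hp : n.Prime
  · rw [if_pos hp, ArithmeticFunction.vonMangoldt_apply_prime hp, sub_self, mul_zero, zero_add]
    by_cases hd : n ∣ N
    · have hle := Nat.le_of_dvd hN hd
      rw [if_pos hle]
      have hnu : ¬ IsUnit (n : ZMod N) := by
        rw [ZMod.isUnit_iff_coprime]
        intro hc
        have := Nat.Coprime.eq_one_of_dvd hc hd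
        exact hp.one_lt.ne' this
      have : av χ n = 0 := by
        unfold av
        rw [MulChar.map_nonunit _ hnu, MulChar.map_nonunit _ hnu]; simp
      rw [this]
      have l0 : 0 ≤ Real.log n := Real.log_natCast_nonneg n
      have l1 : Real.log n ≤ Real.log N := Real.log_le_log (by exact_mod_cast hp.pos) (by exact_mod_cast hle)
      have w0 := wQ_nonneg (QK K) n
      have w1 := wQ_le_one (QK K) n
      rw [Complex.zero_re, zero_sub, abs_neg, abs_of_nonneg (by positivity)]
      nlinarith [mul_nonneg (sub_nonneg.2 w1) l0]
    · have hu : IsUnit (n : ZMod N) := by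
        rw [ZMod.isUnit_iff_coprime]
        exact (Nat.Prime.coprime_iff_not_dvd hp).2 hd
      have e : (av χ n).re = 2 * (wQ (QK K) n * Real.log n) := by
        unfold av wQ QK
        rw [MulChar.one_apply hu, ArithmeticFunction.vonMangoldt_apply_prime hp]
        rcases h n hp hd with ⟨h1, h2⟩ | ⟨h1, h2⟩
        · rw [h1, if_pos ⟨hp, h2⟩]
          have : ((1:ℂ) + 1) * (Real.log n : ℂ) = ((2 * Real.log n : ℝ) : ℂ) := by push_cast; ring
          rw [this, Complex.ofReal_re]; ring
        · rw [h1, if_neg (by tauto)]; simp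
      rw [e, sub_self, abs_zero]; linarith
  · have hw : wQ (QK K) n = 0 := by unfold wQ QK; rw [if_neg (by tauto)]
    rw [hw, if_neg hp, zero_mul, mul_zero, sub_zero, sub_zero]
    have := Complex.abs_re_le_norm (av χ n)
    have := av_norm χ n
    linarith

lemma AQ_bound (K : Type*) [Field K] [NumberField K] (hK : Module.finrank ℚ K = 2) :
    ∃ C : ℝ, 0 < C ∧ ∀ u : ℝ, 2 ≤ u → |AQ (QK K) u - u ^ 2 / 4| ≤ C * u ^ 2 / Real.log u := by
  obtain ⟨N, _, χ, hχ, -, h⟩ := exists_char K hK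
  obtain ⟨C1, hC1, hD⟩ := Dl_bound hχ
  obtain ⟨C2, hC2⟩ := Chebyshev.psi_sub_theta_le_mul_sqrt
  have hC20 : 0 ≤ C2 := by
    have := hC2 1
    have h2 := Chebyshev.theta_le_psi 1
    simp at this; linarith
  set C3 := (N + 1) * Real.log N with hC3
  have hN1 : 0 ≤ Real.log N := Real.log_natCast_nonneg N
  have hC30 : 0 ≤ C3 := by positivity
  refine ⟨C1 + 4 * C2 + 4 * C3 + 2, by positivity, ?_⟩
  intro u hu
  have hl : 0 < Real.log u := Real.log_pos (by linarith)
  have h1 : u ≤ (⌊u⌋₊ + 1 : ℕ) := by push_cast; exact (Nat.lt_floor_add_one u).le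
  have hre : (Fs χ u).re = ∑ n ∈ Finset.range (⌊u⌋₊ + 1), (av χ n).re * max (u - n) 0 := by
    rw [Fs_eq χ h1, Complex.re_sum]
    refine Finset.sum_congr rfl fun n _ => ?_
    rw [Complex.re_mul_ofReal]
  have hdiff : |(Fs χ u).re - 2 * AQ (QK K) u| ≤ 2 * u * (C2 * √u) + 2 * u * C3 := by
    rw [hre, AQ, Finset.mul_sum, ← Finset.sum_sub_distrib]
    have h2 : Finset.range (⌊u⌋₊ + 1) = Finset.Icc 0 ⌊u⌋₊ := by ext; simp
    calc _ ≤ ∑ n ∈ Finset.range (⌊u⌋₊ + 1), (2 * (Λ n - (if n.Prime then Real.log n else 0)) + 2 * (if n ≤ N then Real.log N else 0)) * u := by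
          refine (Finset.abs_sum_le_sum_abs _ _).trans (Finset.sum_le_sum fun n _ => ?_)
          rw [show (av χ n).re * max (u - n) 0 - 2 * (wQ (QK K) n * Real.log n * max (u - n) 0) =
            ((av χ n).re - 2 * (wQ (QK K) n * Real.log n)) * max (u - n) 0 by ring, abs_mul,
            abs_of_nonneg (le_max_right (u - n) 0)]
          have b := av_prime K χ h n
          have : max (u - n) 0 ≤ u := by
            apply max_le _ (by linarith)
            have : (0:ℝ) ≤ n := by positivity
            linarith
          exact mul_le_mul b this (le_max_right _ _) ((abs_nonneg _).trans b)
      _ = 2 * u * (Chebyshev.psi u - Chebyshev.theta u) +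
          2 * u * ∑ n ∈ Finset.range (⌊u⌋₊ + 1), (if n ≤ N then Real.log N else 0) := by
          rw [Chebyshev.psi_eq_sum_Icc, Chebyshev.theta_eq_sum_Icc, Finset.sum_filter, ← Finset.sum_sub_distrib,
            ← h2, Finset.mul_sum, Finset.mul_sum, ← Finset.sum_add_distrib]
          refine Finset.sum_congr rfl fun n _ => ?_
          ring
      _ ≤ _ := by
          gcongr
          · exact hC2 u
          · rw [← Finset.sum_filter, Finset.sum_const, nsmul_eq_mul, hC3]
            gcongr
            have : (Finset.filter (fun n => n ≤ N) (Finset.range (⌊u⌋₊ + 1))).card ≤ (Finset.range (N+1)).card := by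
              apply Finset.card_le_card
              intro n; simp
            rw [Finset.card_range] at this
            exact_mod_cast this
  have hD' := hD u (by linarith)
  have hre2 : |(Fs χ u).re - (u - 1) ^ 2 / 2| ≤ C1 * u ^ 2 / Real.log u := by
    have : |(Dl χ u).re| ≤ ‖Dl χ u‖ := Complex.abs_re_le_norm _
    rw [le_div_iff₀ hl]
    have e : (Dl χ u).re = (Fs χ u).re - (u - 1) ^ 2 / 2 := by
      unfold Dl
      rw [max_eq_left (by linarith), Complex.sub_re, Complex.ofReal_re]
    rw [e] at this
    nlinarith
  -- log u ≤ 2 √u ≤ 2 u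
  have hsq : √u * √u = u := Real.mul_self_sqrt (by linarith)
  have hs1 : 1 ≤ √u := Real.one_le_sqrt.2 (by linarith)
  have hlog : Real.log u ≤ 2 * √u := by
    have := Real.log_le_sub_one_of_pos (show 0 < √u by linarith)
    rw [Real.log_sqrt (by linarith)] at this
    linarith
  have g1 : u * √u ≤ 2 * u ^ 2 / Real.log u := by
    rw [le_div_iff₀ hl]
    calc u * √u * Real.log u ≤ u * √u * (2 * √u) := by gcongr
      _ = _ := by rw [show u * √u * (2 * √u) = 2 * u * (√u * √u) by ring, hsq]; ring
  have g2 : u ≤ 2 * u ^ 2 / Real.log u := le_trans (by nlinarith) g1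
  have g3 : |u^2/2 - (u-1)^2/2| ≤ u := by rw [abs_le]; constructor <;> nlinarith
  have e1 : |2 * AQ (QK K) u - u^2/2| ≤ C1 * u ^ 2 / Real.log u + 2 * C2 * (u * √u) + (2 * C3 + 1) * u := by
    rw [abs_le] at *
    constructor <;> linarith [hdiff.1, hdiff.2, hre2.1, hre2.2, g3.1, g3.2]
  have e2 : |AQ (QK K) u - u^2/4| = |2 * AQ (QK K) u - u^2/2| / 2 := by
    rw [show 2 * AQ (QK K) u - u^2/2 = 2 * (AQ (QK K) u - u^2/4) by ring, abs_mul]; norm_num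
  rw [e2]
  have g1' := mul_le_mul_of_nonneg_left g1 hC20
  have g2' := mul_le_mul_of_nonneg_left g2 hC30
  have g4 : 0 ≤ C1 * u ^ 2 / Real.log u := by positivity
  have e3 : (C1 + 4 * C2 + 4 * C3 + 2) * u ^ 2 / Real.log u = C1 * u ^ 2 / Real.log u
    + 2 * (C2 * (2 * u ^ 2 / Real.log u)) + 2 * (C3 * (2 * u ^ 2 / Real.log u)) + 2 * u ^ 2 / Real.log u := by
    ring
  rw [e3]
  have g5 : 0 ≤ u ^ 2 / Real.log u := by positivity
  have g6 : 0 ≤ C2 * (2 * u ^ 2 / Real.log u) := by positivity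
  have g7 : 0 ≤ C3 * (2 * u ^ 2 / Real.log u) := by positivity
  linarith

end C1

section C2
open Real

lemma ev_log_ge (c : ℝ) : ∀ᶠ u : ℝ in atTop, c ≤ log u :=
  tendsto_log_atTop.eventually_ge_atTop c
lemma ev_loglog_ge (c : ℝ) : ∀ᶠ u : ℝ in atTop, c ≤ log (log u) :=
  tendsto_log_atTop.eventually (ev_log_ge c)
lemma ev_log_le (c : ℝ) (hc : 0 < c) : ∀ᶠ u : ℝ in atTop, log u ≤ c * u := by
  have := (isLittleO_log_id_atTop).bound hc
  filter_upwards [this, eventually_ge_atTop 1] with u hu h1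
  simp only [id, norm_eq_abs] at hu
  rwa [abs_of_nonneg (log_nonneg h1), abs_of_nonneg (by linarith)] at hu
lemma ev_loglog_le (c : ℝ) (hc : 0 < c) : ∀ᶠ u : ℝ in atTop, log (log u) ≤ c * log u :=
  tendsto_log_atTop.eventually (ev_log_le c hc)
lemma ev_log_pow_le (n : ℕ) (c : ℝ) (hc : 0 < c) : ∀ᶠ u : ℝ in atTop, (log u) ^ n ≤ c * u := by
  have := (isLittleO_pow_log_id_atTop (n := n)).bound hc
  filter_upwards [this, eventually_ge_atTop 1] with u hu h1
  simp only [id, norm_eq_abs] at hu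
  rwa [abs_of_nonneg (pow_nonneg (log_nonneg h1) _), abs_of_nonneg (by linarith)] at hu

variable {Q : ℕ → Prop}

lemma wmax_nonneg (u : ℝ) (q : ℕ) : 0 ≤ wQ Q q * max (u - q) 0 :=
  mul_nonneg (wQ_nonneg _ _) (le_max_right _ _)

lemma PQ_nonneg (u : ℝ) : 0 ≤ PQ Q u := Finset.sum_nonneg fun q _ => wmax_nonneg u q

lemma PQ_eq {u : ℝ} {M : ℕ} (h : u ≤ M) : PQ Q u = ∑ q ∈ Finset.range M, wQ Q q * max (u - q) 0 := by
  unfold PQ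
  have hz : ∀ q : ℕ, ⌊u⌋₊ + 1 ≤ q ∨ M ≤ q → wQ Q q * max (u - q) 0 = 0 := by
    intro q hq
    have : u ≤ q := by
      rcases hq with hq | hq
      · have h1 := (Nat.lt_floor_add_one u).le
        have h2 : ((⌊u⌋₊ + 1 : ℕ) : ℝ) ≤ q := by exact_mod_cast hq
        push_cast at h2; linarith
      · have h2 : (M : ℝ) ≤ q := by exact_mod_cast hq
        linarith
    rw [max_eq_right (by linarith), mul_zero]
  rcases le_total (⌊u⌋₊ + 1) M with hm | hm
  · apply Finset.sum_subset (by simpa using hm)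
    intro q _ hq
    simp at hq
    exact hz q (Or.inl (by omega))
  · symm
    apply Finset.sum_subset (by simpa using hm)
    intro q _ hq
    simp at hq
    exact hz q (Or.inr hq)

lemma PQ_le (hQ : ∀ q, Q q → 2 ≤ q) {u : ℝ} (hu : 0 ≤ u) : PQ Q u ≤ u ^ 2 := by
  unfold PQ
  rw [Finset.sum_range_succ']
  have h0 : wQ Q 0 = 0 := by
    unfold wQ; rw [if_neg]; intro h; have := hQ 0 h; omega
  rw [h0, zero_mul, add_zero]
  calc _ ≤ ∑ q ∈ Finset.range ⌊u⌋₊, u := by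
        refine Finset.sum_le_sum fun q _ => ?_
        have h1 := wQ_le_one Q (q+1)
        have h2 := wQ_nonneg Q (q+1)
        have h3 : max (u - ((q+1 : ℕ):ℝ)) 0 ≤ u := by
          apply max_le _ hu
          have : (0:ℝ) ≤ ((q+1 : ℕ):ℝ) := by positivity
          linarith
        have h4 : 0 ≤ max (u - ((q+1 : ℕ):ℝ)) 0 := le_max_right _ _
        nlinarith
    _ = ⌊u⌋₊ * u := by simp
    _ ≤ u * u := by gcongr; exact Nat.floor_le hu
    _ = u ^ 2 := by ring

lemma PQ_zero (hQ : ∀ q, Q q → 2 ≤ q) {u : ℝ} (hu : u ≤ 2) : PQ Q u = 0 := by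
  refine Finset.sum_eq_zero fun q _ => ?_
  by_cases h : Q q
  · have : (2:ℝ) ≤ q := by exact_mod_cast hQ q h
    rw [max_eq_right (by linarith), mul_zero]
  · unfold wQ; rw [if_neg h, zero_mul]

lemma PQ_asymp (hQ : ∀ q, Q q → 2 ≤ q)
    (hA : ∃ C : ℝ, 0 < C ∧ ∀ u : ℝ, 2 ≤ u → |AQ Q u - u ^ 2 / 4| ≤ C * u ^ 2 / log u) :
    ∃ C : ℝ, 0 < C ∧ ∀ᶠ u : ℝ in atTop,
      |PQ Q u - u ^ 2 / (4 * log u)| ≤ C * u ^ 2 * log (log u) / (log u) ^ 2 := by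
  obtain ⟨C, hC, hA⟩ := hA
  refine ⟨2 * C + 3, by positivity, ?_⟩
  filter_upwards [eventually_ge_atTop 2, ev_log_ge 1, ev_loglog_ge 1, ev_loglog_le (1/4) (by norm_num),
    ev_log_pow_le 2 1 one_pos] with u hu hl1 hll hll4 hl2
  set L := log u with hL
  set ℓ := log L with hℓ
  have hL0 : 0 < L := by linarith
  obtain ⟨ha1, ha2⟩ := abs_le.1 (hA u hu)
  have hu0 : 0 < u := by linarith
  have low : AQ Q u / L ≤ PQ Q u := by
    rw [div_le_iff₀ hL0]
    unfold AQ PQ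
    rw [Finset.sum_mul]
    refine Finset.sum_le_sum fun q hq => ?_
    rw [show wQ Q q * log q * max (u - q) 0 = (wQ Q q * max (u - q) 0) * log q by ring]
    refine mul_le_mul_of_nonneg_left ?_ (wmax_nonneg u q)
    simp at hq
    have hqu : (q:ℝ) ≤ u := (Nat.le_floor_iff hu0.le).1 (by omega)
    rcases Nat.eq_zero_or_pos q with rfl | h0
    · simp; linarith
    · exact log_le_log (by exact_mod_cast h0) hqu
  set z := u / L ^ 2 with hz
  have hz1 : 1 ≤ z := by rw [hz, le_div_iff₀ (by positivity)]; linarith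
  have hlz : log z = L - 2 * ℓ := by
    rw [hz, log_div (by positivity) (by positivity), log_pow]; push_cast; ring
  have hlz0 : 0 < log z := by rw [hlz]; linarith
  have up : PQ Q u ≤ AQ Q u / log z + (z + 1) * u := by
    have hzc : ((Finset.range (⌊z⌋₊ + 1)).card : ℝ) ≤ z + 1 := by
      rw [Finset.card_range]; push_cast; gcongr; exact Nat.floor_le (by linarith)
    calc PQ Q u ≤ ∑ q ∈ Finset.range (⌊u⌋₊ + 1), (wQ Q q * log q * max (u - q) 0 / log z + if q ∈ Finset.range (⌊z⌋₊ + 1) then u else 0) := by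
          refine Finset.sum_le_sum fun q hq => ?_
          have hm := wmax_nonneg (Q := Q) u q
          split_ifs with hqz
          · have h1 := wQ_le_one Q q
            have h2 := wQ_nonneg Q q
            have h3 : max (u - q) 0 ≤ u := by
              apply max_le _ hu0.le
              have : (0:ℝ) ≤ q := by positivity
              linarith
            have h4 : 0 ≤ max (u - q) 0 := le_max_right _ _
            have h5 : 0 ≤ wQ Q q * log q * max (u - q) 0 / log z := by
              have := log_natCast_nonneg q; positivity
            nlinarith
          · rw [add_zero, le_div_iff₀ hlz0, show wQ Q q * log q * max (u - q) 0 = (wQ Q q * max (u - q) 0) * log q by ring]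
            refine mul_le_mul_of_nonneg_left ?_ hm
            apply log_le_log (by linarith)
            simp at hqz
            exact (Nat.lt_of_floor_lt (by omega)).le
      _ = AQ Q u / log z + ∑ q ∈ Finset.range (⌊u⌋₊ + 1), (if q ∈ Finset.range (⌊z⌋₊ + 1) then u else 0) := by
          rw [Finset.sum_add_distrib, AQ, Finset.sum_div]
      _ ≤ _ := by
          gcongr
          rw [← Finset.sum_filter, Finset.sum_const, nsmul_eq_mul]
          gcongr
          refine le_trans ?_ hzc
          norm_cast
          apply Finset.card_le_card
          intro q; simp
  have hrec : 1 / log z ≤ 1 / L + 4 * ℓ / L ^ 2 := by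
    rw [hlz, div_le_iff₀ (by linarith)]
    have : (1 / L + 4 * ℓ / L ^ 2) * (L - 2 * ℓ) = 1 + 2 * ℓ / L - 8 * ℓ^2 / L ^ 2 := by field_simp; ring
    rw [this]
    have : 8 * ℓ^2 / L^2 ≤ 2 * ℓ / L := by
      rw [div_le_div_iff₀ (by positivity) hL0]
      have : 0 ≤ ℓ * L := by positivity
      nlinarith [mul_nonneg this (show 0 ≤ L/4 - ℓ by linarith)]
    linarith
  have hrec2 : 1 / log z ≤ 2 / L := by
    rw [hlz, div_le_div_iff₀ (by linarith) hL0]; linarith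
  set R := u ^ 2 * ℓ / L ^ 2 with hR
  have R1 : u ^ 2 / L ^ 2 ≤ R := by rw [hR]; gcongr; nlinarith [sq_nonneg u]
  have R2 : z * u = u^2 / L^2 := by rw [hz]; ring
  have R3 : u ≤ u^2/L^2 := by
    rw [← R2]; nlinarith
  have e : (2 * C + 3) * u ^ 2 * ℓ / L ^ 2 = (2 * C + 3) * R := by rw [hR]; ring
  rw [e, abs_le]
  constructor
  · have h1 : (u ^ 2 / 4 - C * u ^ 2 / L) / L ≤ PQ Q u := le_trans (by gcongr; linarith) low
    have h2 : (u ^ 2 / 4 - C * u ^ 2 / L) / L = u ^ 2 / (4 * L) - C * (u ^ 2 / L ^ 2) := by field_simp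
    rw [h2] at h1
    have := mul_le_mul_of_nonneg_left R1 hC.le
    have : 0 ≤ R := le_trans (by positivity) R1
    nlinarith
  · have h1 : AQ Q u / log z ≤ u^2/4 * (1 / L + 4 * ℓ / L ^ 2) + C * u ^ 2 / L * (2 / L) := by
      calc AQ Q u / log z ≤ (u^2/4 + C * u ^ 2 / L) / log z := by gcongr; linarith
        _ = u^2/4 * (1 / log z) + C * u ^ 2 / L * (1 / log z) := by ring
        _ ≤ _ := by gcongr
    have h2 : u^2/4 * (1 / L + 4 * ℓ / L ^ 2) + C * u ^ 2 / L * (2 / L) = u^2/(4*L) + R + 2 * C * (u^2/L^2) := by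
      rw [hR]; field_simp
    have := mul_le_mul_of_nonneg_left R1 hC.le
    nlinarith

end C2

section C3
open Real

noncomputable def Lc (l : ℕ) : ℝ := log (1 + 1 / ((l : ℝ) + 1))

lemma Lc_le (l : ℕ) : Lc l ≤ 1 / ((l : ℝ) + 1) := by
  unfold Lc
  have := log_le_sub_one_of_pos (show 0 < 1 + 1 / ((l : ℝ) + 1) by positivity)
  linarith

lemma Lc_ge (l : ℕ) : 1 / ((l : ℝ) + 2) ≤ Lc l := by
  unfold Lc
  have := one_sub_inv_le_log_of_pos (show 0 < 1 + 1 / ((l : ℝ) + 1) by positivity)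
  have e : 1 - (1 + 1 / ((l : ℝ) + 1))⁻¹ = 1 / ((l : ℝ) + 2) := by field_simp; ring
  linarith

lemma Lc_pos (l : ℕ) : 0 < Lc l := lt_of_lt_of_le (by positivity) (Lc_ge l)
lemma Lc_le_one (l : ℕ) : Lc l ≤ 1 := (Lc_le l).trans (by
  rw [div_le_one (by positivity)]; have : (0:ℝ) ≤ l := by positivity
  linarith)

lemma Lc_sq_le (l : ℕ) : Lc l ^ 2 ≤ ((l : ℝ) + 1) ^ (-(3/2) : ℝ) * ((l : ℝ) + 1) ^ (-(1/2) : ℝ) := by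
  rw [← rpow_add (by positivity)]
  have := Lc_le l
  have h0 := (Lc_pos l).le
  calc Lc l ^ 2 ≤ (1 / ((l : ℝ) + 1)) ^ 2 := by gcongr
    _ = _ := by
      norm_num

lemma Lc_sq_le' (l : ℕ) : Lc l ^ 2 ≤ ((l : ℝ) + 1) ^ (-(3/2) : ℝ) := by
  refine (Lc_sq_le l).trans ?_
  have h1 : ((l : ℝ) + 1) ^ (-(1/2) : ℝ) ≤ 1 := by
    apply rpow_le_one_of_one_le_of_nonpos
    · have : (0:ℝ) ≤ l := by positivity
      linarith
    · norm_num
  have h2 : 0 ≤ ((l : ℝ) + 1) ^ (-(3/2) : ℝ) := by positivity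
  nlinarith

lemma summable_32 : Summable (fun l : ℕ => ((l : ℝ) + 1) ^ (-(3/2) : ℝ)) := by
  have := (summable_nat_add_iff 1).2 (summable_nat_rpow.2 (show (-(3/2) : ℝ) < -1 by norm_num))
  simpa using this

lemma summable_Lc : Summable (fun l : ℕ => Lc l ^ 2) :=
  Summable.of_nonneg_of_le (fun l => by positivity) Lc_sq_le' summable_32

variable {Q : ℕ → Prop}

lemma P_term (hQ : ∀ q, Q q → 2 ≤ q)
    (hP : ∃ C : ℝ, 0 < C ∧ ∀ᶠ u : ℝ in atTop,
      |PQ Q u - u ^ 2 / (4 * log u)| ≤ C * u ^ 2 * log (log u) / (log u) ^ 2) :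
    ∃ C : ℝ, 0 < C ∧ ∀ᶠ x : ℝ in atTop, ∀ l : ℕ,
      |PQ Q (x * Lc l) - (x * Lc l) ^ 2 / (4 * log x)| ≤
        C * (x ^ 2 * log (log x) / (log x) ^ 2) * ((l : ℝ) + 1) ^ (-(3/2) : ℝ) := by
  obtain ⟨C, hC, hP⟩ := hP
  obtain ⟨u0, hu0⟩ := eventually_atTop.1 hP
  refine ⟨4 * C + 3, by positivity, ?_⟩
  filter_upwards [eventually_ge_atTop 2, ev_log_ge 2, ev_loglog_ge 1, ev_loglog_le (1/10) (by norm_num),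
    ev_log_pow_le 8 (1/4) (by norm_num), eventually_ge_atTop (u0^2)] with x hx hl1 hll hll4 hl8 hxu l
  set L := log x with hL
  set ℓ := log L with hℓ
  have hL0 : 0 < L := by linarith
  have hx0 : 0 < x := by linarith
  set u := x * Lc l with hu
  have hLp := Lc_pos l
  have hupos : 0 < u := by positivity
  have hux : u ≤ x := by rw [hu]; nlinarith [Lc_le_one l]
  have husq : u ^ 2 ≤ x ^ 2 * ((l : ℝ) + 1) ^ (-(3/2) : ℝ) := by
    rw [hu, mul_pow]; gcongr; exact Lc_sq_le' l
  set r := ((l : ℝ) + 1) ^ (-(3/2) : ℝ) with hr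
  have hr0 : 0 ≤ r := by positivity
  by_cases hcase : (l : ℝ) + 1 ≤ L ^ 4
  · have h1 : x / (2 * L ^ 4) ≤ u := by
      rw [hu, div_eq_mul_one_div]
      gcongr
      refine le_trans ?_ (Lc_ge l)
      apply one_div_le_one_div_of_le (by positivity)
      have : (0:ℝ) ≤ l := by positivity
      linarith
    have h2 : √x ≤ x / (2 * L ^ 4) := by
      rw [le_div_iff₀ (by positivity)]
      have h3 : 2 * L ^ 4 ≤ √x := by
        apply le_sqrt_of_sq_le
        nlinarith
      calc √x * (2 * L^4) ≤ √x * √x := by gcongr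
        _ = x := mul_self_sqrt hx0.le
    have h3 : u0 ≤ u := by
      refine le_trans ?_ (h2.trans h1)
      exact le_sqrt_of_sq_le hxu
    have h4 := hu0 u h3
    have hlu1 : L - 5 * ℓ ≤ log u := by
      have := log_le_log (by positivity) h1
      rw [log_div hx0.ne' (by positivity), log_mul (by norm_num) (by positivity), log_pow] at this
      push_cast at this
      have : log 2 < 1 := by linarith [log_two_lt_d9]
      linarith
    have hlu2 : log u ≤ L := log_le_log hupos hux
    have hlu3 : L / 2 ≤ log u := by linarith
    have hlu0 : 0 < log u := by linarith
    have hll2 : log (log u) ≤ ℓ := log_le_log hlu0 hlu2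
    have t1 : C * u ^ 2 * log (log u) / (log u) ^ 2 ≤ 4 * C * (u ^ 2 * ℓ / L ^ 2) := by
      calc C * u ^ 2 * log (log u) / (log u) ^ 2 ≤ C * u ^ 2 * ℓ / (L/2) ^ 2 := by gcongr
        _ = _ := by field_simp; norm_num
    have t2 : |u ^ 2 / (4 * log u) - u ^ 2 / (4 * L)| ≤ 3 * (u ^ 2 * ℓ / L ^ 2) := by
      have : u ^ 2 / (4 * log u) - u ^ 2 / (4 * L) = u ^ 2 / 4 * (L - log u) / (log u * L) := by
        field_simp
      rw [this, abs_of_nonneg (by apply div_nonneg _ (by positivity); apply mul_nonneg (by positivity); linarith)]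
      calc _ ≤ u ^ 2 / 4 * (5 * ℓ) / (L / 2 * L) := by gcongr; linarith
        _ = 5/2 * (u ^ 2 * ℓ / L ^ 2) := by field_simp; norm_num
        _ ≤ _ := by gcongr; norm_num
    have t3 : u ^ 2 * ℓ / L ^ 2 ≤ x ^ 2 * ℓ / L ^ 2 * r := by
      calc _ ≤ (x ^ 2 * r) * ℓ / L ^ 2 := by gcongr
        _ = _ := by ring
    calc _ ≤ |PQ Q u - u ^ 2 / (4 * log u)| + |u ^ 2 / (4 * log u) - u ^ 2 / (4 * L)| := abs_sub_le _ _ _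
      _ ≤ 4 * C * (u ^ 2 * ℓ / L ^ 2) + 3 * (u ^ 2 * ℓ / L ^ 2) := by linarith
      _ = (4 * C + 3) * (u ^ 2 * ℓ / L ^ 2) := by ring
      _ ≤ (4 * C + 3) * (x ^ 2 * ℓ / L ^ 2 * r) := by gcongr
      _ = _ := by ring
  · push Not at hcase
    have h1 := PQ_le hQ hupos.le
    have h2 := PQ_nonneg (Q := Q) u
    have h3 : u ^ 2 / (4 * L) ≤ u ^ 2 := div_le_self (by positivity) (by linarith)
    have h4 : 0 ≤ u ^ 2 / (4 * L) := by positivity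
    have h5 : ((l : ℝ) + 1) ^ (-(1/2) : ℝ) ≤ 1 / L ^ 2 := by
      rw [rpow_neg (by positivity), ← one_div, ← sqrt_eq_rpow]
      apply one_div_le_one_div_of_le (by positivity)
      apply le_sqrt_of_sq_le
      nlinarith
    have h6 : u ^ 2 ≤ x ^ 2 * ℓ / L ^ 2 * r := by
      calc u ^ 2 = x ^ 2 * Lc l ^ 2 := by rw [hu]; ring
        _ ≤ x ^ 2 * (r * (1 / L ^ 2)) := by
          gcongr; exact (Lc_sq_le l).trans (by gcongr)
        _ = x ^ 2 * 1 / L ^ 2 * r := by ring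
        _ ≤ _ := by gcongr
    have h7 : 0 ≤ x ^ 2 * ℓ / L ^ 2 * r := le_trans (by positivity) h6
    rw [mul_assoc, abs_le]
    constructor <;> nlinarith

noncomputable def SL : ℝ := ∑' l : ℕ, Lc l ^ 2

lemma SL_pos : 0 < SL := summable_Lc.tsum_pos (fun l => by positivity) 0 (by have := Lc_pos 0; positivity)

noncomputable def DQ (Q : ℕ → Prop) (x : ℝ) : ℝ := (∑' l : ℕ, PQ Q (x * Lc l)) / x

lemma PQ_summable (hQ : ∀ q, Q q → 2 ≤ q) {x : ℝ} (hx : 0 ≤ x) : Summable (fun l => PQ Q (x * Lc l)) := by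
  refine Summable.of_nonneg_of_le (fun l => PQ_nonneg _) (fun l => ?_) (summable_Lc.mul_left (x^2))
  refine (PQ_le hQ (mul_nonneg hx (Lc_pos l).le)).trans ?_
  rw [mul_pow]

lemma DQ_asymp (hQ : ∀ q, Q q → 2 ≤ q)
    (hP : ∃ C : ℝ, 0 < C ∧ ∀ᶠ u : ℝ in atTop,
      |PQ Q u - u ^ 2 / (4 * log u)| ≤ C * u ^ 2 * log (log u) / (log u) ^ 2) :
    ∃ C : ℝ, 0 < C ∧ ∀ᶠ x : ℝ in atTop,
      |DQ Q x - SL * x / (4 * log x)| ≤ C * (x * log (log x) / (log x) ^ 2) := by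
  obtain ⟨C, hC, h⟩ := P_term hQ hP
  have hW := summable_32
  set W := ∑' l : ℕ, ((l : ℝ) + 1) ^ (-(3/2) : ℝ) with hWd
  have hW0 : 0 ≤ W := tsum_nonneg fun l => by positivity
  refine ⟨C * W + 1, by positivity, ?_⟩
  filter_upwards [h, eventually_ge_atTop 2, ev_log_ge 2, ev_loglog_ge 1] with x hx hx2 hl hll
  have hx0 : 0 < x := by linarith
  have s1 := PQ_summable hQ hx0.le
  have s2 : Summable (fun l => (x * Lc l) ^ 2 / (4 * log x)) := by
    have := summable_Lc.mul_left (x ^ 2 / (4 * log x))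
    refine this.congr fun l => ?_; ring
  have s2' : ∑' l, (x * Lc l) ^ 2 / (4 * log x) = x ^ 2 / (4 * log x) * SL := by
    rw [SL, ← tsum_mul_left]; congr 1; ext l; ring
  have s3 : Summable (fun l : ℕ => C * (x ^ 2 * log (log x) / (log x) ^ 2) * ((l : ℝ) + 1) ^ (-(3/2) : ℝ)) := hW.mul_left _
  have key : |∑' l : ℕ, PQ Q (x * Lc l) - x ^ 2 / (4 * log x) * SL| ≤ C * (x ^ 2 * log (log x) / (log x) ^ 2) * W := by
    rw [← s2', ← s1.tsum_sub s2, hWd, ← tsum_mul_left]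
    have := tsum_of_norm_bounded s3.hasSum (fun l => by
      rw [norm_eq_abs]; exact hx l)
    rwa [norm_eq_abs] at this
  have e : DQ Q x - SL * x / (4 * log x) = (∑' l : ℕ, PQ Q (x * Lc l) - x ^ 2 / (4 * log x) * SL) / x := by
    unfold DQ; field_simp
  rw [e, abs_div, abs_of_pos hx0, div_le_iff₀ hx0]
  have hz : 0 ≤ x ^ 2 * log (log x) / (log x) ^ 2 := by positivity
  calc _ ≤ _ := key
    _ ≤ (C * W + 1) * (x ^ 2 * log (log x) / (log x) ^ 2) := by nlinarith
    _ = _ := by ring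

end C3

section D1
open Real

/-- sum of logs -/
noncomputable def GM (Q : ℕ → Prop) (M m : ℕ) : ℝ :=
  ∑ q ∈ Finset.range M, wQ Q q * log (1 + m.factorization q)

variable {Q : ℕ → Prop}

lemma GM_mul (M : ℕ) {a b : ℕ} (ha : a ≠ 0) (hb : b ≠ 0) : GM Q M (a * b) ≤ GM Q M a + GM Q M b := by
  unfold GM
  rw [← Finset.sum_add_distrib]
  refine Finset.sum_le_sum fun q _ => ?_
  rw [← mul_add, Nat.factorization_mul ha hb]
  refine mul_le_mul_of_nonneg_left ?_ (wQ_nonneg _ _)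
  rw [← log_mul (by positivity) (by positivity)]
  apply log_le_log (by positivity)
  simp only [Finsupp.coe_add, Pi.add_apply]
  push_cast
  have : (0:ℝ) ≤ (a.factorization q : ℝ) * (b.factorization q : ℝ) := by positivity
  nlinarith

lemma GM_le_log (M : ℕ) {a : ℕ} (ha : a ≠ 0) : GM Q M a ≤ log a := by
  rw [Real.log_nat_eq_sum_factorization, Finsupp.sum]
  have h1 : ∀ q, wQ Q q * log (1 + a.factorization q) ≤ a.factorization q * log q := by
    intro q
    by_cases h0 : a.factorization q = 0
    · rw [h0]; simp
    · have hq : q.Prime := by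
        by_contra h; exact h0 (Nat.factorization_eq_zero_of_not_prime a h)
      have l2 : log 2 ≤ log q := log_le_log (by norm_num) (by exact_mod_cast hq.two_le)
      have : log (1 + (a.factorization q : ℝ)) ≤ a.factorization q * log 2 := by
        rw [← log_pow]
        apply log_le_log (by positivity)
        have : a.factorization q + 1 ≤ 2 ^ a.factorization q := Nat.lt_two_pow_self
        have : ((a.factorization q + 1 : ℕ) : ℝ) ≤ (2 ^ a.factorization q : ℕ) := by exact_mod_cast this
        push_cast at this; linarith
      have h3 : 0 ≤ log (1 + (a.factorization q : ℝ)) := log_nonneg (by simp)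
      have h4 := wQ_le_one Q q
      have h5 := wQ_nonneg Q q
      calc _ ≤ 1 * log (1 + (a.factorization q : ℝ)) := by gcongr
        _ ≤ a.factorization q * log 2 := by linarith
        _ ≤ _ := by gcongr
  calc GM Q M a ≤ ∑ q ∈ Finset.range M, a.factorization q * log q := Finset.sum_le_sum fun q _ => h1 q
    _ ≤ ∑ q ∈ Finset.range M ∪ a.factorization.support, a.factorization q * log q := by
        apply Finset.sum_le_sum_of_subset_of_nonneg Finset.subset_union_left
        intro q _ _
        have := log_natCast_nonneg q
        positivity
    _ = _ := by
        symm
        apply Finset.sum_subset Finset.subset_union_right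
        intro q _ hq
        rw [Finsupp.notMem_support_iff.1 hq]; simp

/-- linear weight -/
noncomputable def HM (Q : ℕ → Prop) (M m : ℕ) : ℝ :=
  ∑ q ∈ Finset.range M, wQ Q q * (((q:ℝ) - 1) * m.factorization q)

lemma HM_mul (M : ℕ) {a b : ℕ} (ha : a ≠ 0) (hb : b ≠ 0) : HM Q M (a * b) = HM Q M a + HM Q M b := by
  unfold HM
  rw [← Finset.sum_add_distrib]
  refine Finset.sum_congr rfl fun q _ => ?_
  rw [Nat.factorization_mul ha hb]
  simp only [Finsupp.coe_add, Pi.add_apply]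
  push_cast; ring

lemma HM_one (M : ℕ) : HM Q M 1 = 0 := by simp [HM]

lemma HM_prime (M : ℕ) {p : ℕ} (hp : p.Prime) : HM Q M p ≤ p - 1 := by
  unfold HM
  have hp1 : (1:ℝ) ≤ p := by exact_mod_cast hp.one_lt.le
  calc _ ≤ ∑ q ∈ Finset.range M, if q = p then (p:ℝ) - 1 else 0 := by
        refine Finset.sum_le_sum fun q _ => ?_
        rw [hp.factorization]
        split_ifs with h
        · subst h
          simp only [Finsupp.single_eq_same, Nat.cast_one, mul_one]
          nlinarith [wQ_le_one Q q]
        · rw [Finsupp.single_apply, if_neg (by tauto)]; simp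
    _ ≤ _ := by
        rw [Finset.sum_ite_eq']
        split_ifs <;> linarith

lemma HM_le (M : ℕ) {b : ℕ} (hb : b ≠ 0) : HM Q M b ≤ b - 1 := by
  induction b using Nat.recOnMul with
  | zero => exact absurd rfl hb
  | one => rw [HM_one]; simp
  | prime p hp => exact HM_prime M hp
  | mul a b iha ihb =>
    have ha0 : a ≠ 0 := left_ne_zero_of_mul hb
    have hb0 : b ≠ 0 := right_ne_zero_of_mul hb
    rw [HM_mul M ha0 hb0]
    have h1 := iha ha0
    have h2 := ihb hb0
    have h3 : (1:ℝ) ≤ a := by exact_mod_cast Nat.one_le_iff_ne_zero.2 ha0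
    have h4 : (1:ℝ) ≤ b := by exact_mod_cast Nat.one_le_iff_ne_zero.2 hb0
    push_cast
    nlinarith

lemma HM_prod {ι : Type*} (M : ℕ) (T : Finset ι) (b : ι → ℕ) (hb : ∀ i ∈ T, b i ≠ 0) :
    HM Q M (∏ i ∈ T, b i) = ∑ i ∈ T, HM Q M (b i) := by
  classical
  induction T using Finset.induction_on with
  | empty => simp [HM_one]
  | insert a s ha ih =>
    rw [Finset.prod_insert ha, Finset.sum_insert ha, HM_mul M (hb a (by simp)), ih]
    · intro i hi; exact hb i (by simp [hi])
    · exact Finset.prod_ne_zero_iff.2 fun i hi => hb i (by simp [hi])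

variable (K : Type*) [Field K] [NumberField K]

lemma fK_zero : fK K 0 = 0 := by
  unfold fK
  rw [Nat.card_eq_zero]
  left
  constructor
  rintro ⟨I, h1, h2⟩
  exact h2 (Ideal.absNorm_eq_zero_iff.1 h1)

lemma fK_prod {m : ℕ} (hm : m ≠ 0) : fK K m = ∏ p ∈ m.primeFactors, fK K (p ^ m.factorization p) := by
  have := Nat.multiplicative_factorization (fK K) (fun x y h => ?_) fK_one hm
  · exact this
  · rcases Nat.eq_zero_or_pos x with rfl | hx
    · simp at h; subst h; simp [fK_one]
    · rcases Nat.eq_zero_or_pos y with rfl | hy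
      · simp at h; subst h; simp [fK_one]
      · exact fK_mul hx.ne' hy.ne' h

variable {K}

lemma log_fK_le (hK : Module.finrank ℚ K = 2) {m M : ℕ} (hm : m ≠ 0) (hM : m < M) :
    log (fK K m) ≤ GM (QK K) M m := by
  have hnn : ∀ q, 0 ≤ wQ (QK K) q * log (1 + m.factorization q) := fun q =>
    mul_nonneg (wQ_nonneg _ _) (log_nonneg (by simp))
  by_cases h0 : fK K m = 0
  · rw [h0]; simp; exact Finset.sum_nonneg fun q _ => hnn q
  · have e := fK_prod K hm
    have hne : ∀ p ∈ m.primeFactors, fK K (p ^ m.factorization p) ≠ 0 := by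
      rw [e] at h0; exact Finset.prod_ne_zero_iff.1 h0
    rw [e]; push_cast
    rw [log_prod (fun p hp => by exact_mod_cast hne p hp)]
    calc _ ≤ ∑ q ∈ m.primeFactors, wQ (QK K) q * log (1 + m.factorization q) := by
          refine Finset.sum_le_sum fun p hp => ?_
          have hpp := Nat.prime_of_mem_primeFactors hp
          by_cases hs : Spl K p
          · rw [fK_split_pow hK hpp hs, wQ, if_pos ⟨hpp, hs⟩]
            push_cast; rw [one_mul, add_comm]
          · have h1 := fK_nonsplit hK hpp hs (m.factorization p)
            have h2 := hne p hp
            have : fK K (p ^ m.factorization p) = 1 := by omega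
            rw [this]; simpa using hnn p
      _ ≤ _ := by
          apply Finset.sum_le_sum_of_subset_of_nonneg
          · intro p hp
            have := Nat.le_of_mem_primeFactors hp
            simp; omega
          · intro q _ _; exact hnn q

open Classical in
lemma fK_eq_prod (hK : Module.finrank ℚ K = 2) {n : ℕ} (hn : n ≠ 0) (h0 : fK K n ≠ 0) :
    fK K n = ∏ p ∈ n.primeFactors.filter (QK K), (n.factorization p + 1) := by
  have e := fK_prod K hn
  have hne : ∀ p ∈ n.primeFactors, fK K (p ^ n.factorization p) ≠ 0 := by
    rw [e] at h0; exact Finset.prod_ne_zero_iff.1 h0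
  rw [e, Finset.prod_filter]
  refine Finset.prod_congr rfl fun p hp => ?_
  have hpp := Nat.prime_of_mem_primeFactors hp
  split_ifs with hs
  · rw [fK_split_pow hK hpp hs.2]
  · have h1 := fK_nonsplit hK hpp (fun h => hs ⟨hpp, h⟩) (n.factorization p)
    have h2 := hne p hp
    omega

end D1

section D2
open Real

lemma sum_Lc (e : ℕ) : ∑ l ∈ Finset.range e, Lc l = log (1 + e) := by
  induction e with
  | zero => simp
  | succ n ih =>
    rw [Finset.sum_range_succ, ih, Lc, ← log_mul (by positivity) (by positivity)]
    congr 1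
    push_cast; field_simp; ring

variable {Q : ℕ → Prop}

lemma PQ_succ (hQ : ∀ q, Q q → 2 ≤ q) {u : ℝ} (hu : 0 ≤ u) :
    PQ Q (u + 1) ≤ PQ Q u + (if 1 < u then u else 0) := by
  split_ifs with h1
  · have h2 : u + 1 ≤ (⌊u⌋₊ + 2 : ℕ) := by
      have := (Nat.lt_floor_add_one u).le
      push_cast; linarith
    have h3 : u ≤ (⌊u⌋₊ + 2 : ℕ) := by linarith
    rw [PQ_eq h2, PQ_eq h3]
    have z0 : wQ Q 0 = 0 := by unfold wQ; rw [if_neg]; intro h; have := hQ 0 h; omega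
    have z1 : wQ Q 1 = 0 := by unfold wQ; rw [if_neg]; intro h; have := hQ 1 h; omega
    rw [Finset.sum_range_succ', Finset.sum_range_succ', Finset.sum_range_succ', Finset.sum_range_succ']
    rw [z0, zero_add, z1, zero_mul, zero_mul, zero_mul, zero_mul, add_zero, add_zero, add_zero, add_zero]
    calc _ ≤ ∑ q ∈ Finset.range ⌊u⌋₊, (wQ Q (q + 1 + 1) * max (u - ((q + 1 + 1 : ℕ) : ℝ)) 0 + 1) := by
          refine Finset.sum_le_sum fun q _ => ?_
          have h4 := wQ_nonneg Q (q+1+1)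
          have h5 := wQ_le_one Q (q+1+1)
          have h6 : max (u + 1 - ((q + 1 + 1 : ℕ) : ℝ)) 0 ≤ max (u - ((q + 1 + 1 : ℕ) : ℝ)) 0 + 1 := by
            apply max_le
            · linarith [le_max_left (u - ((q + 1 + 1 : ℕ) : ℝ)) 0]
            · linarith [le_max_right (u - ((q + 1 + 1 : ℕ) : ℝ)) 0]
          nlinarith
      _ = (∑ q ∈ Finset.range ⌊u⌋₊, wQ Q (q + 1 + 1) * max (u - ((q + 1 + 1 : ℕ) : ℝ)) 0) + (⌊u⌋₊ : ℝ) := by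
          rw [Finset.sum_add_distrib]; simp
      _ ≤ _ := by gcongr; exact Nat.floor_le hu
  · rw [PQ_zero hQ (by linarith), add_zero]; exact PQ_nonneg _

lemma harm_le {x : ℝ} (hx : 1 ≤ x) (E : ℕ) :
    ∑ l ∈ Finset.range E, (if 1 < x * Lc l then Lc l else 0) ≤ 1 + log x := by
  have h1 : ∑ l ∈ Finset.range E, (if 1 < x * Lc l then Lc l else 0) ≤ ∑ l ∈ Finset.range ⌊x⌋₊, 1 / ((l:ℝ) + 1) := by
    calc _ ≤ ∑ l ∈ Finset.range E, (if l ∈ Finset.range ⌊x⌋₊ then 1 / ((l:ℝ) + 1) else 0) := by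
          refine Finset.sum_le_sum fun l _ => ?_
          split_ifs with h1 h2 h2
          · exact Lc_le l
          · exfalso
            apply h2
            have := Lc_le l
            rw [Finset.mem_range, ← Nat.succ_le_iff, Nat.le_floor_iff (by linarith)]
            push_cast
            have h3 : x * Lc l ≤ x * (1 / ((l:ℝ) + 1)) := by gcongr
            rw [mul_one_div] at h3
            have h4 : 1 < x / ((l:ℝ) + 1) := by linarith
            rw [one_lt_div (by positivity)] at h4
            linarith
          · positivity
          · exact le_refl _
      _ = ∑ l ∈ (Finset.range E).filter (fun l => l ∈ Finset.range ⌊x⌋₊), 1 / ((l:ℝ) + 1) := by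
          rw [← Finset.sum_filter]
      _ ≤ _ := by
          apply Finset.sum_le_sum_of_subset_of_nonneg
          · intro l; simp
          · intro l _ _; positivity
  refine h1.trans ?_
  have h2 := harmonic_floor_le_one_add_log x hx
  refine le_trans (le_of_eq ?_) h2
  unfold harmonic
  push_cast
  refine Finset.sum_congr rfl fun l _ => ?_
  rw [one_div]

lemma GM_le_dual (hQ : ∀ q, Q q → 2 ≤ q) (M m : ℕ) {x : ℝ} (hx : 1 ≤ x) :
    GM Q M m ≤ HM Q M m / x + DQ Q x + 1 + log x := by
  have hx0 : 0 < x := by linarith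
  -- E bounds all exponents
  set E := ∑ q ∈ Finset.range M, m.factorization q with hE
  have step : ∀ q ∈ Finset.range M, wQ Q q * log (1 + m.factorization q) ≤
      wQ Q q * (((q:ℝ) - 1) * m.factorization q) / x +
      ∑ l ∈ Finset.range E, wQ Q q * max (x * Lc l + 1 - q) 0 / x := by
    intro q hq
    have hqE : m.factorization q ≤ E := Finset.single_le_sum (f := fun q => m.factorization q) (fun _ _ => Nat.zero_le _) hq
    set e := m.factorization q with he
    have h1 : log (1 + (e:ℝ)) - ((q:ℝ) - 1) * e / x ≤ ∑ l ∈ Finset.range E, max (x * Lc l + 1 - q) 0 / x := by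
      rw [← sum_Lc]
      calc _ = ∑ l ∈ Finset.range e, (x * Lc l + 1 - q) / x := by
            rw [← Finset.sum_div, Finset.sum_sub_distrib, Finset.sum_add_distrib, ← Finset.mul_sum]
            simp; field_simp; ring
        _ ≤ ∑ l ∈ Finset.range e, max (x * Lc l + 1 - q) 0 / x := by
            refine Finset.sum_le_sum fun l _ => ?_
            gcongr; exact le_max_left _ _
        _ ≤ _ := by
            apply Finset.sum_le_sum_of_subset_of_nonneg
            · simpa using hqE
            · intro l _ _; exact div_nonneg (le_max_right _ _) hx0.le
    have h2 := mul_le_mul_of_nonneg_left h1 (wQ_nonneg Q q)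
    rw [Finset.mul_sum] at h2
    have e3 : ∑ l ∈ Finset.range E, wQ Q q * max (x * Lc l + 1 - q) 0 / x =
      ∑ l ∈ Finset.range E, wQ Q q * (max (x * Lc l + 1 - q) 0 / x) :=
      Finset.sum_congr rfl fun l _ => by ring
    rw [e3]
    have e4 : wQ Q q * (((q:ℝ) - 1) * e) / x = wQ Q q * (((q:ℝ) - 1) * e / x) := by ring
    rw [e4]; linarith
  have h1 : GM Q M m ≤ HM Q M m / x + ∑ l ∈ Finset.range E, PQ Q (x * Lc l + 1) / x := by
    unfold GM HM
    refine (Finset.sum_le_sum step).trans ?_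
    rw [Finset.sum_add_distrib, Finset.sum_div, Finset.sum_comm]
    gcongr with l hl
    rw [← Finset.sum_div]
    gcongr
    have h2 : x * Lc l + 1 ≤ (max M (⌊x * Lc l + 1⌋₊ + 1) : ℕ) := by
      have h3 := (Nat.lt_floor_add_one (x * Lc l + 1)).le
      refine h3.trans ?_
      have : ⌊x * Lc l + 1⌋₊ + 1 ≤ max M (⌊x * Lc l + 1⌋₊ + 1) := le_max_right _ _
      exact_mod_cast this
    rw [PQ_eq h2]
    apply Finset.sum_le_sum_of_subset_of_nonneg
    · intro q; simp; tauto
    · intro q _ _; exact wmax_nonneg _ _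
  have h2 : ∑ l ∈ Finset.range E, PQ Q (x * Lc l + 1) / x ≤ DQ Q x + (1 + log x) := by
    calc _ ≤ ∑ l ∈ Finset.range E, (PQ Q (x * Lc l) / x + (if 1 < x * Lc l then Lc l else 0)) := by
          refine Finset.sum_le_sum fun l _ => ?_
          have h3 := PQ_succ hQ (mul_nonneg hx0.le (Lc_pos l).le)
          calc _ ≤ (PQ Q (x * Lc l) + (if 1 < x * Lc l then x * Lc l else 0)) / x := by gcongr
            _ = _ := by
              split_ifs
              · field_simp
              · simp
      _ = (∑ l ∈ Finset.range E, PQ Q (x * Lc l)) / x + ∑ l ∈ Finset.range E, (if 1 < x * Lc l then Lc l else 0) := by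
          rw [Finset.sum_add_distrib, Finset.sum_div]
      _ ≤ _ := by
          unfold DQ
          gcongr
          · exact (PQ_summable hQ hx0.le).sum_le_tsum _ (fun l _ => PQ_nonneg _)
          · exact harm_le hx E
  linarith

end D2

section D3
open Real

variable {K : Type*} [Field K] [NumberField K]

lemma QK_two : ∀ q, QK K q → 2 ≤ q := fun _ h => h.1.two_le

lemma DQ_nonneg {Q : ℕ → Prop} {x : ℝ} (hx : 0 ≤ x) : 0 ≤ DQ Q x :=
  div_nonneg (tsum_nonneg fun _ => PQ_nonneg _) hx

open Classical in
lemma upper_arith (hK : Module.finrank ℚ K = 2) {n : ℕ} (hn : n ≠ 0) {X Z lam : ℝ} (hX : log n ≤ X)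
    (hZ : 1 < Z) (hlam : 1 ≤ lam) :
    log (fK K (fK K n)) ≤ (Z + 1) * log (2 * X + 1) + X / log Z / lam + DQ (QK K) lam + 1 + log lam := by
  have hX0 : 0 ≤ X := (log_natCast_nonneg n).trans hX
  have hlZ : 0 < log Z := log_pos hZ
  have hll : 0 ≤ log lam := log_nonneg hlam
  have hl2 : 0 ≤ log (2 * X + 1) := log_nonneg (by linarith)
  have hD := DQ_nonneg (Q := QK K) (show 0 ≤ lam by linarith)
  by_cases h0 : fK K n = 0
  · rw [h0, fK_zero]; simp; positivity
  set m := fK K n with hm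
  set T := n.primeFactors.filter (QK K) with hT
  have e : m = ∏ p ∈ T, (n.factorization p + 1) := fK_eq_prod hK hn h0
  set T1 := T.filter (fun p : ℕ => (p:ℝ) < Z) with hT1
  set T2 := T.filter (fun p : ℕ => ¬ (p:ℝ) < Z) with hT2
  set m1 := ∏ p ∈ T1, (n.factorization p + 1) with hm1
  set m2 := ∏ p ∈ T2, (n.factorization p + 1) with hm2
  have e2 : m = m1 * m2 := by
    rw [e, hm1, hm2, Finset.prod_filter_mul_prod_filter_not]
  have hm10 : m1 ≠ 0 := Finset.prod_ne_zero_iff.2 fun p _ => by omega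
  have hm20 : m2 ≠ 0 := Finset.prod_ne_zero_iff.2 fun p _ => by omega
  have hlogn : log n = ∑ p ∈ n.primeFactors, n.factorization p * log p := by
    rw [Real.log_nat_eq_sum_factorization, Finsupp.sum]; rfl
  have hterm : ∀ p, 0 ≤ n.factorization p * log p := fun p => by
    have := log_natCast_nonneg p; positivity
  have hv : ∀ p ∈ T, (n.factorization p : ℝ) ≤ 2 * X := by
    intro p hp
    have hp' : p ∈ n.primeFactors := (Finset.mem_filter.1 hp).1
    have h1 : (n.factorization p : ℝ) * log p ≤ log n := by
      rw [hlogn]; exact Finset.single_le_sum (f := fun p : ℕ => (n.factorization p : ℝ) * log p) (fun q _ => hterm q) hp'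
    have h2 : (1/2:ℝ) ≤ log p := by
      have := log_le_log (show (0:ℝ) < 2 by norm_num) (show (2:ℝ) ≤ p by exact_mod_cast (Nat.prime_of_mem_primeFactors hp').two_le)
      have := log_two_gt_d9
      linarith
    have h3 : (n.factorization p : ℝ) * (1/2) ≤ n.factorization p * log p := by gcongr
    linarith
  have b1 : GM (QK K) (m+1) m1 ≤ (Z + 1) * log (2 * X + 1) := by
    refine (GM_le_log _ hm10).trans ?_
    rw [hm1]; push_cast
    rw [log_prod (fun p _ => by positivity)]
    calc _ ≤ ∑ p ∈ T1, log (2 * X + 1) := by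
          refine Finset.sum_le_sum fun p hp => ?_
          apply log_le_log (by positivity)
          linarith [hv p (Finset.mem_filter.1 hp).1]
      _ = T1.card * log (2 * X + 1) := by rw [Finset.sum_const, nsmul_eq_mul]
      _ ≤ _ := by
          gcongr
          have h1 : T1 ⊆ Finset.range (⌊Z⌋₊ + 1) := by
            intro p hp
            have := (Finset.mem_filter.1 hp).2
            rw [Finset.mem_range, Nat.lt_succ_iff]
            exact Nat.le_floor this.le
          have h2 := Finset.card_le_card h1
          rw [Finset.card_range] at h2
          have h3 : (T1.card : ℝ) ≤ ⌊Z⌋₊ + 1 := by exact_mod_cast h2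
          linarith [Nat.floor_le (show 0 ≤ Z by linarith)]
  have b2 : HM (QK K) (m+1) m2 ≤ X / log Z := by
    rw [hm2, HM_prod _ _ _ (fun p _ => by omega), le_div_iff₀ hlZ, Finset.sum_mul]
    calc _ ≤ ∑ p ∈ T2, n.factorization p * log p := by
          refine Finset.sum_le_sum fun p hp => ?_
          have h1 := HM_le (Q := QK K) (m+1) (b := n.factorization p + 1) (by omega)
          push_cast at h1
          have h2 : log Z ≤ log p := log_le_log (by linarith) (not_lt.1 (Finset.mem_filter.1 hp).2)
          calc _ ≤ n.factorization p * log Z := by gcongr; linarith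
            _ ≤ _ := by gcongr
      _ ≤ ∑ p ∈ n.primeFactors, n.factorization p * log p := by
          apply Finset.sum_le_sum_of_subset_of_nonneg
          · exact (Finset.filter_subset _ _).trans (Finset.filter_subset _ _)
          · intro p _ _; exact hterm p
      _ ≤ X := by rw [← hlogn]; exact hX
  have b3 := GM_le_dual (QK_two (K := K)) (m+1) m2 hlam
  have b4 := log_fK_le hK h0 (Nat.lt_succ_self m)
  have b5 := GM_mul (Q := QK K) (m+1) hm10 hm20
  rw [← e2] at b5
  have b6 : HM (QK K) (m+1) m2 / lam ≤ X / log Z / lam := by gcongr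
  have b4' : log (fK K m) ≤ GM (QK K) (m+1) m := b4
  linarith

lemma upper_asymp {Q : ℕ → Prop} (hD : ∃ C : ℝ, 0 < C ∧ ∀ᶠ x : ℝ in atTop,
      |DQ Q x - SL * x / (4 * log x)| ≤ C * (x * log (log x) / (log x) ^ 2)) :
    ∃ C : ℝ, 0 < C ∧ ∀ᶠ X : ℝ in atTop, ∃ Z lam : ℝ, 1 < Z ∧ 1 ≤ lam ∧
      (Z + 1) * log (2 * X + 1) + X / log Z / lam + DQ Q lam + 1 + log lam ≤
        2 * √SL * (√X / log X) + C * (√X / log X * (log (log X) / log X)) := by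
  obtain ⟨C, hC, hD⟩ := hD
  have hS := SL_pos
  have hsS : 0 < √SL := sqrt_pos.2 hS
  have hsS2 : √SL * √SL = SL := mul_self_sqrt hS.le
  have hlamT : Tendsto (fun X : ℝ => 2 / √SL * √X) atTop atTop :=
    Tendsto.const_mul_atTop (by positivity) tendsto_sqrt_atTop
  refine ⟨4 + 24 * √SL + 32 * C / √SL + 1, by positivity, ?_⟩
  filter_upwards [hlamT.eventually hD, hlamT.eventually (eventually_ge_atTop 1),
    eventually_ge_atTop 3, ev_log_ge 4, ev_loglog_ge 1, ev_loglog_le (1/12) (by norm_num),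
    ev_loglog_ge (log √SL), ev_log_ge (2 * (log 2 - log √SL)), ev_log_pow_le 6 (1/4) (by norm_num)]
    with X hDX hlam1 hX3 hℓ1 hℓ2 hℓ12 hSl hSl2 h6
  set a := √X with ha
  set ℓ := log X with hℓ
  set r := log ℓ with hr
  have hX0 : 0 < X := by linarith
  have ha0 : 0 < a := sqrt_pos.2 hX0
  have haa : a * a = X := mul_self_sqrt hX0.le
  have hla : log a = ℓ / 2 := by rw [ha, log_sqrt hX0.le]
  have hℓ0 : 0 < ℓ := by linarith
  have h2a : 2 * ℓ ^ 3 ≤ a := by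
    apply le_sqrt_of_sq_le
    nlinarith
  set lam := 2 / √SL * a with hlam
  have hllam : log lam = log 2 - log √SL + ℓ / 2 := by
    rw [hlam, log_mul (by positivity) (by positivity), log_div (by norm_num) (by positivity), hla]
  set Z := a / ℓ ^ 3 with hZ
  have hZ2 : 2 ≤ Z := by rw [hZ, le_div_iff₀ (by positivity)]; exact h2a
  have hlZ : log Z = (ℓ - 6 * r) / 2 := by
    rw [hZ, log_div (by positivity) (by positivity), hla, log_pow]; push_cast; ring
  refine ⟨Z, lam, by linarith, hlam1, ?_⟩
  set W := a / ℓ * (r / ℓ) with hW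
  have hW1 : a / ℓ ^ 2 ≤ W := by
    rw [hW, div_mul_div_comm, sq]; gcongr; nlinarith
  -- (a)
  have t1 : (Z + 1) * log (2 * X + 1) ≤ 4 * W := by
    have h1 : log (2 * X + 1) ≤ 2 * ℓ := by
      rw [show 2 * ℓ = log (X ^ 2) by rw [log_pow]; push_cast; rfl]
      apply log_le_log (by positivity); nlinarith
    have h0 : 0 ≤ log (2 * X + 1) := log_nonneg (by linarith)
    calc _ ≤ (2 * Z) * (2 * ℓ) := by gcongr; linarith
      _ = 4 * (a / ℓ ^ 2) := by rw [hZ]; field_simp; norm_num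
      _ ≤ _ := by gcongr
  have hden : 0 < ℓ - 6 * r := by linarith
  have hrec : 1 / (ℓ - 6 * r) ≤ 1 / ℓ + 12 * r / ℓ ^ 2 := by
    rw [div_le_iff₀ hden]
    have : (1 / ℓ + 12 * r / ℓ ^ 2) * (ℓ - 6 * r) = 1 + 6 * r / ℓ - 72 * r^2 / ℓ ^ 2 := by field_simp; ring
    rw [this]
    have : 72 * r^2 / ℓ^2 ≤ 6 * r / ℓ := by
      rw [div_le_div_iff₀ (by positivity) hℓ0]
      have : 0 ≤ r * ℓ := by positivity
      nlinarith [mul_nonneg this (show 0 ≤ ℓ/12 - r by linarith)]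
    linarith
  have hmain : √SL * a / (ℓ - 6 * r) ≤ √SL * (a / ℓ) + 12 * √SL * W := by
    calc √SL * a / (ℓ - 6 * r) = √SL * a * (1 / (ℓ - 6 * r)) := by ring
      _ ≤ √SL * a * (1 / ℓ + 12 * r / ℓ ^ 2) := by gcongr
      _ = _ := by rw [hW]; field_simp
  have t2 : X / log Z / lam ≤ √SL * (a / ℓ) + 12 * √SL * W := by
    refine le_trans (le_of_eq ?_) hmain
    rw [hlZ, hlam, ← haa]; field_simp
  have hll1 : (ℓ - 6 * r) / 2 ≤ log lam := by
    rw [hllam]; have := log_two_gt_d9; linarith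
  have hll2 : ℓ / 4 ≤ log lam := by linarith
  have hll3 : log lam ≤ ℓ := by rw [hllam]; linarith
  have t3 : DQ Q lam ≤ √SL * (a / ℓ) + 12 * √SL * W + 32 * C / √SL * W := by
    have h1 := (abs_le.1 hDX).2
    have h2 : SL * lam / (4 * log lam) ≤ √SL * a / (ℓ - 6 * r) := by
      calc _ ≤ SL * lam / (4 * ((ℓ - 6 * r) / 2)) := by gcongr
        _ = _ := by rw [hlam, ← hsS2]; field_simp; norm_num
    have h3 : C * (lam * log (log lam) / (log lam) ^ 2) ≤ 32 * C / √SL * W := by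
      have h4 : log (log lam) ≤ r := log_le_log (by linarith) hll3
      calc _ ≤ C * (lam * r / (ℓ / 4) ^ 2) := by gcongr
        _ = _ := by rw [hlam, hW]; field_simp; norm_num
    linarith
  have t4 : 1 + log lam ≤ W := by
    refine le_trans ?_ hW1
    rw [le_div_iff₀ (by positivity)]
    calc (1 + log lam) * ℓ^2 ≤ (2 * ℓ) * ℓ ^ 2 := by gcongr; linarith
      _ = 2 * ℓ ^ 3 := by ring
      _ ≤ a := h2a
  have e : (4 + 24 * √SL + 32 * C / √SL + 1) * W = 4 * W + 24 * √SL * W + 32 * C / √SL * W + W := by ring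
  rw [e]
  linarith

end D3

section E1
open Real

open Classical in
noncomputable def SS (Q : ℕ → Prop) (k : ℕ) : Finset (ℕ × ℕ) :=
  (Finset.range k ×ˢ Finset.range (k + 1)).filter (fun s => Q s.2 ∧ (s.2 : ℝ) ≤ k * Lc s.1)

noncomputable def VV (Q : ℕ → Prop) (k : ℕ) : ℝ := ∑ s ∈ SS Q k, Lc s.1
noncomputable def CC (Q : ℕ → Prop) (k : ℕ) : ℝ := ∑ s ∈ SS Q k, (s.2 : ℝ)

variable {Q : ℕ → Prop}

lemma mem_SS (hQ : ∀ q, Q q → 2 ≤ q) {k : ℕ} {s : ℕ × ℕ} :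
    s ∈ SS Q k ↔ Q s.2 ∧ (s.2 : ℝ) ≤ k * Lc s.1 := by
  classical
  unfold SS
  rw [Finset.mem_filter, Finset.mem_product, Finset.mem_range, Finset.mem_range]
  refine ⟨fun h => h.2, fun h => ⟨?_, h⟩⟩
  have h2 := hQ _ h.1
  have h2' : (2:ℝ) ≤ s.2 := by exact_mod_cast h2
  have h3 := Lc_le s.1
  have h4 : (k:ℝ) * Lc s.1 ≤ k * (1 / ((s.1:ℝ) + 1)) := by gcongr
  constructor
  · have : (2:ℝ) ≤ k / ((s.1:ℝ)+1) := by rw [← mul_one_div]; linarith [h.2]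
    rw [le_div_iff₀ (by positivity)] at this
    have h5 : ((s.1:ℝ)) < k := by have : (0:ℝ) ≤ s.1 := by positivity
                                  linarith
    exact_mod_cast h5
  · have h5 : (k:ℝ) * Lc s.1 ≤ k * 1 := by gcongr; exact Lc_le_one _
    have : (s.2:ℝ) ≤ k := by linarith [h.2]
    have : s.2 ≤ k := by exact_mod_cast this
    omega

lemma tsum_PQ (hQ : ∀ q, Q q → 2 ≤ q) (k : ℕ) :
    ∑' l, PQ Q ((k:ℝ) * Lc l) = k * VV Q k - CC Q k := by
  classical
  rw [tsum_eq_sum (s := Finset.range k)]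
  · have : ∀ l ∈ Finset.range k, PQ Q ((k:ℝ) * Lc l) = ∑ q ∈ Finset.range (k+1),
        if Q q ∧ (q:ℝ) ≤ k * Lc l then (k * Lc l - q) else 0 := by
      intro l _
      rw [PQ_eq (M := k + 1)]
      · refine Finset.sum_congr rfl fun q _ => ?_
        unfold wQ
        by_cases h1 : Q q <;> by_cases h2 : (q:ℝ) ≤ k * Lc l
        · rw [if_pos h1, if_pos ⟨h1, h2⟩, max_eq_left (by linarith), one_mul]
        · rw [if_pos h1, if_neg (by tauto), max_eq_right (by linarith), mul_zero]
        · rw [if_neg h1, if_neg (by tauto), zero_mul]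
        · rw [if_neg h1, if_neg (by tauto), zero_mul]
      · have h5 : (k:ℝ) * Lc l ≤ k * 1 := by gcongr; exact Lc_le_one _
        push_cast; linarith
    rw [Finset.sum_congr rfl this]
    rw [← Finset.sum_product' (f := fun l q => if Q q ∧ (q:ℝ) ≤ k * Lc l then (k * Lc l - q) else 0)]
    unfold VV CC
    rw [Finset.mul_sum, ← Finset.sum_sub_distrib]
    unfold SS
    rw [Finset.sum_filter]
  · intro l hl
    apply PQ_zero hQ
    simp at hl
    have h4 : (k:ℝ) * Lc l ≤ k * (1 / ((l:ℝ) + 1)) := by gcongr; exact Lc_le l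
    have h5 : (k:ℝ) * (1 / ((l:ℝ) + 1)) ≤ 1 := by
      rw [mul_one_div, div_le_one (by positivity)]
      have : (k:ℝ) ≤ l := by exact_mod_cast hl
      linarith
    linarith

lemma VV_eq (hQ : ∀ q, Q q → 2 ≤ q) {k : ℕ} (hk : k ≠ 0) : VV Q k = DQ Q k + CC Q k / k := by
  have : (k:ℝ) ≠ 0 := by exact_mod_cast hk
  unfold DQ
  rw [tsum_PQ hQ]; field_simp; ring

lemma VV_succ (hQ : ∀ q, Q q → 2 ≤ q) (k : ℕ) : VV Q (k+1) ≤ VV Q k + log (k + 2) := by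
  classical
  unfold VV
  rw [← Finset.sum_inter_add_sum_sdiff (SS Q (k+1)) (SS Q k)]
  apply add_le_add
  · apply Finset.sum_le_sum_of_subset_of_nonneg Finset.inter_subset_right
    intro s _ _; exact (Lc_pos _).le
  · have e : log ((k:ℝ) + 2) = ∑ l ∈ Finset.range (k+1), Lc l := by
      rw [sum_Lc]; congr 1; push_cast; ring
    rw [e]
    have hinj : Set.InjOn Prod.fst ((SS Q (k+1) \ SS Q k : Finset (ℕ × ℕ)) : Set (ℕ × ℕ)) := by
      have key : ∀ s ∈ (SS Q (k+1) \ SS Q k : Finset (ℕ × ℕ)), s.2 = ⌊((k:ℝ)+1) * Lc s.1⌋₊ := by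
        intro s hs
        rw [Finset.mem_sdiff, mem_SS hQ, mem_SS hQ] at hs
        obtain ⟨⟨h1, h2⟩, h3⟩ := hs
        have h4 : (k:ℝ) * Lc s.1 < s.2 := by
          by_contra h; exact h3 ⟨h1, by linarith⟩
        push_cast at h2
        symm
        rw [Nat.floor_eq_iff (by have := Lc_pos s.1; positivity)]
        refine ⟨h2, ?_⟩
        have := Lc_le_one s.1
        linarith
      intro s hs t ht hst
      have h1 := key s hs
      have h2 := key t ht
      have hst : s.1 = t.1 := hst
      rw [hst] at h1
      exact Prod.ext hst (by omega)
    rw [← Finset.sum_image (f := fun l => Lc l) hinj]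
    apply Finset.sum_le_sum_of_subset_of_nonneg
    · intro l hl
      rw [Finset.mem_image] at hl
      obtain ⟨s, hs, rfl⟩ := hl
      have := (Finset.mem_sdiff.1 hs).1
      unfold SS at this
      exact (Finset.mem_product.1 (Finset.mem_filter.1 this).1).1
    · intro l _ _; exact (Lc_pos _).le

lemma CC_le (k : ℕ) : CC Q k ≤ (k:ℝ) ^ 2 * (k + 1) := by
  classical
  unfold CC
  calc _ ≤ ∑ s ∈ Finset.range k ×ˢ Finset.range (k + 1), (k:ℝ) := by
        unfold SS
        refine (Finset.sum_le_sum (g := fun _ => (k:ℝ)) ?_).trans (Finset.sum_le_sum_of_subset_of_nonneg (Finset.filter_subset _ _) ?_)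
        · intro s hs
          have := (Finset.mem_product.1 (Finset.mem_filter.1 hs).1).2
          rw [Finset.mem_range] at this
          have : s.2 ≤ k := by omega
          exact_mod_cast this
        · intro s _ _; positivity
    _ = _ := by simp; ring

lemma card_SS_le (hQ : ∀ q, Q q → 2 ≤ q) (k : ℕ) : ((SS Q k).card : ℝ) ≤ k * log (k + 1) := by
  classical
  have e : (k:ℝ) * log ((k:ℝ) + 1) = ∑ l ∈ Finset.range k, k * Lc l := by
    rw [← Finset.mul_sum, sum_Lc, add_comm]
  have h0 : (SS Q k).card = ∑ l ∈ Finset.range k, ((SS Q k).filter (fun s => s.1 = l)).card := by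
    apply Finset.card_eq_sum_card_fiberwise
    intro s hs
    unfold SS at hs
    exact (Finset.mem_product.1 (Finset.mem_filter.1 hs).1).1
  rw [e, h0]; push_cast
  refine Finset.sum_le_sum fun l _ => ?_
  have h1 : ((SS Q k).filter (fun s => s.1 = l)).card ≤ (Finset.Icc 1 ⌊(k:ℝ) * Lc l⌋₊).card := by
    apply Finset.card_le_card_of_injOn Prod.snd
    · intro s hs
      have hs := Finset.mem_filter.1 hs
      obtain ⟨h1, h2⟩ := (mem_SS hQ).1 hs.1
      rw [hs.2] at h2
      simp only [Finset.coe_Icc, Set.mem_Icc]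
      exact ⟨by have := hQ _ h1; omega, Nat.le_floor h2⟩
    · intro s hs t ht hst
      have hs := (Finset.mem_filter.1 hs).2
      have ht := (Finset.mem_filter.1 ht).2
      exact Prod.ext (by rw [hs, ht]) hst
  rw [Nat.card_Icc, Nat.add_sub_cancel] at h1
  calc _ ≤ ((⌊(k:ℝ) * Lc l⌋₊ : ℕ) : ℝ) := by exact_mod_cast h1
    _ ≤ _ := Nat.floor_le (by have := Lc_pos l; positivity)

lemma CC_ge (hQ : ∀ q, Q q → 2 ≤ q) (k : ℕ) {v : ℝ} (hv : 0 ≤ v) (hk : k ≠ 0) :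
    v / (k * Lc 0) * PQ Q (k * Lc 0) - v ^ 2 ≤ CC Q k := by
  classical
  have hL := Lc_pos 0
  have hk0 : (0:ℝ) < k := by exact_mod_cast Nat.pos_of_ne_zero hk
  set u : ℝ := k * Lc 0 with hu
  have hu0 : 0 < u := by positivity
  have huk : u ≤ k := by
    have h5 : (k:ℝ) * Lc 0 ≤ k * 1 := by gcongr; exact Lc_le_one _
    linarith
  have h1 : ∑ q ∈ Finset.range (k+1), (if Q q ∧ (q:ℝ) ≤ u then (q:ℝ) else 0) ≤ CC Q k := by
    unfold CC
    rw [← Finset.sum_filter]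
    rw [show ∑ q ∈ Finset.range (k+1) with (Q q ∧ (q:ℝ) ≤ u), (q:ℝ) =
      ∑ s ∈ ((Finset.range (k+1)).filter (fun q => Q q ∧ (q:ℝ) ≤ u)).image (fun q => (0, q)), (s.2 : ℝ) by
        rw [Finset.sum_image]; intro a _ b _ h; simpa using h]
    apply Finset.sum_le_sum_of_subset_of_nonneg
    · intro s hs
      rw [Finset.mem_image] at hs
      obtain ⟨q, hq, rfl⟩ := hs
      rw [mem_SS hQ]
      exact (Finset.mem_filter.1 hq).2
    · intro s _ _; positivity
  refine le_trans ?_ h1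
  have h2 : ∑ q ∈ Finset.range (k+1), (v / u * (wQ Q q * max (u - q) 0) - (if q ∈ Finset.Icc 1 ⌊v⌋₊ then v else 0)) ≤
      ∑ q ∈ Finset.range (k+1), (if Q q ∧ (q:ℝ) ≤ u then (q:ℝ) else 0) := by
    refine Finset.sum_le_sum fun q _ => ?_
    have hi : 0 ≤ (if q ∈ Finset.Icc 1 ⌊v⌋₊ then v else 0) := by split_ifs <;> simp [hv]
    by_cases h1 : Q q
    · have hw : wQ Q q = 1 := by unfold wQ; exact if_pos h1
      by_cases h2 : (q:ℝ) ≤ u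
      · rw [hw, if_pos (show Q q ∧ (q:ℝ) ≤ u from ⟨h1, h2⟩), max_eq_left (by linarith), one_mul]
        have hle : v / u * (u - q) ≤ v := by
          rw [div_mul_eq_mul_div, div_le_iff₀ hu0]
          have : (0:ℝ) ≤ q := by positivity
          nlinarith [mul_nonneg hv this]
        by_cases h3 : (q:ℝ) ≤ v
        · have hm : q ∈ Finset.Icc 1 ⌊v⌋₊ := by
            rw [Finset.mem_Icc]; exact ⟨by have := hQ _ h1; omega, Nat.le_floor h3⟩
          rw [if_pos hm]
          have : (0:ℝ) ≤ q := by positivity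
          linarith
        · linarith
      · rw [if_neg (show ¬ (Q q ∧ (q:ℝ) ≤ u) by tauto), max_eq_right (by linarith), mul_zero, mul_zero]
        linarith
    · have hw : wQ Q q = 0 := by unfold wQ; exact if_neg h1
      rw [hw, if_neg (show ¬ (Q q ∧ (q:ℝ) ≤ u) by tauto), zero_mul, mul_zero]; linarith
  refine le_trans ?_ h2
  rw [Finset.sum_sub_distrib, ← Finset.mul_sum, ← PQ_eq (M := k+1) (by push_cast; linarith)]
  apply sub_le_sub_left
  rw [← Finset.sum_filter]
  calc _ ≤ ∑ q ∈ Finset.Icc 1 ⌊v⌋₊, v := by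
        apply Finset.sum_le_sum_of_subset_of_nonneg
        · intro q hq; exact (Finset.mem_filter.1 hq).2
        · intro _ _ _; exact hv
    _ = ⌊v⌋₊ * v := by simp
    _ ≤ _ := by have := Nat.floor_le hv; rw [sq]; gcongr

open Classical in
lemma card_ge (Y : ℝ) (hY : 0 < Y) : PQ Q Y / Y ≤ (((Finset.range (⌊Y⌋₊+1)).filter Q).card : ℝ) := by
  rw [div_le_iff₀ hY]
  unfold PQ
  rw [Finset.card_eq_sum_ones, Nat.cast_sum, Finset.sum_filter, Finset.sum_mul]
  refine Finset.sum_le_sum fun q _ => ?_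
  unfold wQ
  have : (0:ℝ) ≤ q := by positivity
  split_ifs
  · rw [one_mul]; push_cast; rw [one_mul]; exact max_le (by linarith) hY.le
  · simp

end E1

section E2
open Real

variable {K : Type*} [Field K] [NumberField K]

lemma fK_prod_split (hK : Module.finrank ℚ K = 2) {ι : Type*} (T : Finset ι) (φ : ι → ℕ) (a : ι → ℕ)
    (hφ : ∀ i ∈ T, QK K (φ i)) (hinj : Set.InjOn φ T) :
    fK K (∏ i ∈ T, φ i ^ a i) = ∏ i ∈ T, (a i + 1) := by
  classical
  induction T using Finset.induction_on with
  | empty => simp [fK_one]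
  | insert j T hj ih =>
    rw [Finset.prod_insert hj, Finset.prod_insert hj]
    have hjQ := hφ j (Finset.mem_insert_self _ _)
    have hTQ : ∀ i ∈ T, QK K (φ i) := fun i hi => hφ i (Finset.mem_insert_of_mem hi)
    rw [fK_mul, fK_split_pow hK hjQ.1 hjQ.2, ih hTQ (hinj.mono (by simp))]
    · exact pow_ne_zero _ hjQ.1.ne_zero
    · exact Finset.prod_ne_zero_iff.2 fun i hi => pow_ne_zero _ (hTQ i hi).1.ne_zero
    · apply Nat.Coprime.prod_right
      intro i hi
      apply Nat.Coprime.pow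
      rw [Nat.coprime_primes hjQ.1 (hTQ i hi).1]
      intro h
      have := hinj (by simp) (by simp [hi]) h
      exact hj (this ▸ hi)

lemma Lc_anti {a b : ℕ} (h : a ≤ b) : Lc b ≤ Lc a := by
  unfold Lc
  apply log_le_log (by positivity)
  gcongr

lemma finset_lower (A : Finset ℕ) (h : ∀ a ∈ A, ∀ b, b ≤ a → b ∈ A) : A = Finset.range A.card := by
  classical
  have hex : ∃ m, m ∉ A := Infinite.exists_notMem_finset A
  have e : A = Finset.range (Nat.find hex) := by
    ext a
    rw [Finset.mem_range]
    constructor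
    · intro ha
      by_contra hc
      exact Nat.find_spec hex (h a ha _ (by omega))
    · intro ha
      by_contra hc
      exact Nat.find_min hex ha hc
  conv_rhs => rw [e, Finset.card_range]
  exact e

lemma QK_two' : ∀ q, QK K q → 2 ≤ q := fun _ h => h.1.two_le

open Classical in
lemma VV_log (k : ℕ) : log (∏ q ∈ (SS (QK K) k).image Prod.snd, ((((SS (QK K) k).filter (fun s => s.2 = q)).card + 1 : ℕ) : ℝ))
    = VV (QK K) k := by
  rw [log_prod (fun q _ => by positivity)]
  unfold VV
  rw [← Finset.sum_fiberwise_of_maps_to (g := Prod.snd) (t := (SS (QK K) k).image Prod.snd)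
    (fun s hs => Finset.mem_image_of_mem _ hs)]
  refine Finset.sum_congr rfl fun q hq => ?_
  set F := (SS (QK K) k).filter (fun s => s.2 = q) with hF
  have hinj : Set.InjOn Prod.fst (F : Set (ℕ × ℕ)) := by
    intro s hs t ht hst
    have hs := (Finset.mem_filter.1 hs).2
    have ht := (Finset.mem_filter.1 ht).2
    exact Prod.ext hst (by rw [hs, ht])
  have hA : F.image Prod.fst = Finset.range F.card := by
    rw [← Finset.card_image_of_injOn hinj]
    apply finset_lower
    intro a ha b hb
    rw [Finset.mem_image] at ha ⊢
    obtain ⟨s, hs, rfl⟩ := ha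
    refine ⟨(b, q), ?_, rfl⟩
    rw [hF, Finset.mem_filter, mem_SS QK_two'] at hs ⊢
    obtain ⟨⟨h1, h2⟩, h3⟩ := hs
    rw [h3] at h1 h2
    refine ⟨⟨h1, h2.trans ?_⟩, rfl⟩
    have := Lc_anti hb
    show (k:ℝ) * Lc s.1 ≤ k * Lc b
    gcongr
  rw [← Finset.sum_image (f := fun l => Lc l) hinj, hA, sum_Lc]
  push_cast; rw [add_comm]

open Classical in
lemma lower_arith (hK : Module.finrank ℚ K = 2) (k : ℕ) {X Y : ℝ} (hY : 1 ≤ Y)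
    (hcard : (SS (QK K) k).card ≤ ((Finset.range (⌊Y⌋₊+1)).filter (QK K)).card)
    (hX : CC (QK K) k * log Y ≤ X) :
    ∃ n : ℕ, n ≠ 0 ∧ log n ≤ X ∧ log (fK K (fK K n)) = VV (QK K) k := by
  set S := SS (QK K) k with hS
  set R := (Finset.range (⌊Y⌋₊+1)).filter (QK K) with hR
  obtain ⟨φ, hφ⟩ : ∃ φ : ℕ × ℕ → ℕ, (∀ s ∈ S, φ s ∈ R) ∧ Set.InjOn φ S := by
    obtain ⟨R', hR', hc⟩ := Finset.exists_subset_card_eq hcard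
    have e : S ≃ R' := Finset.equivOfCardEq hc.symm
    refine ⟨fun s => if h : s ∈ S then (e ⟨s, h⟩ : ℕ) else 0, ?_, ?_⟩
    · intro s hs
      simp only [hs, dif_pos]
      exact hR' (e ⟨s, hs⟩).2
    · intro s hs t ht hst
      simp only [Finset.mem_coe] at hs ht
      simp only [hs, ht, dif_pos] at hst
      have := e.injective (Subtype.ext hst)
      simpa using this
  obtain ⟨hφR, hinj⟩ := hφ
  have hφQ : ∀ s ∈ S, QK K (φ s) := fun s hs => (Finset.mem_filter.1 (hφR s hs)).2
  have hφY : ∀ s ∈ S, (φ s : ℝ) ≤ Y := fun s hs => by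
    have := (Finset.mem_range.1 (Finset.mem_filter.1 (hφR s hs)).1)
    exact (Nat.le_floor_iff (by linarith)).1 (by omega)
  have hSQ : ∀ s ∈ S, QK K s.2 := fun s hs => ((mem_SS QK_two').1 hs).1
  refine ⟨∏ s ∈ S, φ s ^ (s.2 - 1), ?_, ?_, ?_⟩
  · exact Finset.prod_ne_zero_iff.2 fun i hi => pow_ne_zero _ (hφQ i hi).1.ne_zero
  · refine le_trans ?_ hX
    push_cast
    rw [log_prod (fun s hs => by
      have := (hφQ s hs).1.ne_zero
      positivity)]
    unfold CC
    rw [Finset.sum_mul]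
    refine Finset.sum_le_sum fun s hs => ?_
    rw [log_pow]
    have h1 := hφY s hs
    have h2 : (0:ℝ) < φ s := by exact_mod_cast (hφQ s hs).1.pos
    have h3 := log_le_log h2 h1
    have h4 : ((s.2 - 1 : ℕ) : ℝ) ≤ s.2 := by exact_mod_cast Nat.sub_le _ _
    have h5 : 0 ≤ log (φ s) := log_natCast_nonneg _
    gcongr
  · rw [fK_prod_split hK S φ _ hφQ hinj]
    have e1 : ∏ s ∈ S, (s.2 - 1 + 1) = ∏ q ∈ S.image Prod.snd, q ^ (S.filter (fun s => s.2 = q)).card := by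
      rw [← Finset.prod_comp (fun q => q) Prod.snd]
      refine Finset.prod_congr rfl fun s hs => ?_
      have := (hSQ s hs).1.pos
      omega
    rw [e1, fK_prod_split hK (S.image Prod.snd) (fun q => q)]
    · rw [← VV_log]; push_cast; rfl
    · intro q hq
      obtain ⟨s, hs, rfl⟩ := Finset.mem_image.1 hq
      exact hSQ s hs
    · intro a _ b _ h; exact h

end E2

section E3
open Real

variable {Q : ℕ → Prop}

lemma PQ_lower
    (hP : ∃ C : ℝ, 0 < C ∧ ∀ᶠ u : ℝ in atTop,
      |PQ Q u - u ^ 2 / (4 * log u)| ≤ C * u ^ 2 * log (log u) / (log u) ^ 2) :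
    ∀ᶠ u : ℝ in atTop, u ^ 2 / (5 * log u) ≤ PQ Q u := by
  obtain ⟨C, hC, hP⟩ := hP
  filter_upwards [hP, ev_loglog_le (1 / (20 * C)) (by positivity), ev_log_ge 1] with u h1 h2 h3
  have h4 := (abs_le.1 h1).1
  have hl : 0 < log u := by linarith
  have h5 : C * u ^ 2 * log (log u) / (log u) ^ 2 ≤ u ^ 2 / (20 * log u) := by
    rw [div_le_div_iff₀ (by positivity) (by positivity)]
    have : 20 * C * log (log u) ≤ log u := by
      calc _ ≤ 20 * C * (1 / (20 * C) * log u) := by gcongr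
        _ = _ := by field_simp
    have h6 : 0 ≤ u ^ 2 * log u := by positivity
    nlinarith [mul_le_mul_of_nonneg_left this h6]
  have h6 : u ^ 2 / (5 * log u) = u ^ 2 / (4 * log u) - u ^ 2 / (20 * log u) := by
    field_simp; ring
  linarith

lemma CC_lower (hQ : ∀ q, Q q → 2 ≤ q)
    (hP : ∃ C : ℝ, 0 < C ∧ ∀ᶠ u : ℝ in atTop,
      |PQ Q u - u ^ 2 / (4 * log u)| ≤ C * u ^ 2 * log (log u) / (log u) ^ 2) :
    ∀ᶠ k : ℕ in atTop, (k:ℝ) ^ 2 / (400 * log k ^ 2) ≤ CC Q k ∧ (k:ℝ) ≤ CC Q k := by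
  have hL := Lc_pos 0
  have hL2 : 1 / 2 ≤ Lc 0 := by have := Lc_ge 0; norm_num at this; linarith
  have hlim : Tendsto (fun k : ℕ => (k:ℝ) * Lc 0) atTop atTop :=
    tendsto_natCast_atTop_atTop.atTop_mul_const hL
  filter_upwards [hlim.eventually (PQ_lower hP), hlim.eventually (ev_log_ge 1),
    tendsto_natCast_atTop_atTop.eventually (ev_log_ge 1),
    tendsto_natCast_atTop_atTop.eventually (ev_log_pow_le 2 (1/400) (by norm_num)),
    eventually_gt_atTop 0] with k h1 h2 h3 h4 h5
  have hk : (0:ℝ) < k := by exact_mod_cast h5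
  set u := (k:ℝ) * Lc 0 with hu
  have hu0 : 0 < u := by positivity
  have huk : u ≤ k := by
    have : (k:ℝ) * Lc 0 ≤ k * 1 := by gcongr; exact Lc_le_one 0
    linarith
  have hlu : log u ≤ log k := log_le_log hu0 huk
  set v := u / (10 * log u) with hv
  have hlu0 : 0 < log u := by linarith
  have hv0 : 0 < v := by positivity
  have hc := CC_ge hQ k hv0.le (by omega)
  rw [← hu] at hc
  have h6 : v / u * (u ^ 2 / (5 * log u)) ≤ v / u * PQ Q u := by gcongr
  have h7 : v / u * (u ^ 2 / (5 * log u)) = 2 * v ^ 2 := by rw [hv]; field_simp; norm_num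
  have h8 : (k:ℝ) / (20 * log k) ≤ v := by
    rw [hv, div_le_div_iff₀ (by positivity) (by positivity)]
    have : (k:ℝ) ≤ 2 * u := by rw [hu]; nlinarith
    have h9 : 0 < log k := by linarith
    nlinarith [mul_le_mul this hlu hlu0.le (by positivity)]
  have h9 : (k:ℝ) ^ 2 / (400 * log k ^ 2) ≤ v ^ 2 := by
    have h10 : 0 < log (k:ℝ) := by linarith
    calc _ = ((k:ℝ) / (20 * log k)) ^ 2 := by field_simp; norm_num
      _ ≤ _ := by gcongr
  refine ⟨by linarith, le_trans ?_ (show (k:ℝ) ^ 2 / (400 * log k ^ 2) ≤ CC Q k by linarith)⟩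
  rw [le_div_iff₀ (by have : 0 < log (k:ℝ) := by linarith
                      positivity)]
  nlinarith

/-- the optimisation step -/
lemma amgm {t a h κ D B : ℝ} (hκ : 0 < κ) (hh : 0 < h) (hD : κ * t ^ 2 / (2 * h) ≤ D)
    (hB : B = 2 * a ^ 2 / h) : 2 * t * a / h ≤ D + B / κ := by
  have : 2 * t * a / h ≤ κ * t ^ 2 / (2 * h) + B / κ := by
    rw [hB]
    have e : κ * t ^ 2 / (2 * h) + 2 * a ^ 2 / h / κ - 2 * t * a / h = (t * κ - 2 * a) ^ 2 / (2 * h * κ) := by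
      field_simp; ring
    have : 0 ≤ (t * κ - 2 * a) ^ 2 / (2 * h * κ) := by positivity
    linarith
  linarith

set_option maxHeartbeats 1000000 in
open Classical in
lemma lower_asymp (hQ : ∀ q, Q q → 2 ≤ q)
    (hP : ∃ C : ℝ, 0 < C ∧ ∀ᶠ u : ℝ in atTop,
      |PQ Q u - u ^ 2 / (4 * log u)| ≤ C * u ^ 2 * log (log u) / (log u) ^ 2)
    (hD : ∃ C : ℝ, 0 < C ∧ ∀ᶠ x : ℝ in atTop,
      |DQ Q x - SL * x / (4 * log x)| ≤ C * (x * log (log x) / (log x) ^ 2)) :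
    ∃ C : ℝ, 0 < C ∧ ∀ᶠ X : ℝ in atTop, ∃ (k : ℕ) (Y : ℝ), 1 ≤ Y ∧
      (SS Q k).card ≤ ((Finset.range (⌊Y⌋₊+1)).filter Q).card ∧ CC Q k * log Y ≤ X ∧
      2 * √SL * (√X / log X) - C * (√X / log X * (log (log X) / log X)) ≤ VV Q k := by
  obtain ⟨C1, hC1, hD⟩ := hD
  have hSL := SL_pos
  have hs0 : 0 < √SL := sqrt_pos.2 hSL
  obtain ⟨u1, hu1⟩ := eventually_atTop.1 (hD.and (ev_log_ge 1))
  obtain ⟨N1, hN1⟩ := eventually_atTop.1 (CC_lower hQ hP)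
  obtain ⟨u2, hu2⟩ := eventually_atTop.1 (PQ_lower hP)
  set δ : ℝ := 48 * C1 / SL with hδ
  have hδ0 : 0 < δ := by positivity
  obtain ⟨N, hN⟩ := exists_nat_ge (max (max u1 N1) 1)
  refine ⟨2 * √SL * (δ + 8) + 1, by positivity, ?_⟩
  filter_upwards [eventually_ge_atTop 1, ev_log_ge 150, ev_loglog_ge 1, ev_loglog_le (1/8) (by norm_num),
    ev_loglog_le (1/δ) (by positivity), ev_log_pow_le 6 (1/4) (by norm_num),
    eventually_ge_atTop (max u2 1 ^ 2), eventually_ge_atTop ((2 * ((N:ℝ)+1) ^ 3) ^ 2)] with X hX1 hℓ1 hr1 hr8 hrδ hℓ6 hXu2 hXN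
  set ℓ := log X with hℓ
  set r := log ℓ with hr
  have hX0 : 0 < X := by linarith
  set a := √X with ha
  have ha0 : 0 < a := sqrt_pos.2 hX0
  have ha2 : a ^ 2 = X := sq_sqrt hX0.le
  have hla : log a = ℓ / 2 := by rw [ha, log_sqrt hX0.le]
  have hℓ0 : 0 < ℓ := by linarith
  have hr0 : 0 < r := by linarith
  have hδr : δ * r ≤ ℓ := by
    calc _ ≤ δ * (1 / δ * ℓ) := by gcongr
      _ = ℓ := by field_simp
  have haℓ : 2 * ℓ ^ 3 ≤ a := by
    rw [ha]; apply le_sqrt_of_sq_le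
    have e : (2 * ℓ ^ 3) ^ 2 = 4 * ℓ ^ 6 := by ring
    linarith
  have haN : 2 * ((N:ℝ)+1) ^ 3 ≤ a := by rw [ha]; exact le_sqrt_of_sq_le hXN
  have hau : max u2 1 ≤ a := by rw [ha]; exact le_sqrt_of_sq_le hXu2
  set h := ℓ + 8 * r with hh
  have hh0 : 0 < h := by linarith
  set Y := a * ℓ ^ 4 with hYdef
  have hlY : log Y = h / 2 := by
    rw [hYdef, log_mul (by positivity) (by positivity), hla, log_pow]; push_cast; ring
  have hℓ41 : 1 ≤ ℓ ^ 4 := one_le_pow₀ (by linarith)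
  have haY : a ≤ Y := by rw [hYdef]; exact le_mul_of_one_le_right ha0.le hℓ41
  set B := 2 * a ^ 2 / h with hB
  have hBY : B * log Y = X := by rw [hB, hlY, ← ha2]; field_simp
  have hB0 : 0 < B := by positivity
  have hBa : a ≤ B := by
    rw [hB, le_div_iff₀ hh0]
    have : h ≤ 2 * a := by
      have : ℓ ≤ ℓ ^ 3 := le_self_pow₀ (by linarith) (by norm_num)
      linarith
    calc a * h ≤ a * (2 * a) := by gcongr
      _ = _ := by ring
  have hBX : B ≤ 2 * X / ℓ := by
    rw [hB, ha2]; gcongr; linarith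
  -- choice of k
  have hex : ∃ κ : ℕ, B < CC Q κ := by
    obtain ⟨m, hm⟩ := exists_nat_gt (max B N1)
    have h1 : N1 ≤ m := by exact_mod_cast ((le_max_right B (N1:ℝ)).trans hm.le)
    exact ⟨m, lt_of_lt_of_le (lt_of_le_of_lt (le_max_left _ _) hm) (hN1 m h1).2⟩
  obtain ⟨k, hk1, hk2⟩ : ∃ k : ℕ, CC Q k ≤ B ∧ B < CC Q (k+1) := by
    have h0 : Nat.find hex ≠ 0 := by
      intro h
      have := Nat.find_spec hex
      rw [h] at this
      have := CC_le (Q := Q) 0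
      simp at this
      linarith
    refine ⟨Nat.find hex - 1, ?_, ?_⟩
    · have := Nat.find_min hex (m := Nat.find hex - 1) (by omega)
      linarith
    · rw [Nat.sub_add_cancel (by omega)]; exact Nat.find_spec hex
  set κ : ℝ := (k:ℝ) + 1 with hκ
  have hκ0 : 0 < κ := by positivity
  have hκ3 : B < 2 * κ ^ 3 := by
    have := CC_le (Q := Q) (k+1)
    push_cast at this
    rw [← hκ] at this
    have h1 : 1 ≤ κ := by rw [hκ]; have : (0:ℝ) ≤ k := by positivity
                          linarith
    have h2 : κ ^ 2 * (κ + 1) ≤ κ ^ 2 * (κ + κ) := by gcongr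
    have e : κ ^ 2 * (κ + κ) = 2 * κ ^ 3 := by ring
    linarith
  have hNk : (N:ℝ) ≤ k := by
    have : (N:ℝ) + 1 < κ := by
      have : ((N:ℝ)+1) ^ 3 < κ ^ 3 := by linarith
      exact lt_of_pow_lt_pow_left₀ 3 hκ0.le this
    linarith
  have hku1 : u1 ≤ κ := by
    have := le_max_left u1 (N1:ℝ)
    have := le_max_left (max u1 (N1:ℝ)) 1
    linarith
  have hkN1 : N1 ≤ k := by
    have h1 := le_max_right u1 (N1:ℝ)
    have h2 := le_max_left (max u1 (N1:ℝ)) 1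
    have : (N1:ℝ) ≤ k := by linarith
    exact_mod_cast this
  have hk1' : (1:ℝ) ≤ k := by
    have h2 := le_max_right (max u1 (N1:ℝ)) 1
    linarith
  obtain ⟨hc1, hc2⟩ := hN1 k hkN1
  have hkX : (k:ℝ) ≤ X := by
    have : 2 * X / ℓ ≤ X := by rw [div_le_iff₀ hℓ0, mul_comm]; gcongr; linarith
    linarith
  have hlk : log k ≤ ℓ := log_le_log (by linarith) hkX
  have hlk0 : 0 ≤ log (k:ℝ) := log_nonneg hk1'
  have hka : (k:ℝ) ≤ 30 * ℓ * a := by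
    have hk2pos : (1:ℝ) < k ∨ (k:ℝ) ≤ 1 := lt_or_ge 1 (k:ℝ)
    rcases hk2pos with hk' | hk'
    · have hlk1 : 0 < log (k:ℝ) := log_pos hk'
      have h1 : (k:ℝ) ^ 2 / (400 * log k ^ 2) ≤ 2 * X / ℓ := by linarith
      rw [div_le_div_iff₀ (by positivity) hℓ0] at h1
      have h2 : (k:ℝ) ^ 2 * ℓ ≤ 800 * X * ℓ ^ 2 := by
        calc _ ≤ 2 * X * (400 * log k ^ 2) := h1
          _ ≤ 2 * X * (400 * ℓ ^ 2) := by gcongr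
          _ = _ := by ring
      have h3 : (k:ℝ) ^ 2 ≤ 800 * X * ℓ := by
        have : (k:ℝ) ^ 2 * ℓ ≤ (800 * X * ℓ) * ℓ := by linarith
        exact le_of_mul_le_mul_right this hℓ0
      have h4 : (k:ℝ) ^ 2 ≤ (30 * ℓ * a) ^ 2 := by
        have e : (30 * ℓ * a) ^ 2 = 900 * ℓ ^ 2 * X := by rw [← ha2]; ring
        rw [e]
        calc _ ≤ 800 * X * ℓ := h3
          _ ≤ (900 * ℓ) * (X * ℓ) := by
              have : 800 ≤ 900 * ℓ := by linarith
              calc 800 * X * ℓ = 800 * (X * ℓ) := by ring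
                _ ≤ _ := by gcongr
          _ = _ := by ring
      exact le_of_sq_le_sq h4 (by positivity)
    · have : 1 ≤ a := (le_max_right u2 1).trans hau
      calc (k:ℝ) ≤ 1 * 1 := by linarith
        _ ≤ 30 * ℓ * a := by gcongr; linarith
  have hκℓ : κ + 1 ≤ ℓ ^ 2 * a := by
    have h1 : 1 ≤ a := (le_max_right u2 1).trans hau
    have h2 : 0 ≤ ℓ * a := by positivity
    have h3 : 1 ≤ ℓ * a := one_le_mul_of_one_le_of_one_le (by linarith) h1
    have : ℓ ^ 2 * a = ℓ * (ℓ * a) := by ring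
    have h4 : 150 * (ℓ * a) ≤ ℓ * (ℓ * a) := by gcongr
    rw [this, hκ]; linarith
  have hlκ : log (κ + 1) ≤ ℓ / 2 + 2 * r := by
    have := log_le_log (by linarith) hκℓ
    rw [log_mul (by positivity) (by positivity), log_pow, hla] at this
    push_cast at this
    linarith
  refine ⟨k, Y, by linarith [(le_max_right u2 1).trans hau], ?_, ?_, ?_⟩
  · have h1 := card_SS_le hQ k
    have h2 := card_ge (Q := Q) Y (by linarith)
    have h3 := hu2 Y ((le_max_left u2 1).trans (hau.trans haY))
    have h4 : ((SS Q k).card : ℝ) ≤ 30 * ℓ ^ 2 * a := by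
      have h5 : log ((k:ℝ) + 1) ≤ ℓ := by
        have : log ((k:ℝ) + 1) ≤ log (κ + 1) := log_le_log (by linarith) (by linarith)
        linarith
      have h6 : 0 ≤ log ((k:ℝ) + 1) := log_nonneg (by linarith)
      calc _ ≤ _ := h1
        _ ≤ (30 * ℓ * a) * ℓ := by gcongr
        _ = _ := by ring
    have hY0 : 0 < Y := by positivity
    have hlYpos : 0 < log Y := by rw [hlY]; positivity
    have h5 : 30 * ℓ ^ 2 * a ≤ PQ Q Y / Y := by
      calc 30 * ℓ ^ 2 * a ≤ Y / (5 * log Y) := by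
            rw [le_div_iff₀ (by positivity), hlY, hYdef]
            have : h ≤ 2 * ℓ := by linarith
            calc 30 * ℓ ^ 2 * a * (5 * (h / 2)) ≤ 30 * ℓ ^ 2 * a * (5 * (2 * ℓ / 2)) := by gcongr
              _ = 150 * (ℓ ^ 3 * a) := by ring
              _ ≤ ℓ * (ℓ ^ 3 * a) := by gcongr
              _ = _ := by ring
        _ = (Y ^ 2 / (5 * log Y)) / Y := by field_simp
        _ ≤ _ := by gcongr
    have h6 : ((SS Q k).card : ℝ) ≤ (((Finset.range (⌊Y⌋₊+1)).filter Q).card : ℝ) := by linarith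
    exact_mod_cast h6
  · have hlYpos : 0 < log Y := by rw [hlY]; positivity
    calc _ ≤ B * log Y := by gcongr
      _ = X := hBY
      _ ≤ X := le_refl _
  · obtain ⟨hD1, hlκ1⟩ := hu1 κ hku1
    have hD2 := (abs_le.1 hD1).1
    set lam := log κ with hlam
    have hlamU : lam ≤ h / 2 := by
      have : lam ≤ log (κ + 1) := log_le_log hκ0 (by linarith)
      rw [hh]; linarith
    have hlam0 : 0 < lam := by linarith
    have hlamL : ℓ / 12 ≤ lam := by
      have h1 : a ≤ 2 * κ ^ 3 := by linarith
      have h2 := log_le_log ha0 h1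
      rw [log_mul (by norm_num) (by positivity), log_pow, hla] at h2
      push_cast at h2
      have := log_two_lt_d9
      linarith
    have hll : log lam ≤ r := by
      rw [hr]; apply log_le_log hlam0; linarith
    have hll0 : 0 ≤ log lam := log_nonneg hlκ1
    set τ := 1 - δ * r / ℓ with hτ
    have hτ0 : 0 ≤ τ := by
      rw [hτ, sub_nonneg, div_le_one hℓ0]; exact hδr
    have hτ1 : τ ≤ 1 := by rw [hτ]; have : 0 ≤ δ * r / ℓ := by positivity
                           linarith
    set t := √SL * τ with ht
    have ht2 : t ^ 2 ≤ SL * τ := by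
      rw [ht, mul_pow, sq_sqrt hSL.le]
      have : τ ^ 2 ≤ τ := by rw [sq]; exact mul_le_of_le_one_left hτ0 hτ1
      gcongr
    have hDl : κ * t ^ 2 / (2 * h) ≤ DQ Q κ := by
      have h1 : κ * (SL * τ) / (4 * lam) ≤ SL * κ / (4 * lam) - C1 * (κ * log lam / lam ^ 2) := by
        have e : SL * κ / (4 * lam) - C1 * (κ * log lam / lam ^ 2) = κ * (SL - 4 * C1 * (log lam / lam)) / (4 * lam) := by
          field_simp
        rw [e]
        have h2 : log lam / lam ≤ 12 * r / ℓ := by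
          rw [div_le_div_iff₀ hlam0 hℓ0]
          calc log lam * ℓ ≤ r * (12 * lam) := by gcongr; linarith
            _ = _ := by ring
        have h3 : SL * τ ≤ SL - 4 * C1 * (log lam / lam) := by
          have e2 : SL * τ = SL - 4 * C1 * (12 * r / ℓ) := by
            rw [hτ, hδ]; field_simp; ring
          rw [e2]; gcongr
        gcongr
      calc κ * t ^ 2 / (2 * h) ≤ κ * (SL * τ) / (2 * h) := by gcongr
        _ ≤ κ * (SL * τ) / (4 * lam) := by
            have : 0 ≤ SL * τ := by positivity
            gcongr ?_ / ?_
            · linarith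
            · linarith
        _ ≤ _ := by linarith
    have hA := amgm hκ0 hh0 hDl hB
    have hV1 := VV_succ hQ k
    have hV2 := VV_eq hQ (k := k+1) (by omega)
    push_cast at hV2
    rw [← hκ] at hV2
    have hV3 : B / κ ≤ CC Q (k+1) / κ := by gcongr
    have hl2 : log ((k:ℝ) + 2) ≤ ℓ := by
      have : (k:ℝ) + 2 = κ + 1 := by rw [hκ]; ring
      rw [this]; linarith
    set W := a / ℓ * (r / ℓ) with hW
    have hW1 : ℓ ≤ W := by
      rw [hW, div_mul_div_comm, le_div_iff₀ (by positivity)]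
      have h9 : a ≤ a * r := le_mul_of_one_le_right ha0.le hr1
      have h10 : ℓ * (ℓ * ℓ) = ℓ ^ 3 := by ring
      have h11 : 0 < ℓ ^ 3 := by positivity
      linarith
    have hfin : 2 * √SL * (a / ℓ) - 2 * √SL * (δ + 8) * W ≤ 2 * t * a / h := by
      have h1 : 1 - 8 * r / ℓ ≤ ℓ / h := by
        rw [le_div_iff₀ hh0, hh]
        have e : (1 - 8 * r / ℓ) * (ℓ + 8 * r) = ℓ - 64 * r ^ 2 / ℓ := by field_simp; ring
        rw [e]; have : 0 ≤ 64 * r ^ 2 / ℓ := by positivity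
        linarith
      have h2 : 2 * t * a / h = 2 * √SL * (a / ℓ) * (τ * (ℓ / h)) := by
        rw [ht]; field_simp
      have h3 : 1 - (δ + 8) * (r / ℓ) ≤ τ * (ℓ / h) := by
        have : τ * (1 - 8 * r / ℓ) ≤ τ * (ℓ / h) := by gcongr
        have e : τ * (1 - 8 * r / ℓ) = 1 - (δ + 8) * (r / ℓ) + 8 * δ * (r/ℓ) ^ 2 := by
          rw [hτ]; ring
        have : 0 ≤ 8 * δ * (r/ℓ) ^ 2 := by positivity
        linarith
      rw [h2]
      calc _ = 2 * √SL * (a / ℓ) * (1 - (δ + 8) * (r / ℓ)) := by rw [hW]; ring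
        _ ≤ _ := by gcongr
    have e3 : (2 * √SL * (δ + 8) + 1) * W = 2 * √SL * (δ + 8) * W + W := by ring
    rw [e3]
    linarith

end E3

/-- For a fixed quadratic number field `K`,
`max_{n ≤ x} log f_K(f_K(n)) = (√(log x)/log₂ x)·(c/√2 + O(log₃ x/log₂ x))` as `x → ∞`. -/
theorem maxOrder_iterated_ideal_counting (K : Type*) [Field K] [NumberField K]
    (hK : Module.finrank ℚ K = 2) :
    ∃ C : ℝ, 0 < C ∧ ∀ᶠ x : ℕ in atTop,
      |(⨆ n ∈ Finset.Icc 1 x, Real.log (fK K (fK K n))) -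
          Real.sqrt (Real.log x) / Real.log (Real.log x) * (cBEFS / Real.sqrt 2)| ≤
        C * (Real.sqrt (Real.log x) / Real.log (Real.log x)) *
          (Real.log (Real.log (Real.log x)) / Real.log (Real.log x)) := by
  classical
  have hP := PQ_asymp (Q := QK K) QK_two (AQ_bound K hK)
  have hD := DQ_asymp (Q := QK K) QK_two hP
  obtain ⟨C1, hC1, hU⟩ := upper_asymp hD
  obtain ⟨C2, hC2, hL⟩ := lower_asymp QK_two hP hD
  have hc : cBEFS / Real.sqrt 2 = 2 * Real.sqrt SL := by
    have e : cBEFS = Real.sqrt (8 * SL) := rfl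
    rw [e, ← Real.sqrt_div' _ (by norm_num), show (8 * SL / 2 : ℝ) = 2 ^ 2 * SL by ring,
      Real.sqrt_mul (by norm_num), Real.sqrt_sq (by norm_num)]
  have hlim : Tendsto (fun x : ℕ => Real.log (x:ℝ)) atTop atTop :=
    Real.tendsto_log_atTop.comp tendsto_natCast_atTop_atTop
  refine ⟨max C1 C2, lt_max_of_lt_left hC1, ?_⟩
  filter_upwards [hlim.eventually hU, hlim.eventually hL, hlim.eventually (ev_log_ge 1),
    hlim.eventually (ev_loglog_ge 0), eventually_ge_atTop 1] with x hu hl h1 h0 hx1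
  rw [hc]
  set X := Real.log (x:ℝ) with hX
  set W := Real.sqrt X / Real.log X * (Real.log (Real.log X) / Real.log X) with hW
  have hW0 : 0 ≤ W := by
    have : 0 < Real.log X := by linarith
    positivity
  have eW : max C1 C2 * (Real.sqrt X / Real.log X) * (Real.log (Real.log X) / Real.log X) = max C1 C2 * W := by
    rw [hW]; ring
  rw [eW]
  have hW1 : C1 * W ≤ max C1 C2 * W := by gcongr; exact le_max_left _ _
  have hW2 : C2 * W ≤ max C1 C2 * W := by gcongr; exact le_max_right _ _
  have hx0 : (0:ℝ) < x := by exact_mod_cast hx1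
  have hnn : ∀ n, 0 ≤ Real.log (fK K (fK K n) : ℝ) := fun n => Real.log_natCast_nonneg _
  set U := 2 * Real.sqrt SL * (Real.sqrt X / Real.log X) + C1 * W with hUdef
  have hub : ∀ n ∈ Finset.Icc 1 x, Real.log (fK K (fK K n) : ℝ) ≤ U := by
    intro n hn
    rw [Finset.mem_Icc] at hn
    obtain ⟨Z, lam, hZ, hlam, hle⟩ := hu
    have hn0 : (0:ℝ) < n := by exact_mod_cast hn.1
    have := upper_arith hK (n := n) (by omega) (X := X)
      (Real.log_le_log hn0 (by exact_mod_cast hn.2)) hZ hlam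
    linarith
  have hU0 : 0 ≤ U := (hnn 1).trans (hub 1 (by simp; omega))
  have hin : ∀ n, (⨆ _ : n ∈ Finset.Icc 1 x, Real.log (fK K (fK K n) : ℝ)) ≤ U := fun n =>
    Real.iSup_le (fun h => hub n h) hU0
  have hup : (⨆ n ∈ Finset.Icc 1 x, Real.log (fK K (fK K n) : ℝ)) ≤ U := Real.iSup_le hin hU0
  have hlow : 2 * Real.sqrt SL * (Real.sqrt X / Real.log X) - C2 * W ≤
      ⨆ n ∈ Finset.Icc 1 x, Real.log (fK K (fK K n) : ℝ) := by
    obtain ⟨k, Y, hY, hcard, hCC, hV⟩ := hl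
    obtain ⟨n, hn0, hnX, hn⟩ := lower_arith hK k hY hcard hCC
    refine (hV.trans hn.ge).trans ?_
    have hnpos : (0:ℝ) < n := by exact_mod_cast Nat.pos_of_ne_zero hn0
    have hnx : n ≤ x := by
      have := (Real.log_le_log_iff hnpos hx0).1 hnX
      exact_mod_cast this
    have hmem : n ∈ Finset.Icc 1 x := Finset.mem_Icc.2 ⟨by omega, hnx⟩
    have hbdd : BddAbove (Set.range fun n => ⨆ _ : n ∈ Finset.Icc 1 x, Real.log (fK K (fK K n) : ℝ)) :=
      ⟨U, by rintro _ ⟨n, rfl⟩; exact hin n⟩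
    refine le_trans ?_ (le_ciSup hbdd n)
    rw [ciSup_pos hmem]
  rw [abs_le]
  constructor
  · nlinarith
  · nlinarith
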